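/- Let R0 > 0, T > 0 and let f : ℝ × [R0,∞) → ℝ be continuous and T-periodic in its first variable. Assume there exist constants μ̌ ≤ μ̂ and a nonnegative integer N with (Nπ/T)² < μ̌ and μ̂ < ((N+1)π/T)², such that μ̌ ≤ liminf_{ρ→+∞} f(t,ρ)/ρ and limsup_{ρ→+∞} f(t,ρ)/ρ ≤ μ̂, uniformly in t. Then for every positive integer ν there exists a positive integer k_ν such that for every integer k ≥ k_ν there exist L > 0 and an R0-bouncing solution (ρ,ϑ) of the system ρ'' − L²/ρ³ + f(t,ρ) = 0 (for ρ > R0), ρ²ϑ' = L, defined on all of ℝ, satisfying ρ(t+T) = ρ(t) and ϑ(t+kT) = ϑ(t) + 2πν for all t; in particular (ρ,ϑ) makes exactly ν revolutions around the origin in the period time kT. -/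

import Mathlib

open Real Filter Set

/-- A `w`-bouncing solution of `x'' + p(t,x) = 0` (Bonheure–Fabry), defined on all of `ℝ`. -/
def IsBouncingSolution (w : ℝ) (p : ℝ → ℝ → ℝ) (x : ℝ → ℝ) : Prop :=
  Continuous x ∧
  (∀ t, w ≤ x t) ∧
  -- (i) away from the wall the equation is satisfied classically
  (∀ t0, w < x t0 →
    ∃ x' : ℝ → ℝ, (∀ᶠ s in nhds t0, HasDerivAt x (x' s) s) ∧
      HasDerivAt x' (-(p t0 (x t0))) t0) ∧
  -- (ii) at an isolated contact time the one-sided derivatives exist and are opposite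
  (∀ t0, x t0 = w → (∀ᶠ s in nhdsWithin t0 {t0}ᶜ, w < x s) →
    ∃ v : ℝ, HasDerivWithinAt x v (Iic t0) t0 ∧ HasDerivWithinAt x (-v) (Ici t0) t0) ∧
  -- (iii) a contact with nonzero one-sided speed is an isolated contact
  (∀ t0 v, x t0 = w → v ≠ 0 →
    (HasDerivWithinAt x v (Iic t0) t0 ∨ HasDerivWithinAt x v (Ici t0) t0) →
    ∀ᶠ s in nhdsWithin t0 {t0}ᶜ, w < x s) ∧
  -- (iv) on intervals where the solution sticks to the wall, p(·,w) ≥ 0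
  (∀ a b : ℝ, a < b → (∀ t ∈ Ioo a b, x t = w) → ∀ t ∈ Ioo a b, 0 ≤ p t w)

/-!
The wall is replaced by a stiff one-sided spring: in terms of the distance `x = ρ - R0` to the wall
one solves `x'' + p (t, x) = N ^ 2 * max (-x) 0`, with the angular momentum `L ∈ [0, 1]` as a
parameter of `p`. As `p` is merely continuous, this Cauchy problem may have several solutions. With
a small delay in `x` (Tonelli's scheme) it has a single one, which depends continuously on the
initial data and on `L`, and the delay disappears as `N → ∞`.

As `N → ∞` the penalised solutions converge along an ultrafilter to a bouncing solution. The elastic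
law comes from the convergence of the energy, which determines the speed at an impact whether it is
incoming or outgoing.

The slopes of the force lie between `ω₁ ^ 2` and `ω₂ ^ 2`. Rescaling solutions of large energy
leaves in the limit a bouncing solution whose impacts are, by Sturm comparison, between `π / ω₂` and
`π / ω₁` apart. The hypothesis on `μlo` and `μhi` says that such a solution cannot return to a
multiple of its initial state at time `T`. Hence on a large energy level no penalised solution
satisfies `(x, x') (T) = c • (x, x') (0)` with `1 ≤ c`.

Brouwer's theorem in the variables `(x (0), x' (0), L)` then gives a `T`-periodic penalised solution
with prescribed angle `∫ L / ρ ^ 2` over a period: the angle is `0` for `L = 0`, while for `L = 1`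
it is bounded below because the initial energy is bounded. The prescribed angle is `2 * π * ν / k`,
which is small enough when `k` is large. Letting `N → ∞` gives `ρ`, and integrating `L / ρ ^ 2`
gives `ϑ`.
-/

section Brouwer

open MeasureTheory Function

lemma bijective_sub_of_lipschitzWith {E : Type*} [NormedAddCommGroup E] [CompleteSpace E]
    {g : E → E} {K : NNReal} (hg : LipschitzWith K g) (hK : K < 1) :
    Bijective (fun x => x - g x) := by
  constructor
  · have h := AntilipschitzWith.id.add_lipschitzWith hg.neg (by simpa using hK)
    simpa only [id, Pi.neg_apply, ← sub_eq_add_neg] using h.injective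
  · intro y
    have hy : ContractingWith K (fun x => y + g x) :=
      ⟨hK, LipschitzWith.of_dist_le_mul fun a b => by simpa using hg.dist_le_mul a b⟩
    exact ⟨hy.fixedPoint _, sub_eq_iff_eq_add.2 hy.fixedPoint_isFixedPt.symm⟩

section NormedSpace

variable {E : Type*} [NormedAddCommGroup E] [NormedSpace ℝ E]

lemma det_id_sub_pos_of_norm_lt_one {A : E →L[ℝ] E} (hA : ‖A‖ < 1) :
    0 < (ContinuousLinearMap.id ℝ E - A).det := by
  have det_ne_zero : ∀ s ∈ Icc (0 : ℝ) 1, (ContinuousLinearMap.id ℝ E - s • A).det ≠ 0 := by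
    intro s hs h0
    obtain ⟨x, hx, hx0⟩ := Submodule.exists_mem_ne_zero_of_ne_bot
      (LinearMap.bot_lt_ker_of_det_eq_zero h0).ne'
    have hfix : x = s • A x := sub_eq_zero.1 (by simpa using hx)
    have hlt : ‖x‖ < ‖x‖ := calc
      ‖x‖ = s * ‖A x‖ := by
        conv_lhs => rw [hfix, norm_smul, Real.norm_of_nonneg hs.1]
      _ ≤ 1 * (‖A‖ * ‖x‖) := by
        gcongr
        exacts [hs.2, A.le_opNorm x]
      _ < ‖x‖ := by
        rw [one_mul]
        exact mul_lt_of_lt_one_left (norm_pos_iff.2 hx0) hA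
    exact hlt.false
  have hcont : Continuous fun s : ℝ => (ContinuousLinearMap.id ℝ E - s • A).det :=
    ContinuousLinearMap.continuous_det.comp (by fun_prop)
  by_contra! hneg
  obtain ⟨s, hs, h0⟩ := intermediate_value_Icc' zero_le_one hcont.continuousOn
    (show (0 : ℝ) ∈ _ by simpa [ContinuousLinearMap.det] using hneg)
  exact det_ne_zero s hs h0

variable [FiniteDimensional ℝ E]

lemma exists_polynomial_eval_eq_det_id_sub_smul (A : E →L[ℝ] E) :
    ∃ P : Polynomial ℝ, P.natDegree ≤ Module.finrank ℝ E ∧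
      ∀ t : ℝ, P.eval t = (ContinuousLinearMap.id ℝ E - t • A).det := by
  let b := Module.finBasis ℝ E
  let M := LinearMap.toMatrix b b A.toLinearMap
  refine ⟨M.charpolyRev, ?_, fun t => ?_⟩
  · rw [← Matrix.reverse_charpoly]
    exact (Polynomial.reverse_natDegree_le _).trans (by simp [Matrix.charpoly_natDegree_eq_dim])
  · have hM : LinearMap.toMatrix b b (ContinuousLinearMap.id ℝ E - t • A).toLinearMap
        = 1 - t • M := by simp [M]
    rw [ContinuousLinearMap.det, ← LinearMap.det_toMatrix b, hM, Matrix.charpolyRev,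
      ← Polynomial.coe_evalRingHom, RingHom.map_det]
    congr 1
    ext i j
    rcases eq_or_ne i j with hij | hij <;> simp [hij] <;> ring

variable [MeasurableSpace E] [BorelSpace E] (μ : Measure E) [μ.IsAddHaarMeasure]

lemma setIntegral_det_id_sub_fderiv_mul_comp_sub {g : E → E} {K : NNReal}
    (hg : Differentiable ℝ g) (hK : LipschitzWith K g) (hK1 : K < 1) {B : Set E}
    (hB : MeasurableSet B) (hgB : ∀ x ∉ B, g x = 0) (φ : E → ℝ) :
    ∫ x in B, (ContinuousLinearMap.id ℝ E - fderiv ℝ g x).det * φ (x - g x) ∂μ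
      = ∫ x in B, φ x ∂μ := by
  have hbij := bijective_sub_of_lipschitzWith hK hK1
  have himage : (fun x => x - g x) '' B = B := by
    rw [← compl_inj_iff, ← image_compl_eq hbij]
    exact (image_congr fun x hx => by simp [hgB x hx]).trans (image_id _)
  have hderiv : ∀ x ∈ B, HasFDerivWithinAt (fun x => x - g x)
      (ContinuousLinearMap.id ℝ E - fderiv ℝ g x) B x := fun x _ =>
    ((hasFDerivAt_id x).sub (hg x).hasFDerivAt).hasFDerivWithinAt
  have hchange := integral_image_eq_integral_abs_det_fderiv_smul μ hB hderiv
    hbij.injective.injOn φ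
  rw [himage] at hchange
  rw [hchange]
  refine setIntegral_congr_fun hB fun x _ => ?_
  have hdet := det_id_sub_pos_of_norm_lt_one
    ((norm_fderiv_le_of_lipschitz ℝ hK).trans_lt (by exact_mod_cast hK1) : ‖fderiv ℝ g x‖ < 1)
  simp only [abs_of_pos hdet, smul_eq_mul]

end NormedSpace

lemma exists_extrapolation_weights (d : ℕ) {t₀ : ℝ} (ht₀ : 0 < t₀) (τ : ℝ) :
    ∃ (s : Finset ℕ) (c v : ℕ → ℝ), (∀ i ∈ s, v i ∈ Icc 0 t₀) ∧ ∑ i ∈ s, c i = 1 ∧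
      ∀ P : Polynomial ℝ, P.natDegree ≤ d → P.eval τ = ∑ i ∈ s, c i * P.eval (v i) := by
  let s := Finset.range (d + 1)
  let v : ℕ → ℝ := fun i => t₀ * i / (d + 1)
  have hv : InjOn v s := by
    intro i _ j _ hij
    simp only [v] at hij
    field_simp at hij
    exact_mod_cast hij
  have interpolate : ∀ P : Polynomial ℝ, P.natDegree ≤ d →
      P.eval τ = ∑ i ∈ s, (Lagrange.basis s v i).eval τ * P.eval (v i) := by
    intro P hP
    have hdeg : P.degree < (s.card : ℕ) :=
      Polynomial.degree_le_natDegree.trans_lt <| by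
        simpa only [s, Finset.card_range] using (by exact_mod_cast Nat.lt_succ_of_le hP)
    conv_lhs => rw [Lagrange.eq_interpolate hv hdeg, Lagrange.interpolate_apply,
      Polynomial.eval_finsetSum]
    exact Finset.sum_congr rfl fun i _ => by simp [mul_comm]
  refine ⟨s, fun i => (Lagrange.basis s v i).eval τ, v, fun i hi => ⟨by positivity, ?_⟩, ?_,
    interpolate⟩
  · have hi' : (i : ℝ) ≤ d + 1 := by exact_mod_cast (Finset.mem_range.1 hi).le
    exact (div_le_iff₀ (by positivity)).2 (mul_le_mul_of_nonneg_left hi' ht₀.le)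
  · simpa using (interpolate 1 (by simp)).symm

lemma nonpos_of_forall_pow_mul_le {a b c D : ℝ} (ha : 0 ≤ a) (hab : a < b)
    (h : ∀ k : ℕ, b ^ k * c ≤ D * a ^ k) : c ≤ 0 := by
  have hb : 0 < b := ha.trans_lt hab
  have hlim : Tendsto (fun k : ℕ => D * (a / b) ^ k) atTop (nhds (D * 0)) :=
    (tendsto_pow_atTop_nhds_zero_of_lt_one (div_nonneg ha hb.le)
      ((div_lt_one hb).2 hab)).const_mul D
  rw [mul_zero] at hlim
  refine ge_of_tendsto' hlim fun k => ?_
  rw [div_pow, mul_div_assoc', le_div_iff₀ (pow_pos hb k), mul_comm c]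
  exact h k

section Measure

variable {α : Type*} [MeasurableSpace α] {μ : Measure α} {s s' : Set α} {u w : α → ℝ} {a b D : ℝ}

lemma setIntegral_mul_pow_le (hμ : μ s < ⊤) (hu : ∀ x ∈ s, ‖u x‖ ≤ D)
    (hw : ∀ x ∈ s, ‖w x‖ ≤ a) (k : ℕ) :
    ∫ x in s, u x * w x ^ k ∂μ ≤ D * μ.real s * a ^ k := calc
  ∫ x in s, u x * w x ^ k ∂μ ≤ ‖∫ x in s, u x * w x ^ k ∂μ‖ := le_norm_self _
  _ ≤ D * a ^ k * μ.real s := norm_setIntegral_le_of_norm_le_const hμ fun x hx => by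
    rw [norm_mul, norm_pow]
    exact mul_le_mul (hu x hx) (pow_le_pow_left₀ (norm_nonneg _) (hw x hx) k) (by positivity)
      ((norm_nonneg _).trans (hu x hx))
  _ = D * μ.real s * a ^ k := by ring

lemma pow_mul_measureReal_le_setIntegral (hs : MeasurableSet s) (hs' : MeasurableSet s')
    (hss' : s' ⊆ s) (hμ : μ s ≠ ⊤) (hb : 0 ≤ b) (hw : ∀ x ∈ s, 0 ≤ w x)
    (hw' : ∀ x ∈ s', b ≤ w x) {k : ℕ} (hint : IntegrableOn (fun x => w x ^ k) s μ) :
    b ^ k * μ.real s' ≤ ∫ x in s, w x ^ k ∂μ := calc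
  b ^ k * μ.real s' = ∫ _ in s', b ^ k ∂μ := by rw [setIntegral_const, smul_eq_mul, mul_comm]
  _ ≤ ∫ x in s', w x ^ k ∂μ :=
    setIntegral_mono_on (integrableOn_const (measure_ne_top_of_subset hss' hμ))
      (hint.mono_set hss') hs' fun x hx => pow_le_pow_left₀ hb (hw' x hx) k
  _ ≤ ∫ x in s, w x ^ k ∂μ := setIntegral_mono_set hint
    ((ae_restrict_mem hs).mono fun x hx => pow_nonneg (hw x hx) k) hss'.eventuallyLE

end Measure

section InnerProductSpace

variable {E : Type*} [NormedAddCommGroup E] [InnerProductSpace ℝ E]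

lemma exists_polynomial_eval_eq_one_sub_norm_sub_smul_sq (x y : E) (c : ℝ) :
    ∃ Q : Polynomial ℝ, Q.natDegree ≤ 2 ∧ ∀ t : ℝ, Q.eval t = 1 - c * ‖x - t • y‖ ^ 2 := by
  refine ⟨Polynomial.C (1 - c * ‖x‖ ^ 2) + Polynomial.C (2 * c * inner ℝ x y) * Polynomial.X
    + Polynomial.C (-c * ‖y‖ ^ 2) * Polynomial.X ^ 2, by compute_degree, fun t => ?_⟩
  rw [norm_sub_sq_real, norm_smul, inner_smul_right, mul_pow, Real.norm_eq_abs, sq_abs]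
  simp
  ring

variable [FiniteDimensional ℝ E]

section HaarMeasure

variable [MeasurableSpace E] [BorelSpace E] (μ : Measure E) [μ.IsAddHaarMeasure]

/- Replacing `G` by `t • G` turns the left-hand side into a polynomial in `t`. For small `t` the
change of variables makes it constant, so it takes the same value at `t = 1`, where `id - G` may
well fail to be injective. -/
lemma setIntegral_det_id_sub_fderiv_mul_pow {G : E → E} (hG : ContDiff ℝ 1 G) {C : NNReal}
    (hC : LipschitzWith C G) {B : Set E} (hB : IsCompact B) (hGB : ∀ x ∉ B, G x = 0)
    (c : ℝ) (k : ℕ) :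
    ∫ x in B, (ContinuousLinearMap.id ℝ E - fderiv ℝ G x).det * (1 - c * ‖x - G x‖ ^ 2) ^ k ∂μ
      = ∫ x in B, (1 - c * ‖x‖ ^ 2) ^ k ∂μ := by
  let F (t : ℝ) (x : E) : ℝ :=
    (ContinuousLinearMap.id ℝ E - t • fderiv ℝ G x).det * (1 - c * ‖x - t • G x‖ ^ 2) ^ k
  have hGd : Differentiable ℝ G := hG.differentiable one_ne_zero
  have hint : ∀ t, IntegrableOn (F t) B μ := fun t => by
    have := hG.continuous_fderiv one_ne_zero
    have := hGd.continuous
    exact ((ContinuousLinearMap.continuous_det.comp (by fun_prop)).mul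
      (by fun_prop)).continuousOn.integrableOn_compact hB
  have hsmall : ∀ t ∈ Icc (0 : ℝ) (1 / (C + 1)),
      ∫ x in B, F t x ∂μ = ∫ x in B, (1 - c * ‖x‖ ^ 2) ^ k ∂μ := by
    intro t ht
    have htC : ‖t‖₊ * C < 1 := by
      rw [← NNReal.coe_lt_coe, NNReal.coe_mul, coe_nnnorm, Real.norm_of_nonneg ht.1]
      calc t * C ≤ 1 / (C + 1) * C := by gcongr; exact ht.2
        _ < 1 := by rw [div_mul_eq_mul_div, div_lt_one (by positivity)]; linarith
    have hLip : LipschitzWith (‖t‖₊ * C) (fun x => t • G x) := (lipschitzWith_smul t).comp hC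
    have h := setIntegral_det_id_sub_fderiv_mul_comp_sub μ (hGd.const_smul t) hLip
      htC hB.measurableSet (fun x hx => by simp [hGB x hx]) (fun y => (1 - c * ‖y‖ ^ 2) ^ k)
    simpa only [F, fderiv_const_smul (hGd _), Pi.smul_apply] using h
  obtain ⟨s, a, v, hv, ha, hext⟩ := exists_extrapolation_weights (Module.finrank ℝ E + k * 2)
    (t₀ := 1 / (C + 1)) (by positivity) 1
  have hF : ∀ x, F 1 x = ∑ i ∈ s, a i * F (v i) x := by
    intro x
    obtain ⟨P, hPd, hPe⟩ := exists_polynomial_eval_eq_det_id_sub_smul (fderiv ℝ G x)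
    obtain ⟨Q, hQd, hQe⟩ := exists_polynomial_eval_eq_one_sub_norm_sub_smul_sq x (G x) c
    have h := hext (P * Q ^ k) (Polynomial.natDegree_mul_le.trans
      (add_le_add hPd (Polynomial.natDegree_pow_le.trans (Nat.mul_le_mul_left k hQd))))
    simpa only [F, Polynomial.eval_mul, Polynomial.eval_pow, hPe, hQe] using h
  calc _ = ∫ x in B, F 1 x ∂μ := by simp only [F, one_smul]
    _ = ∑ i ∈ s, a i * ∫ x in B, F (v i) x ∂μ := by
      simp_rw [hF, integral_finsetSum s fun i _ => (hint (v i)).const_mul (a i),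
        integral_const_mul]
    _ = ∫ x in B, (1 - c * ‖x‖ ^ 2) ^ k ∂μ := by
      rw [Finset.sum_congr rfl fun i hi => by rw [hsmall (v i) (hv i hi)], ← Finset.sum_mul, ha,
        one_mul]

lemma exists_forall_setIntegral_pow_le {G : E → E} (hG : ContDiff ℝ 1 G) {B : Set E}
    (hB : IsCompact B) (hGB : ∀ x ∉ B, G x = 0) {c δ : ℝ} (hc : 0 ≤ c) (hδ0 : 0 ≤ δ)
    (hδ : ∀ x ∈ B, δ ≤ ‖x - G x‖) (hcB : ∀ x ∈ B, c * ‖x - G x‖ ^ 2 ≤ 1) :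
    ∃ D, ∀ k : ℕ, ∫ x in B, (1 - c * ‖x‖ ^ 2) ^ k ∂μ ≤ D * (1 - c * δ ^ 2) ^ k := by
  obtain ⟨C, hC⟩ := ContDiff.lipschitzWith_of_hasCompactSupport
    (HasCompactSupport.intro hB hGB) hG one_ne_zero
  obtain ⟨D, hD⟩ := hB.exists_bound_of_continuousOn
    (f := fun x => (ContinuousLinearMap.id ℝ E - fderiv ℝ G x).det) <| by
      have := hG.continuous_fderiv one_ne_zero
      exact (ContinuousLinearMap.continuous_det.comp (by fun_prop)).continuousOn
  refine ⟨D * μ.real B, fun k => ?_⟩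
  rw [← setIntegral_det_id_sub_fderiv_mul_pow μ hG hC hB hGB c k]
  refine setIntegral_mul_pow_le hB.measure_lt_top hD (fun x hx => ?_) k
  rw [Real.norm_of_nonneg (sub_nonneg.2 (hcB x hx))]
  gcongr
  exact hδ x hx

end HaarMeasure

/- If `‖x - G x‖ ≥ δ` on the ball, then the integral of `(1 - c ‖x‖²)ᵏ` is `O((1 - c δ²)ᵏ)`, but it
is also at least a multiple of `(1 - c (δ/2)²)ᵏ`. -/
lemma exists_norm_sub_lt_of_contDiff {G : E → E} (hG : ContDiff ℝ 1 G) {r : ℝ} (hr : 0 < r)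
    (hGr : ∀ x ∉ Metric.closedBall 0 r, G x = 0) {δ : ℝ} (hδ0 : 0 < δ) :
    ∃ x ∈ Metric.closedBall 0 r, ‖x - G x‖ < δ := by
  let : MeasurableSpace E := borel E
  have : BorelSpace E := ⟨rfl⟩
  by_contra! hδ
  set B := Metric.closedBall (0 : E) r
  have hB : IsCompact B := isCompact_closedBall 0 r
  have hGc : Continuous G := hG.continuous
  obtain ⟨S, hS⟩ := hB.exists_bound_of_continuousOn (f := fun x => x - G x) (by fun_prop)
  set M := max S r
  have hM : 0 < M := hr.trans_le (le_max_right _ _)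
  have h0B : (0 : E) ∈ B := Metric.mem_closedBall_self hr.le
  have hδM : δ ≤ M := (hδ 0 h0B).trans ((hS 0 h0B).trans (le_max_left _ _))
  set c := (M ^ 2)⁻¹
  have hcM : ∀ {y : ℝ}, 0 ≤ y → y ≤ M → c * y ^ 2 ≤ 1 := fun hy hyM => by
    rw [inv_mul_le_one₀ (by positivity)]
    gcongr
  obtain ⟨D, upper⟩ := exists_forall_setIntegral_pow_le Measure.addHaar hG hB hGr
    (c := c) (by positivity) hδ0.le hδ
    fun x hx => hcM (norm_nonneg _) ((hS x hx).trans (le_max_left _ _))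
  set B' := Metric.ball (0 : E) (min (δ / 2) r)
  have hB'B : B' ⊆ B :=
    Metric.ball_subset_closedBall.trans (Metric.closedBall_subset_closedBall (min_le_right _ _))
  have lower := fun k => pow_mul_measureReal_le_setIntegral (μ := Measure.addHaar) (k := k)
    (b := 1 - c * (δ / 2) ^ 2) (w := fun x => 1 - c * ‖x‖ ^ 2) hB.measurableSet
    measurableSet_ball hB'B hB.measure_lt_top.ne
    (sub_nonneg.2 (hcM (by positivity) (by linarith)))
    (fun x hx => sub_nonneg.2 (hcM (norm_nonneg _)
      ((mem_closedBall_zero_iff.1 hx).trans (le_max_right _ _))))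
    (fun x hx => by
      have hxδ := (mem_ball_zero_iff.1 hx).le.trans (min_le_left _ _)
      gcongr)
    (ContinuousOn.integrableOn_compact hB (by fun_prop))
  have hB'0 : Measure.addHaar.real B' ≤ 0 :=
    nonpos_of_forall_pow_mul_le (sub_nonneg.2 (hcM hδ0.le hδM))
      (show 1 - c * δ ^ 2 < 1 - c * (δ / 2) ^ 2 by gcongr; linarith)
      fun k => (lower k).trans (upper k)
  exact hB'0.not_gt (ENNReal.toReal_pos
    (Metric.measure_ball_pos _ _ (lt_min (half_pos hδ0) hr)).ne'
    Metric.isBounded_ball.measure_lt_top.ne)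

end InnerProductSpace

lemma exists_isFixedPt_of_contDiff_of_hasCompactSupport {E : Type*} [NormedAddCommGroup E]
    [InnerProductSpace ℝ E] [FiniteDimensional ℝ E] {G : E → E} (hG : ContDiff ℝ 1 G)
    (hGs : HasCompactSupport G) : ∃ x, IsFixedPt G x := by
  by_contra! hno
  obtain ⟨r, hr, hGr⟩ := hGs.isCompact.isBounded.subset_closedBall_lt 0 0
  obtain ⟨x₁, -, hx₁⟩ := (isCompact_closedBall (0 : E) r).exists_isMinOn
    ⟨0, Metric.mem_closedBall_self hr.le⟩ (f := fun x => ‖x - G x‖)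
    (by have := hG.continuous; fun_prop)
  obtain ⟨x, hx, hlt⟩ := exists_norm_sub_lt_of_contDiff hG hr
    (fun x hx => by_contra fun h => hx (hGr (subset_tsupport G h)))
    (norm_pos_iff.2 (sub_ne_zero.2 (Ne.symm (hno x₁))))
  exact (hx₁ hx).not_gt hlt

lemma exists_isFixedPt_of_continuous_of_hasCompactSupport {E : Type*} [NormedAddCommGroup E]
    [InnerProductSpace ℝ E] [FiniteDimensional ℝ E] {F : E → E} (hF : Continuous F)
    (hFs : HasCompactSupport F) : ∃ x, IsFixedPt F x := by
  by_contra! hno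
  set K := insert 0 (tsupport F)
  have hK : IsCompact K := hFs.isCompact.insert 0
  obtain ⟨x₁, -, hx₁⟩ := hK.exists_isMinOn ⟨0, mem_insert _ _⟩ (f := fun x => dist x (F x))
    (by fun_prop)
  obtain ⟨g, hg, hgF, hgs⟩ := hF.exists_contDiff_approx 1 (ε := fun _ => dist x₁ (F x₁))
    continuous_const (fun _ => dist_pos.2 (Ne.symm (hno x₁)))
  have hgK : support g ⊆ K := hgs.trans ((subset_tsupport F).trans (subset_insert _ _))
  obtain ⟨x, hx⟩ := exists_isFixedPt_of_contDiff_of_hasCompactSupport hg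
    (HasCompactSupport.of_support_subset_isCompact hK hgK)
  have hxK : x ∈ K := by
    rcases eq_or_ne x 0 with rfl | hx0
    · exact mem_insert _ _
    · exact hgK (by rwa [mem_support, hx])
  have hlt := hgF x
  rw [hx.eq] at hlt
  exact (hx₁ hxK).not_gt hlt

lemma exists_isFixedPt_of_norm_le {E : Type*} [NormedAddCommGroup E] [InnerProductSpace ℝ E]
    [FiniteDimensional ℝ E] {F : E → E} (hF : Continuous F) {R : ℝ} (hR : ∀ x, ‖F x‖ ≤ R) :
    ∃ x, IsFixedPt F x := by
  have hR0 : 0 ≤ R := (norm_nonneg _).trans (hR 0)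
  let χ : ContDiffBump (0 : E) := ⟨R + 1, R + 2, by positivity, by linarith⟩
  obtain ⟨x, hx⟩ := exists_isFixedPt_of_continuous_of_hasCompactSupport
    (χ.continuous.smul hF) χ.hasCompactSupport.smul_right
  replace hx : χ x • F x = x := hx
  have hxR : ‖x‖ ≤ R := calc
    ‖x‖ = ‖χ x • F x‖ := by rw [hx]
    _ ≤ 1 * R := by
      rw [norm_smul, Real.norm_of_nonneg χ.nonneg]
      exact mul_le_mul χ.le_one (hR x) (norm_nonneg _) zero_le_one
    _ = R := one_mul R
  have hχ : χ x = 1 := χ.one_of_mem_closedBall (mem_closedBall_zero_iff.2 (by linarith))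
  exact ⟨x, show F x = x by simpa only [hχ, one_smul] using hx⟩

/-- **Brouwer's fixed point theorem**, in a form that needs no reference to a ball. -/
theorem exists_isFixedPt_of_isBounded_range {E : Type*} [NormedAddCommGroup E] [NormedSpace ℝ E]
    [FiniteDimensional ℝ E] {F : E → E} (hF : Continuous F) (hb : Bornology.IsBounded (range F)) :
    ∃ x, IsFixedPt F x := by
  let e := toEuclidean (E := E)
  obtain ⟨R, hR⟩ := (e.lipschitz.isBounded_image hb).exists_norm_le
  obtain ⟨y, hy⟩ := exists_isFixedPt_of_norm_le (F := fun y => e (F (e.symm y))) (by fun_prop)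
    fun y => hR _ (mem_image_of_mem e (mem_range_self _))
  exact ⟨e.symm y, by rw [IsFixedPt, ← e.symm_apply_apply (F _), hy.eq]⟩

end Brouwer

section DelayedEquation

variable {Λ : Type*}

/-- Picard iterates for the delayed initial value problem
`x''(t) = -g (λ, t, x (max (t - h) 0))`, `x 0 = x₀`, `x' 0 = v₀`, as functions of the data
`z = (x₀, v₀, λ)`. Because of the delay they are stationary on `[0, i * h]` from index `i` on. -/
noncomputable def delayedIterate (g : Λ → ℝ → ℝ → ℝ) (h : ℝ) : ℕ → ℝ × ℝ × Λ → ℝ → ℝ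
  | 0 => fun z _ => z.1
  | i + 1 => fun z t => z.1 + ∫ s in (0 : ℝ)..t,
      (z.2.1 - ∫ r in (0 : ℝ)..s, g z.2.2 r (delayedIterate g h i z (max (r - h) 0)))

/-- The velocity of `delayedIterate g h (i + 1)`. -/
noncomputable def delayedVelocity (g : Λ → ℝ → ℝ → ℝ) (h : ℝ) (i : ℕ) (z : ℝ × ℝ × Λ) (t : ℝ) :
    ℝ :=
  z.2.1 - ∫ r in (0 : ℝ)..t, g z.2.2 r (delayedIterate g h i z (max (r - h) 0))

lemma delayedIterate_succ (g : Λ → ℝ → ℝ → ℝ) (h : ℝ) (i : ℕ) (z : ℝ × ℝ × Λ) (t : ℝ) :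
    delayedIterate g h (i + 1) z t = z.1 + ∫ s in (0 : ℝ)..t, delayedVelocity g h i z s := rfl

variable {g : Λ → ℝ → ℝ → ℝ} {h : ℝ}

lemma delayedIterate_succ_eq (hh : 0 < h) (z : ℝ × ℝ × Λ) (i : ℕ) :
    ∀ t ∈ Icc 0 (i * h), delayedIterate g h (i + 1) z t = delayedIterate g h i z t := by
  induction i with
  | zero =>
    intro t ht
    obtain rfl : t = 0 := by simpa using ht
    simp [delayedIterate]
  | succ i ih =>
    intro t ht
    rw [delayedIterate_succ g h (i + 1), delayedIterate_succ g h i]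
    congr 1
    refine intervalIntegral.integral_congr fun s hs => ?_
    rw [uIcc_of_le ht.1] at hs
    simp only [delayedVelocity]
    congr 1
    refine intervalIntegral.integral_congr fun r hr => ?_
    rw [uIcc_of_le hs.1] at hr
    rw [ih]
    refine ⟨le_max_right _ _, max_le ?_ (by positivity)⟩
    have ht_le := ht.2
    push_cast at ht_le
    linarith [hr.2, hs.2]

variable [TopologicalSpace Λ]

lemma continuous_delayedVelocity
    (hg : Continuous fun q : Λ × ℝ × ℝ => g q.1 q.2.1 q.2.2) {i : ℕ}
    (hi : Continuous fun q : (ℝ × ℝ × Λ) × ℝ => delayedIterate g h i q.1 q.2) :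
    Continuous fun q : (ℝ × ℝ × Λ) × ℝ => delayedVelocity g h i q.1 q.2 := by
  refine Continuous.sub (by fun_prop) ?_
  refine intervalIntegral.continuous_parametric_intervalIntegral_of_continuous
    (f := fun (q : (ℝ × ℝ × Λ) × ℝ) r => g q.1.2.2 r (delayedIterate g h i q.1 (max (r - h) 0)))
    ?_ continuous_snd
  have h_delayed : Continuous fun p : ((ℝ × ℝ × Λ) × ℝ) × ℝ =>
      delayedIterate g h i p.1.1 (max (p.2 - h) 0) :=
    hi.comp (f := fun p : ((ℝ × ℝ × Λ) × ℝ) × ℝ => (p.1.1, max (p.2 - h) 0)) (by fun_prop)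
  exact hg.comp (f := fun p : ((ℝ × ℝ × Λ) × ℝ) × ℝ =>
    (p.1.1.2.2, p.2, delayedIterate g h i p.1.1 (max (p.2 - h) 0))) (by fun_prop)

lemma continuous_delayedIterate
    (hg : Continuous fun q : Λ × ℝ × ℝ => g q.1 q.2.1 q.2.2) (i : ℕ) :
    Continuous fun q : (ℝ × ℝ × Λ) × ℝ => delayedIterate g h i q.1 q.2 := by
  induction i with
  | zero => simp only [delayedIterate]; fun_prop
  | succ i ih =>
    simp only [delayedIterate_succ]
    refine Continuous.add (by fun_prop) ?_
    refine intervalIntegral.continuous_parametric_intervalIntegral_of_continuous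
      (f := fun (q : (ℝ × ℝ × Λ) × ℝ) s => delayedVelocity g h i q.1 s) ?_ continuous_snd
    exact (continuous_delayedVelocity hg ih).comp
      (f := fun p : ((ℝ × ℝ × Λ) × ℝ) × ℝ => (p.1.1, p.2)) (by fun_prop)

/-- Unlike the equation without delay, the delayed one has a solution depending continuously on the
data although `g` is merely continuous (Tonelli's scheme). -/
lemma exists_continuous_delayed_solution
    (hg : Continuous fun q : Λ × ℝ × ℝ => g q.1 q.2.1 q.2.2) (hh : 0 < h) (T : ℝ) :
    ∃ x v w : ℝ × ℝ × Λ → ℝ → ℝ,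
      Continuous (fun q : (ℝ × ℝ × Λ) × ℝ => x q.1 q.2) ∧
      Continuous (fun q : (ℝ × ℝ × Λ) × ℝ => v q.1 q.2) ∧
      (∀ z, x z 0 = z.1) ∧ (∀ z, v z 0 = z.2.1) ∧
      (∀ z t, HasDerivAt (x z) (v z t) t) ∧ (∀ z t, HasDerivAt (v z) (w z t) t) ∧
      ∀ z, ∀ t ∈ Icc 0 T, w z t = -g z.2.2 t (x z (max (t - h) 0)) := by
  obtain ⟨m, hm⟩ := exists_nat_ge (T / h)
  have hmT : T ≤ m * h := by rwa [div_le_iff₀ hh] at hm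
  have hxc := continuous_delayedIterate (h := h) hg m
  have hvc := continuous_delayedVelocity hg hxc
  refine ⟨delayedIterate g h (m + 1), delayedVelocity g h m,
    fun z t => -g z.2.2 t (delayedIterate g h m z (max (t - h) 0)),
    continuous_delayedIterate hg _, hvc, fun z => by simp [delayedIterate_succ],
    fun z => by simp [delayedVelocity], fun z t => ?_, fun z t => ?_, fun z t ht => ?_⟩
  · have hc : Continuous (delayedVelocity g h m z) :=
      hvc.comp (f := fun s : ℝ => (z, s)) (by fun_prop)
    exact (hc.integral_hasStrictDerivAt 0 t).hasDerivAt.const_add z.1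
  · have h_delayed : Continuous fun r : ℝ => delayedIterate g h m z (max (r - h) 0) :=
      hxc.comp (f := fun r : ℝ => (z, max (r - h) 0)) (by fun_prop)
    have hc : Continuous fun r => g z.2.2 r (delayedIterate g h m z (max (r - h) 0)) :=
      hg.comp (f := fun r : ℝ => (z.2.2, r, delayedIterate g h m z (max (r - h) 0))) (by fun_prop)
    exact (hc.integral_hasStrictDerivAt 0 t).hasDerivAt.const_sub z.2.1
  · rw [delayedIterate_succ_eq hh z m]
    exact ⟨le_max_right _ _, max_le (by linarith [ht.2]) (by positivity)⟩

end DelayedEquation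

section RealCalculus

lemma hasDerivAt_of_abs_sub_le_mul_sq {f : ℝ → ℝ} {d C δ t₀ : ℝ} (hδ : 0 < δ)
    (hf : ∀ t ∈ Icc (t₀ - δ) (t₀ + δ), |f t - f t₀ - d * (t - t₀)| ≤ C * (t - t₀) ^ 2) :
    HasDerivAt f d t₀ := by
  have h_remainder : HasDerivAt (fun t => f t - f t₀ - d * (t - t₀)) 0 t₀ := by
    refine HasFDerivAt.hasDerivAt (f' := 0) (Asymptotics.IsBigO.hasFDerivAt (n := 2) ?_ one_lt_two)
    refine Asymptotics.IsBigO.of_bound C ?_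
    filter_upwards [Icc_mem_nhds (show t₀ - δ < t₀ by linarith) (show t₀ < t₀ + δ by linarith)]
      with t ht
    simpa [sq_abs] using hf t ht
  have h_linear : HasDerivAt (fun t => f t₀ + d * (t - t₀)) d t₀ := by
    simpa using (((hasDerivAt_id t₀).sub_const t₀).const_mul d).const_add (f t₀)
  convert! h_remainder.add h_linear using 1
  · ext t; simp
  · simp

lemma hasDerivAt_max_zero_sq (y : ℝ) :
    HasDerivAt (fun s : ℝ => (max s 0) ^ 2) (2 * max y 0) y := by
  rcases lt_trichotomy y 0 with hy | rfl | hy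
  · have h_zero : (fun s : ℝ => (max s 0) ^ 2) =ᶠ[nhds y] fun _ => 0 := by
      filter_upwards [gt_mem_nhds hy] with s hs
      rw [max_eq_right (le_of_lt hs), zero_pow two_ne_zero]
    simpa [max_eq_right hy.le] using (hasDerivAt_const y (0 : ℝ)).congr_of_eventuallyEq h_zero
  · refine hasDerivAt_of_abs_sub_le_mul_sq (δ := 1) (C := 1) one_pos fun t _ => ?_
    rcases le_total t 0 with ht | ht <;> simp [ht, sq_nonneg]
  · have h_sq : (fun s : ℝ => (max s 0) ^ 2) =ᶠ[nhds y] fun s => s ^ 2 := by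
      filter_upwards [lt_mem_nhds hy] with s hs
      rw [max_eq_left (le_of_lt hs)]
    simpa [max_eq_left hy.le] using (hasDerivAt_pow 2 y).congr_of_eventuallyEq h_sq

lemma hasDerivAt_max_neg_zero_sq (y : ℝ) :
    HasDerivAt (fun s : ℝ => (max (-s) 0) ^ 2) (-2 * max (-y) 0) y := by
  convert! (hasDerivAt_max_zero_sq (-y)).comp y (hasDerivAt_neg y) using 1
  ring

lemma abs_max_neg_zero_sub_le (a b : ℝ) : |max (-a) 0 - max (-b) 0| ≤ |a - b| := by
  simpa [neg_add_eq_sub, abs_sub_comm] using abs_max_sub_max_le_abs (-a) (-b) 0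

lemma deriv_nonneg_of_forall_le_left {f : ℝ → ℝ} {d a t : ℝ} (hat : a < t)
    (hd : HasDerivWithinAt f d (Icc a t) t) (hmax : ∀ s ∈ Icc a t, f s ≤ f t) : 0 ≤ d := by
  have h_cone : a - t ∈ posTangentConeAt (Icc a t) t :=
    mem_posTangentConeAt_of_segment_subset (by simp [segment_eq_uIcc, uIcc_of_ge hat.le])
  have h_nonpos := IsLocalMaxOn.hasFDerivWithinAt_nonpos
    (IsMaxOn.localize (isMaxOn_iff.2 hmax)) hd.hasFDerivWithinAt h_cone
  simp only [ContinuousLinearMap.toSpanSingleton_apply, smul_eq_mul] at h_nonpos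
  exact nonneg_of_mul_nonpos_right h_nonpos (sub_neg.2 hat)

lemma abs_sub_le_of_hasDerivAt {x v : ℝ → ℝ} (hx : ∀ t, HasDerivAt x (v t) t) {a b S : ℝ}
    (hab : a ≤ b) (hS : ∀ t ∈ Icc a b, |v t| ≤ S) : |x b - x a| ≤ S * (b - a) := by
  simpa [Real.norm_eq_abs, abs_of_nonneg (sub_nonneg.2 hab)] using
    (convex_Icc a b).norm_image_sub_le_of_norm_hasDerivWithin_le (C := S)
      (fun t _ => (hx t).hasDerivWithinAt) (fun t ht => by simpa using hS t ht)
      (left_mem_Icc.2 hab) (right_mem_Icc.2 hab)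

lemma abs_sub_le_of_ordered {f : ℝ → ℝ} {C a b : ℝ}
    (hf : ∀ s ∈ Icc a b, ∀ t ∈ Icc a b, s ≤ t → |f t - f s| ≤ C * (t - s)) :
    ∀ s ∈ Icc a b, ∀ t ∈ Icc a b, |f t - f s| ≤ C * |t - s| := by
  intro s hs t ht
  rcases le_total s t with hst | hts
  · rw [abs_of_nonneg (sub_nonneg.2 hst)]
    exact hf s hs t ht hst
  · rw [abs_sub_comm, abs_sub_comm t s, abs_of_nonneg (sub_nonneg.2 hts)]
    exact hf t ht s hs hts

section RightDerivative

variable {f f' : ℝ → ℝ} {a b c : ℝ}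

lemma sub_le_of_right_deriv_le (hf : Continuous f)
    (hd : ∀ t, HasDerivWithinAt f (f' t) (Ici t) t) (hab : a ≤ b)
    (hb : ∀ t ∈ Ico a b, f' t ≤ c) : f b - f a ≤ c * (b - a) := by
  have h_image := image_le_of_deriv_right_le_deriv_boundary (f := f) (f' := f') (a := a) (b := b)
    (B := fun t => f a + c * (t - a)) (B' := fun _ => c) hf.continuousOn (fun t _ => hd t)
    (by simp) (by fun_prop) (fun t _ => by
      simpa using
        ((((hasDerivAt_id t).sub_const a).const_mul c).const_add (f a)).hasDerivWithinAt)
    hb (right_mem_Icc.2 hab)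
  linarith

lemma le_sub_of_le_right_deriv (hf : Continuous f)
    (hd : ∀ t, HasDerivWithinAt f (f' t) (Ici t) t) (hab : a ≤ b)
    (hb : ∀ t ∈ Ico a b, c ≤ f' t) : c * (b - a) ≤ f b - f a := by
  linarith [sub_le_of_right_deriv_le (f := fun t => -f t) (f' := fun t => -f' t) (c := -c)
    hf.neg (fun t => (hd t).neg) hab fun t ht => neg_le_neg (hb t ht)]

variable {x v w : ℝ → ℝ} {s t : ℝ}

lemma taylor_ge_of_le_right_deriv (hx : ∀ t, HasDerivAt x (v t) t) (hv : Continuous v)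
    (hd : ∀ t, HasDerivWithinAt v (w t) (Ici t) t) (hb : ∀ t ∈ Icc a b, c ≤ w t)
    (hs : s ∈ Icc a b) (ht : t ∈ Icc a b) :
    c * (t - s) ^ 2 / 2 ≤ x t - x s - v s * (t - s) := by
  have hmono : ∀ s ∈ Icc a b, ∀ t ∈ Icc a b, s ≤ t → c * (t - s) ≤ v t - v s :=
    fun s hs t ht hst => le_sub_of_le_right_deriv hv hd hst
      fun r hr => hb r ⟨hs.1.trans hr.1, hr.2.le.trans ht.2⟩
  let φ : ℝ → ℝ := fun r => x r - x s - v s * (r - s) - c * (r - s) ^ 2 / 2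
  have hφd : ∀ r, HasDerivAt φ (v r - v s - c * (r - s)) r := by
    intro r
    have h_tangent :=
      ((hx r).sub_const (x s)).sub (((hasDerivAt_id r).sub_const s).const_mul (v s))
    have h_parabola := ((((hasDerivAt_id r).sub_const s).pow 2).const_mul c).div_const 2
    convert! h_tangent.sub h_parabola using 1
    simp only [id_eq, Nat.cast_ofNat, Nat.add_one_sub_one, pow_one]
    ring
  have hφc : Continuous φ := continuous_iff_continuousAt.2 fun r => (hφd r).continuousAt
  have hφs : φ s = 0 := by simp [φ]
  suffices hφt : 0 ≤ φ t by simp only [φ] at hφt; linarith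
  rcases le_total s t with hst | hts
  · linarith [le_sub_of_le_right_deriv (c := 0) hφc (fun r => (hφd r).hasDerivWithinAt) hst
      fun r hr => by linarith [hmono s hs r ⟨hs.1.trans hr.1, hr.2.le.trans ht.2⟩ hr.1]]
  · linarith [sub_le_of_right_deriv_le (c := 0) hφc (fun r => (hφd r).hasDerivWithinAt) hts
      fun r hr => by linarith [hmono r ⟨ht.1.trans hr.1, hr.2.le.trans hs.2⟩ s hs hr.2.le]]

lemma taylor_le_of_right_deriv_le (hx : ∀ t, HasDerivAt x (v t) t) (hv : Continuous v)
    (hd : ∀ t, HasDerivWithinAt v (w t) (Ici t) t) (hb : ∀ t ∈ Icc a b, w t ≤ c)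
    (hs : s ∈ Icc a b) (ht : t ∈ Icc a b) :
    x t - x s - v s * (t - s) ≤ c * (t - s) ^ 2 / 2 := by
  linarith [taylor_ge_of_le_right_deriv (x := fun t => -x t) (v := fun t => -v t)
    (w := fun t => -w t) (c := -c) (fun t => (hx t).neg) hv.neg
    (fun t => (hd t).neg) (fun t ht => neg_le_neg (hb t ht)) hs ht]

end RightDerivative

/-- A Gronwall inequality suited to delay equations: at a record of `E`, earlier values of `E` can
be estimated by the current one. -/
lemma le_mul_exp_of_deriv_lt_at_record {E E' : ℝ → ℝ} {κ T : ℝ} (hκ : 0 ≤ κ)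
    (hE : ∀ t, HasDerivAt E (E' t) t) (hpos : ∀ t, 0 ≤ E t)
    (hrec : ∀ t ∈ Ioc 0 T, (∀ s ∈ Icc 0 t, E s ≤ E t) → E' t < κ * E t) :
    ∀ t ∈ Icc 0 T, E t ≤ E 0 * exp (κ * t) := by
  intro t ht
  have hEc : Continuous E := continuous_iff_continuousAt.2 fun t => (hE t).continuousAt
  obtain ⟨τ, hτ, hmax⟩ := isCompact_Icc.exists_isMaxOn (nonempty_Icc.2 (ht.1.trans ht.2))
    (f := fun t => E t * exp (-κ * t)) (by fun_prop)
  obtain rfl | hτ_pos := hτ.1.eq_or_lt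
  · have h_le : E t * exp (-κ * t) ≤ E 0 * exp (-κ * 0) := hmax ht
    rw [mul_zero, exp_zero, mul_one] at h_le
    calc E t = E t * exp (-κ * t) * exp (κ * t) := by rw [mul_assoc, ← exp_add]; simp
      _ ≤ E 0 * exp (κ * t) := by gcongr
  have h_record : ∀ s ∈ Icc 0 τ, E s ≤ E τ := by
    intro s hs
    have h_le : E s * exp (-κ * s) ≤ E τ * exp (-κ * τ) := hmax ⟨hs.1, hs.2.trans hτ.2⟩
    have h_exp : exp (-κ * τ) ≤ exp (-κ * s) := exp_le_exp.2 (by nlinarith [hs.2])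
    exact le_of_mul_le_mul_right (h_le.trans (mul_le_mul_of_nonneg_left h_exp (hpos τ)))
      (exp_pos _)
  have h_deriv := (hE τ).mul (((hasDerivAt_id τ).const_mul (-κ)).exp)
  have h_nonneg := deriv_nonneg_of_forall_le_left hτ_pos h_deriv.hasDerivWithinAt
    fun s hs => hmax ⟨hs.1, hs.2.trans hτ.2⟩
  have h_factor : 0 ≤ exp (-κ * τ) * (E' τ - κ * E τ) := by
    simp only [id_eq] at h_nonneg
    linarith
  linarith [nonneg_of_mul_nonneg_right h_factor (exp_pos _), hrec τ ⟨hτ_pos, hτ.2⟩ h_record]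

end RealCalculus

section PenaltyEnergy

/-- Energy of the penalised oscillator, in which the half-line `x < 0` beyond the wall carries a
spring of stiffness `N ^ 2` and the half-line `0 < x` one of stiffness `1`. -/
def penaltyEnergy (N x v : ℝ) : ℝ := v ^ 2 + (max x 0) ^ 2 + N ^ 2 * (max (-x) 0) ^ 2

lemma penaltyEnergy_nonneg (N x v : ℝ) : 0 ≤ penaltyEnergy N x v := by
  unfold penaltyEnergy
  positivity

lemma penaltyEnergy_mul (N x v : ℝ) {c : ℝ} (hc : 0 ≤ c) :
    penaltyEnergy N (c * x) (c * v) = c ^ 2 * penaltyEnergy N x v := by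
  have h_pos : max (c * x) 0 = c * max x 0 := by rw [mul_max_of_nonneg _ _ hc, mul_zero]
  have h_neg : max (-(c * x)) 0 = c * max (-x) 0 := by
    rw [mul_max_of_nonneg _ _ hc, mul_zero, mul_neg]
  rw [penaltyEnergy, h_pos, h_neg, penaltyEnergy]
  ring

lemma abs_le_of_penaltyEnergy_le {N x v B : ℝ} (hN : 1 ≤ N) (hB : 0 ≤ B)
    (hE : penaltyEnergy N x v ≤ B ^ 2) : |v| ≤ B ∧ |x| ≤ B ∧ N * max (-x) 0 ≤ B := by
  unfold penaltyEnergy at hE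
  have h_neg_nonneg : 0 ≤ max (-x) 0 := le_max_right _ _
  have h_spring_nonneg : 0 ≤ N ^ 2 * (max (-x) 0) ^ 2 := by positivity
  have h_spring : N * max (-x) 0 ≤ B := by
    refine le_of_sq_le_sq ?_ hB
    rw [mul_pow]
    linarith [sq_nonneg v, sq_nonneg (max x 0)]
  have h_pos : max x 0 ≤ B := le_of_sq_le_sq (by linarith [sq_nonneg v]) hB
  refine ⟨abs_le_of_sq_le_sq (by linarith [sq_nonneg (max x 0)]) hB, abs_le.2 ⟨?_, ?_⟩, h_spring⟩
  · nlinarith [le_max_left (-x) 0]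
  · exact (le_max_left x 0).trans h_pos

lemma hasDerivAt_penaltyEnergy {x v : ℝ → ℝ} {w t : ℝ} (N : ℝ) (hx : HasDerivAt x (v t) t)
    (hv : HasDerivAt v w t) :
    HasDerivAt (fun s => penaltyEnergy N (x s) (v s))
      (2 * (v t * (w + max (x t) 0 - N ^ 2 * max (-x t) 0))) t := by
  convert! ((hv.pow 2).add ((hasDerivAt_max_zero_sq (x t)).comp t hx)).add
    (((hasDerivAt_max_neg_zero_sq (x t)).comp t hx).const_mul (N ^ 2)) using 1
  simp only [Nat.cast_ofNat, Nat.add_one_sub_one, pow_one]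
  ring

section Growth

variable {C T N h : ℝ} {P : ℝ → ℝ → ℝ} {x v w : ℝ → ℝ}

/-- A delay `h ≤ T / N ^ 2` perturbs the stiff restoring force only by `T` times the size of the
solution. -/
lemma abs_delayed_force_le {S s t : ℝ} (hC : 0 ≤ C) (hS : 1 ≤ S)
    (hP : ∀ y, |P t y| ≤ C * (1 + max y 0)) (hNh : N ^ 2 * (t - s) ≤ T) (hst : s ≤ t)
    (hx : ∀ r, HasDerivAt x (v r) r) (hb : ∀ r ∈ Icc s t, |v r| ≤ S ∧ |x r| ≤ S) :
    |-(P t (x s) - N ^ 2 * max (-x s) 0) + max (x t) 0 - N ^ 2 * max (-x t) 0| ≤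
      (2 * C + 1 + T) * S := by
  have h_pos_le : ∀ r ∈ Icc s t, max (x r) 0 ≤ S := fun r hr =>
    max_le ((le_abs_self _).trans (hb r hr).2) (by linarith)
  have h_force : |P t (x s)| ≤ 2 * C * S := by
    refine (hP _).trans ?_
    nlinarith [h_pos_le s (left_mem_Icc.2 hst)]
  have h_soft : |max (x t) 0| ≤ S := by
    rw [abs_of_nonneg (le_max_right _ _)]
    exact h_pos_le t (right_mem_Icc.2 hst)
  have h_stiff : |N ^ 2 * (max (-x s) 0 - max (-x t) 0)| ≤ T * S := by
    have h_lip : |x t - x s| ≤ S * (t - s) :=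
      abs_sub_le_of_hasDerivAt hx hst fun r hr => (hb r hr).1
    rw [abs_mul, abs_of_nonneg (sq_nonneg N)]
    calc N ^ 2 * |max (-x s) 0 - max (-x t) 0| ≤ N ^ 2 * (S * (t - s)) := by
          gcongr
          exact (abs_max_neg_zero_sub_le _ _).trans ((abs_sub_comm _ _).trans_le h_lip)
      _ = N ^ 2 * (t - s) * S := by ring
      _ ≤ T * S := by gcongr
  calc |-(P t (x s) - N ^ 2 * max (-x s) 0) + max (x t) 0 - N ^ 2 * max (-x t) 0|
      = |-P t (x s) + max (x t) 0 + N ^ 2 * (max (-x s) 0 - max (-x t) 0)| := by congr 1; ring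
    _ ≤ |-P t (x s)| + |max (x t) 0| + |N ^ 2 * (max (-x s) 0 - max (-x t) 0)| :=
        abs_add_three _ _ _
    _ ≤ (2 * C + 1 + T) * S := by rw [abs_neg]; linarith

lemma penaltyEnergy_add_one_le (hC : 0 ≤ C) (hN : 1 ≤ N) (hh : 0 < h) (hNh : N ^ 2 * h ≤ T)
    (hP : ∀ t y, |P t y| ≤ C * (1 + max y 0))
    (hx : ∀ t, HasDerivAt x (v t) t) (hv : ∀ t, HasDerivAt v (w t) t)
    (hw : ∀ t ∈ Icc 0 T, w t = -(P t (x (max (t - h) 0)) - N ^ 2 * max (-x (max (t - h) 0)) 0)) :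
    ∀ t ∈ Icc 0 T, penaltyEnergy N (x t) (v t) + 1 ≤
      (penaltyEnergy N (x 0) (v 0) + 1) * exp ((4 * C + 3 + 2 * T) * T) := by
  have hT : 0 ≤ T := le_trans (by positivity) hNh
  have hE1 : ∀ t, 1 ≤ penaltyEnergy N (x t) (v t) + 1 := fun t => by
    linarith [penaltyEnergy_nonneg N (x t) (v t)]
  intro t ht
  refine (le_mul_exp_of_deriv_lt_at_record (κ := 4 * C + 3 + 2 * T) (by positivity)
    (fun t => (hasDerivAt_penaltyEnergy N (hx t) (hv t)).add_const 1)
    (fun t => zero_le_one.trans (hE1 t)) ?_ t ht).trans ?_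
  · intro t ht h_record
    let S := √(penaltyEnergy N (x t) (v t) + 1)
    have hS_sq : S ^ 2 = penaltyEnergy N (x t) (v t) + 1 := Real.sq_sqrt (by linarith [hE1 t])
    have hS1 : 1 ≤ S := Real.one_le_sqrt.2 (hE1 t)
    have hb : ∀ r ∈ Icc 0 t, |v r| ≤ S ∧ |x r| ≤ S := fun r hr => by
      have h_le : penaltyEnergy N (x r) (v r) ≤ S ^ 2 := by rw [hS_sq]; linarith [h_record r hr]
      have h_abs := abs_le_of_penaltyEnergy_le hN (by linarith) h_le
      exact ⟨h_abs.1, h_abs.2.1⟩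
    have hτ_delay : t - max (t - h) 0 ≤ h := by linarith [le_max_left (t - h) 0]
    have h_force := abs_delayed_force_le (s := max (t - h) 0) hC hS1 (hP t)
      ((mul_le_mul_of_nonneg_left hτ_delay (sq_nonneg N)).trans hNh)
      (max_le (by linarith) ht.1.le) hx
      fun r hr => hb r ⟨(le_max_right _ _).trans hr.1, hr.2⟩
    rw [← hw t ⟨ht.1.le, ht.2⟩] at h_force
    have h_power : v t * (w t + max (x t) 0 - N ^ 2 * max (-x t) 0) ≤
        S * ((2 * C + 1 + T) * S) := by
      refine (le_abs_self _).trans ?_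
      rw [abs_mul]
      exact mul_le_mul (hb t ⟨ht.1.le, le_rfl⟩).1 h_force (abs_nonneg _) (by linarith)
    rw [← hS_sq]
    nlinarith
  · gcongr
    · linarith [hE1 0]
    · exact ht.2

end Growth

end PenaltyEnergy

section QuasiperiodicExtension

/-- The extension to `ℝ` of the restriction of `x` to `[0, T)` that satisfies
`y (t + T) = c * y t`. -/
noncomputable def quasiperiodicExt (T c : ℝ) (x : ℝ → ℝ) (t : ℝ) : ℝ :=
  c ^ ⌊t / T⌋ * x (t - ⌊t / T⌋ * T)

lemma sub_floor_div_mul_mem_Ico {T : ℝ} (hT : 0 < T) (t : ℝ) : t - ⌊t / T⌋ * T ∈ Ico 0 T :=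
  ⟨Int.sub_floor_div_mul_nonneg t hT, Int.sub_floor_div_mul_lt t hT⟩

variable {T c : ℝ} {x v : ℝ → ℝ}

lemma quasiperiodicExt_add (hT : 0 < T) (hc : c ≠ 0) (x : ℝ → ℝ) (t : ℝ) :
    quasiperiodicExt T c x (t + T) = c * quasiperiodicExt T c x t := by
  have h_floor : ⌊(t + T) / T⌋ = ⌊t / T⌋ + 1 := by
    rw [add_div, div_self hT.ne', Int.floor_add_one]
  simp only [quasiperiodicExt, h_floor, zpow_add_one₀ hc]
  push_cast
  rw [show t + T - (⌊t / T⌋ + 1) * T = t - ⌊t / T⌋ * T by ring]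
  ring

lemma quasiperiodicExt_of_mem_Ico (hT : 0 < T) (m : ℤ) {t : ℝ}
    (ht : t ∈ Ico (m * T) ((m + 1) * T)) :
    quasiperiodicExt T c x t = c ^ m * x (t - m * T) := by
  have h_floor : ⌊t / T⌋ = m := by
    rw [Int.floor_eq_iff, le_div_iff₀ hT, div_lt_iff₀ hT]
    exact ht
  rw [quasiperiodicExt, h_floor]

lemma quasiperiodicExt_of_mem_Icc (hT : 0 < T) (hc : c ≠ 0) (hx : x T = c * x 0) (m : ℤ) {t : ℝ}
    (ht : t ∈ Icc (m * T) ((m + 1) * T)) :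
    quasiperiodicExt T c x t = c ^ m * x (t - m * T) := by
  obtain rfl | h_lt := ht.2.eq_or_lt
  · have h_next : ((m : ℝ) + 1) * T ∈ Ico (((m + 1 : ℤ) : ℝ) * T) (((m + 1 : ℤ) + 1) * T) := by
      constructor <;> push_cast <;> nlinarith
    rw [quasiperiodicExt_of_mem_Ico hT (m + 1) h_next]
    push_cast
    rw [sub_self, show ((m : ℝ) + 1) * T - m * T = T by ring, hx, zpow_add_one₀ hc]
    ring
  · exact quasiperiodicExt_of_mem_Ico hT m ⟨ht.1, h_lt⟩

lemma hasDerivAt_zpow_mul_comp_sub (hd : ∀ t, HasDerivAt x (v t) t) (m : ℤ) (t : ℝ) :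
    HasDerivAt (fun s => c ^ m * x (s - m * T)) (c ^ m * v (t - m * T)) t :=
  ((hd (t - m * T)).comp_sub_const t (m * T)).const_mul (c ^ m)

lemma hasDerivWithinAt_quasiperiodicExt_right (hT : 0 < T) (hc : c ≠ 0)
    (hd : ∀ t, HasDerivAt x (v t) t) (hx : x T = c * x 0) (t : ℝ) :
    HasDerivWithinAt (quasiperiodicExt T c x) (quasiperiodicExt T c v t) (Ici t) t := by
  obtain ⟨h_nonneg, h_lt⟩ := sub_floor_div_mul_mem_Ico hT t
  refine (hasDerivAt_zpow_mul_comp_sub hd ⌊t / T⌋ t).hasDerivWithinAt.congr_of_eventuallyEq ?_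
    (quasiperiodicExt_of_mem_Icc hT hc hx _ ⟨by linarith, by linarith⟩)
  filter_upwards [Icc_mem_nhdsGE (show t < (⌊t / T⌋ + 1) * T by linarith)] with s hs
  exact quasiperiodicExt_of_mem_Icc hT hc hx _ ⟨by linarith [hs.1], hs.2⟩

lemma exists_hasDerivWithinAt_quasiperiodicExt_left (hT : 0 < T) (hc : c ≠ 0)
    (hd : ∀ t, HasDerivAt x (v t) t) (hx : x T = c * x 0) (t : ℝ) :
    ∃ m : ℤ, t ∈ Icc (m * T) ((m + 1) * T) ∧
      HasDerivWithinAt (quasiperiodicExt T c x) (c ^ m * v (t - m * T)) (Iic t) t := by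
  have h_le : t ≤ ⌈t / T⌉ * T := (div_le_iff₀ hT).1 (Int.le_ceil (t / T))
  have h_lt : ((⌈t / T⌉ : ℝ) - 1) * T < t :=
    (lt_div_iff₀ hT).1 (by linarith [Int.ceil_lt_add_one (t / T)])
  have h_cast : ((⌈t / T⌉ - 1 : ℤ) : ℝ) = (⌈t / T⌉ : ℝ) - 1 := by push_cast; ring
  have h_mem : t ∈ Icc (((⌈t / T⌉ - 1 : ℤ) : ℝ) * T) ((((⌈t / T⌉ - 1 : ℤ) : ℝ) + 1) * T) := by
    rw [h_cast, sub_add_cancel]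
    exact ⟨h_lt.le, h_le⟩
  refine ⟨⌈t / T⌉ - 1, h_mem,
    (hasDerivAt_zpow_mul_comp_sub hd _ t).hasDerivWithinAt.congr_of_eventuallyEq ?_
      (quasiperiodicExt_of_mem_Icc hT hc hx _ h_mem)⟩
  filter_upwards [Icc_mem_nhdsLE (h_cast ▸ h_lt)] with s hs
  exact quasiperiodicExt_of_mem_Icc hT hc hx _ ⟨hs.1, hs.2.trans h_mem.2⟩

lemma hasDerivAt_quasiperiodicExt (hT : 0 < T) (hc : c ≠ 0) (hd : ∀ t, HasDerivAt x (v t) t)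
    (hx : x T = c * x 0) (hv : v T = c * v 0) (t : ℝ) :
    HasDerivAt (quasiperiodicExt T c x) (quasiperiodicExt T c v t) t := by
  obtain ⟨m, hm, h_left⟩ := exists_hasDerivWithinAt_quasiperiodicExt_left hT hc hd hx t
  rw [← quasiperiodicExt_of_mem_Icc hT hc hv m hm] at h_left
  simpa [Iic_union_Ici] using h_left.union (hasDerivWithinAt_quasiperiodicExt_right hT hc hd hx t)

lemma continuous_quasiperiodicExt (hT : 0 < T) (hc : c ≠ 0) (hd : ∀ t, HasDerivAt x (v t) t)
    (hx : x T = c * x 0) : Continuous (quasiperiodicExt T c x) := by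
  refine continuous_iff_continuousAt.2 fun t => ?_
  obtain ⟨m, -, h_left⟩ := exists_hasDerivWithinAt_quasiperiodicExt_left hT hc hd hx t
  simpa [Iic_union_Ici, continuousWithinAt_univ] using h_left.continuousWithinAt.union
    (hasDerivWithinAt_quasiperiodicExt_right hT hc hd hx t).continuousWithinAt

end QuasiperiodicExtension

section PenaltyLimit

/-- Mechanical energy of a unit mass in the penalising potential of stiffness `n ^ 2` beyond the
wall; its limit keeps track of the speed of impact at the wall. -/
noncomputable def wallEnergy (n x v : ℝ) : ℝ := v ^ 2 / 2 + n ^ 2 * (max (-x) 0) ^ 2 / 2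

/-- Common bound for the state of a penalised oscillator, its penetration into the wall on the
scale `1 / n`, and the external force `q`. -/
structure IsPenaltyBound (K n x v q : ℝ) : Prop where
  abs_pos_le : |x| ≤ K
  abs_vel_le : |v| ≤ K
  penetration_le : n * max (-x) 0 ≤ K
  abs_force_le : |q| ≤ K

/-- `X`, `V` and `E` are the limits along `U` of position, velocity and energy of the penalised
oscillators `x'' + q - n ^ 2 * max (-x) 0 = 0` with stiffness `n` tending to infinity. Forces are
only required to be right limits of accelerations, as those of a concatenated solution are. -/
structure IsPenaltyLimit {ι : Type*} (U : Ultrafilter ι) (x v q : ι → ℝ → ℝ) (n : ι → ℝ)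
    (X V E : ℝ → ℝ) : Prop where
  hasDerivAt_pos : ∀ j t, HasDerivAt (x j) (v j t) t
  continuous_vel : ∀ j, Continuous (v j)
  hasDerivWithinAt_vel : ∀ j t,
    HasDerivWithinAt (v j) (-q j t + n j ^ 2 * max (-x j t) 0) (Ici t) t
  stiffness_pos : ∀ j, 0 < n j
  tendsto_stiffness : Tendsto n U atTop
  bounded : ∀ B : ℝ, ∃ K : ℝ, 0 < K ∧ ∀ j, ∀ t ∈ Icc (-B) B,
    IsPenaltyBound K (n j) (x j t) (v j t) (q j t)
  tendsto_pos : ∀ t, Tendsto (fun j => x j t) U (nhds (X t))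
  tendsto_vel : ∀ t, Tendsto (fun j => v j t) U (nhds (V t))
  tendsto_energy : ∀ t, Tendsto (fun j => wallEnergy (n j) (x j t) (v j t)) U (nhds (E t))

lemma wallEnergy_nonneg (n x v : ℝ) : 0 ≤ wallEnergy n x v := by
  unfold wallEnergy
  positivity

lemma sq_le_two_mul_wallEnergy (n x v : ℝ) : v ^ 2 ≤ 2 * wallEnergy n x v := by
  have h_spring : 0 ≤ n ^ 2 * (max (-x) 0) ^ 2 / 2 := by positivity
  unfold wallEnergy
  linarith

lemma wallEnergy_of_pos (n v : ℝ) {x : ℝ} (hx : 0 < x) : wallEnergy n x v = v ^ 2 / 2 := by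
  simp [wallEnergy, hx.le]

lemma IsPenaltyBound.wallEnergy_le {K n x v q : ℝ} (hn : 0 ≤ n) (h : IsPenaltyBound K n x v q) :
    wallEnergy n x v ≤ K ^ 2 := by
  have h_vel : v ^ 2 ≤ K ^ 2 := sq_le_sq' (abs_le.1 h.abs_vel_le).1 (abs_le.1 h.abs_vel_le).2
  have h_spring : (n * max (-x) 0) ^ 2 ≤ K ^ 2 :=
    pow_le_pow_left₀ (mul_nonneg hn (le_max_right _ _)) h.penetration_le 2
  rw [mul_pow] at h_spring
  unfold wallEnergy
  linarith

/-- The right-hand side is the derivative of `x * v + 2 * (K / n) * v`. Its second summand turns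
the negative contribution `-n ^ 2 * max (-x) 0 ^ 2` of the spring to the virial `(x * v)'` into a
positive one. -/
lemma IsPenaltyBound.two_mul_wallEnergy_sub_le {K n x v q : ℝ} (hn : 0 < n)
    (h : IsPenaltyBound K n x v q) :
    2 * wallEnergy n x v - K * |x| - 2 * K ^ 2 / n ≤
      v * v + x * (-q + n ^ 2 * max (-x) 0) + 2 * (K / n) * (-q + n ^ 2 * max (-x) 0) := by
  have hK : 0 ≤ K := (abs_nonneg x).trans h.abs_pos_le
  have h_virial : x * max (-x) 0 = -max (-x) 0 ^ 2 := by
    rcases le_total (-x) 0 with hx | hx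
    · simp [hx]
    · rw [max_eq_left hx]; ring
  have h_force : x * q ≤ K * |x| := by
    calc x * q ≤ |x| * |q| := (le_abs_self _).trans_eq (abs_mul x q)
      _ ≤ K * |x| := by rw [mul_comm]; gcongr; exact h.abs_force_le
  have h_shift_force : 2 * (K / n) * q ≤ 2 * K ^ 2 / n := by
    calc 2 * (K / n) * q ≤ 2 * (K / n) * K := by
          gcongr; exact (le_abs_self q).trans h.abs_force_le
      _ = 2 * K ^ 2 / n := by ring
  have h_shift_spring : (n * max (-x) 0) ^ 2 ≤ K / n * (n ^ 2 * max (-x) 0) := by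
    calc (n * max (-x) 0) ^ 2 = n * max (-x) 0 * (n * max (-x) 0) := sq _
      _ ≤ K * (n * max (-x) 0) := by gcongr; exact h.penetration_le
      _ = K / n * (n ^ 2 * max (-x) 0) := by field_simp
  have h_expand : x * (-q + n ^ 2 * max (-x) 0) = -(x * q) - (n * max (-x) 0) ^ 2 := by
    linear_combination n ^ 2 * h_virial
  unfold wallEnergy
  linarith

lemma exists_Icc_of_eventually_prod_nhds {ι : Type*} {l : Filter ι} {r : ι → ℝ → Prop} {t₀ : ℝ}
    (h : ∀ᶠ p in l ×ˢ nhds t₀, r p.1 p.2) :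
    ∃ δ > 0, δ ≤ 1 ∧ ∀ᶠ j in l, ∀ t ∈ Icc (t₀ - δ) (t₀ + δ), r j t := by
  obtain ⟨pl, hpl, pt, hpt, himp⟩ := eventually_prod_iff.1 h
  obtain ⟨δ, hδ, hball⟩ := Metric.nhds_basis_closedBall.eventually_iff.1 hpt
  refine ⟨min δ 1, lt_min hδ one_pos, min_le_right _ _, hpl.mono fun j hj t ht => ?_⟩
  rw [← Real.closedBall_eq_Icc] at ht
  exact himp hj (hball (Metric.closedBall_subset_closedBall (min_le_left _ _) ht))

lemma deriv_pos_of_lt_of_ne_zero {f f' : ℝ → ℝ} {a b : ℝ} (hab : a < b) (hf : Continuous f)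
    (hd : ∀ t ∈ Ioo a b, HasDerivAt f (f' t) t) (hne : ∀ t ∈ Ioo a b, f' t ≠ 0)
    (hlt : f a < f b) : ∀ t ∈ Ioo a b, 0 < f' t := by
  obtain ⟨c, hc, h_slope⟩ := exists_hasDerivAt_eq_slope f f' hab hf.continuousOn hd
  have hc_pos : 0 < f' c := h_slope ▸ div_pos (sub_pos.2 hlt) (sub_pos.2 hab)
  have h_sign := hasDerivWithinAt_forall_lt_or_forall_gt_of_forall_ne (convex_Ioo a b)
    (fun t ht => (hd t ht).hasDerivWithinAt) hne
  exact h_sign.resolve_left fun h_neg => (h_neg c hc).not_gt hc_pos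

lemma exists_tendsto_of_abs_le {ι : Type*} {U : Ultrafilter ι} {u : ι → ℝ} {K : ℝ}
    (hu : ∀ j, |u j| ≤ K) : ∃ l, Tendsto u U (nhds l) := by
  obtain ⟨l, -, hl⟩ := (isCompact_Icc (a := -K) (b := K)).ultrafilter_le_nhds (U.map u)
    (tendsto_principal.2 (.of_forall fun j => abs_le.1 (hu j)))
  exact ⟨l, hl⟩

namespace IsPenaltyLimit

variable {ι : Type*} {U : Ultrafilter ι} {x v q : ι → ℝ → ℝ} {n : ι → ℝ} {X V E : ℝ → ℝ}

lemma exists_of_bounded (hx : ∀ j t, HasDerivAt (x j) (v j t) t) (hvc : ∀ j, Continuous (v j))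
    (hv : ∀ j t, HasDerivWithinAt (v j) (-q j t + n j ^ 2 * max (-x j t) 0) (Ici t) t)
    (hn_pos : ∀ j, 0 < n j) (hn : Tendsto n U atTop)
    (hb : ∀ B : ℝ, ∃ K : ℝ, 0 < K ∧ ∀ j, ∀ t ∈ Icc (-B) B,
      IsPenaltyBound K (n j) (x j t) (v j t) (q j t)) :
    ∃ X V E, IsPenaltyLimit U x v q n X V E := by
  have h_lim : ∀ t, ∃ l₁ l₂ l₃, Tendsto (fun j => x j t) U (nhds l₁) ∧
      Tendsto (fun j => v j t) U (nhds l₂) ∧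
      Tendsto (fun j => wallEnergy (n j) (x j t) (v j t)) U (nhds l₃) := by
    intro t
    obtain ⟨K, -, hK⟩ := hb |t|
    have hKt := fun j => hK j t ⟨neg_abs_le t, le_abs_self t⟩
    obtain ⟨l₁, h₁⟩ := exists_tendsto_of_abs_le (U := U) fun j => (hKt j).abs_pos_le
    obtain ⟨l₂, h₂⟩ := exists_tendsto_of_abs_le (U := U) fun j => (hKt j).abs_vel_le
    obtain ⟨l₃, h₃⟩ := exists_tendsto_of_abs_le (U := U) fun j =>
      (abs_of_nonneg (wallEnergy_nonneg _ _ _)).trans_le ((hKt j).wallEnergy_le (hn_pos j).le)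
    exact ⟨l₁, l₂, l₃, h₁, h₂, h₃⟩
  choose X V E h using h_lim
  exact ⟨X, V, E, hx, hvc, hv, hn_pos, hn, hb, fun t => (h t).1, fun t => (h t).2.1,
    fun t => (h t).2.2⟩

lemma bounded_near (A : IsPenaltyLimit U x v q n X V E) (t₀ : ℝ) : ∃ K : ℝ, 0 < K ∧ ∀ j,
    ∀ t ∈ Icc (t₀ - 1) (t₀ + 1), IsPenaltyBound K (n j) (x j t) (v j t) (q j t) := by
  obtain ⟨K, hK, hb⟩ := A.bounded (|t₀| + 1)
  exact ⟨K, hK, fun j t ht => hb j t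
    ⟨by linarith [neg_abs_le t₀, ht.1], by linarith [le_abs_self t₀, ht.2]⟩⟩

lemma continuous_pos (A : IsPenaltyLimit U x v q n X V E) (j : ι) : Continuous (x j) :=
  continuous_iff_continuousAt.2 fun t => (A.hasDerivAt_pos j t).continuousAt

lemma nonneg (A : IsPenaltyLimit U x v q n X V E) (t : ℝ) : 0 ≤ X t := by
  obtain ⟨K, -, hb⟩ := A.bounded_near t
  have h_depth : Tendsto (fun j => -(K / n j)) U (nhds 0) := by
    simpa using (A.tendsto_stiffness.const_div_atTop K).neg
  refine le_of_tendsto_of_tendsto' h_depth (A.tendsto_pos t) fun j => ?_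
  have h_le : max (-x j t) 0 ≤ K / n j := by
    rw [le_div_iff₀' (A.stiffness_pos j)]
    exact (hb j t ⟨by linarith, by linarith⟩).penetration_le
  linarith [le_max_left (-x j t) 0]

lemma energy_nonneg (A : IsPenaltyLimit U x v q n X V E) (t : ℝ) : 0 ≤ E t :=
  ge_of_tendsto' (A.tendsto_energy t) fun _ => wallEnergy_nonneg _ _ _

lemma hasDerivWithinAt_wallEnergy (A : IsPenaltyLimit U x v q n X V E) (j : ι) (t : ℝ) :
    HasDerivWithinAt (fun t => wallEnergy (n j) (x j t) (v j t)) (-(v j t * q j t)) (Ici t) t := by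
  have h_kinetic := ((A.hasDerivWithinAt_vel j t).pow 2).div_const 2
  have h_spring := ((((hasDerivAt_max_neg_zero_sq (x j t)).comp t
    (A.hasDerivAt_pos j t)).const_mul (n j ^ 2)).div_const 2).hasDerivWithinAt (s := Ici t)
  convert! h_kinetic.add h_spring using 1
  simp only [Nat.cast_ofNat, Nat.add_one_sub_one, pow_one]
  ring

section Lipschitz

variable {K a b : ℝ}

lemma abs_sub_le (A : IsPenaltyLimit U x v q n X V E) {j : ι}
    (hb : ∀ t ∈ Icc a b, IsPenaltyBound K (n j) (x j t) (v j t) (q j t)) :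
    ∀ s ∈ Icc a b, ∀ t ∈ Icc a b, |x j t - x j s| ≤ K * |t - s| :=
  abs_sub_le_of_ordered fun _ hs _ ht hst => abs_sub_le_of_hasDerivAt (A.hasDerivAt_pos j) hst
    fun r hr => (hb r ⟨hs.1.trans hr.1, hr.2.trans ht.2⟩).abs_vel_le

lemma abs_wallEnergy_sub_le (A : IsPenaltyLimit U x v q n X V E) {j : ι}
    (hb : ∀ t ∈ Icc a b, IsPenaltyBound K (n j) (x j t) (v j t) (q j t)) :
    ∀ s ∈ Icc a b, ∀ t ∈ Icc a b,
      |wallEnergy (n j) (x j t) (v j t) - wallEnergy (n j) (x j s) (v j s)| ≤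
        K ^ 2 * |t - s| := by
  have h_cont : Continuous fun t => wallEnergy (n j) (x j t) (v j t) := by
    have hx := A.continuous_pos j
    have hv := A.continuous_vel j
    unfold wallEnergy
    fun_prop
  refine abs_sub_le_of_ordered (f := fun t => wallEnergy (n j) (x j t) (v j t))
    fun s hs t ht hst => ?_
  have h_power : ∀ r ∈ Ico s t, |v j r * q j r| ≤ K ^ 2 := by
    intro r hr
    have hbr := hb r ⟨hs.1.trans hr.1, hr.2.le.trans ht.2⟩
    rw [abs_mul, sq]
    exact mul_le_mul hbr.abs_vel_le hbr.abs_force_le (abs_nonneg _)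
      ((abs_nonneg _).trans hbr.abs_vel_le)
  have h_lower := le_sub_of_le_right_deriv (c := -K ^ 2) h_cont (A.hasDerivWithinAt_wallEnergy j)
    hst fun r hr => by linarith [(abs_le.1 (h_power r hr)).2]
  have h_upper := sub_le_of_right_deriv_le (c := K ^ 2) h_cont (A.hasDerivWithinAt_wallEnergy j)
    hst fun r hr => by linarith [(abs_le.1 (h_power r hr)).1]
  exact abs_le.2 ⟨by linarith, h_upper⟩

end Lipschitz

lemma continuous_limit (A : IsPenaltyLimit U x v q n X V E) : Continuous X := by
  refine continuous_iff_continuousAt.2 fun t₀ => ?_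
  obtain ⟨K, -, hb⟩ := A.bounded_near t₀
  refine continuousAt_of_locally_lipschitz one_pos K fun t ht => ?_
  rw [Real.dist_eq] at ht ⊢
  have ht' := abs_lt.1 ht
  exact le_of_tendsto' ((A.tendsto_pos t).sub (A.tendsto_pos t₀)).abs fun j =>
    A.abs_sub_le (hb j) t₀ ⟨by linarith, by linarith⟩ t ⟨by linarith, by linarith⟩

lemma continuous_energy (A : IsPenaltyLimit U x v q n X V E) : Continuous E := by
  refine continuous_iff_continuousAt.2 fun t₀ => ?_
  obtain ⟨K, -, hb⟩ := A.bounded_near t₀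
  refine continuousAt_of_locally_lipschitz one_pos (K ^ 2) fun t ht => ?_
  rw [Real.dist_eq] at ht ⊢
  have ht' := abs_lt.1 ht
  exact le_of_tendsto' ((A.tendsto_energy t).sub (A.tendsto_energy t₀)).abs fun j =>
    A.abs_wallEnergy_sub_le (hb j) t₀ ⟨by linarith, by linarith⟩ t ⟨by linarith, by linarith⟩

lemma tendsto_pos_prod (A : IsPenaltyLimit U x v q n X V E) (t₀ : ℝ) :
    Tendsto (fun p : ι × ℝ => x p.1 p.2) (U ×ˢ nhds t₀) (nhds (X t₀)) := by
  obtain ⟨K, -, hb⟩ := A.bounded_near t₀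
  have h_dist : Tendsto (fun p : ι × ℝ => K * |p.2 - t₀|) (U ×ˢ nhds t₀) (nhds 0) := by
    have h_cont : ContinuousAt (fun t => K * |t - t₀|) t₀ := by fun_prop
    simpa [ContinuousAt, Function.comp_def] using h_cont.tendsto.comp tendsto_snd
  have h_diff : Tendsto (fun p : ι × ℝ => x p.1 p.2 - x p.1 t₀) (U ×ˢ nhds t₀) (nhds 0) := by
    refine squeeze_zero_norm' ?_ h_dist
    filter_upwards [tendsto_snd.eventually
      (Icc_mem_nhds (show t₀ - 1 < t₀ by linarith) (show t₀ < t₀ + 1 by linarith))] with p hp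
    exact A.abs_sub_le (hb p.1) t₀ ⟨by linarith, by linarith⟩ p.2 hp
  simpa using h_diff.add ((A.tendsto_pos t₀).comp tendsto_fst)

lemma eventually_pos (A : IsPenaltyLimit U x v q n X V E) {t₀ : ℝ} (h₀ : 0 < X t₀) :
    ∃ δ > 0, δ ≤ 1 ∧ ∀ᶠ j in (U : Filter ι), ∀ t ∈ Icc (t₀ - δ) (t₀ + δ), 0 < x j t :=
  exists_Icc_of_eventually_prod_nhds ((A.tendsto_pos_prod t₀).eventually (lt_mem_nhds h₀))

lemma energy_eq (A : IsPenaltyLimit U x v q n X V E) {t : ℝ} (ht : 0 < X t) :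
    E t = V t ^ 2 / 2 := by
  refine tendsto_nhds_unique (A.tendsto_energy t)
    ((((A.tendsto_vel t).pow 2).div_const 2).congr' ?_)
  filter_upwards [(A.tendsto_pos t).eventually (lt_mem_nhds ht)] with j hj
  exact (wallEnergy_of_pos _ _ hj).symm

lemma abs_vel_eq (A : IsPenaltyLimit U x v q n X V E) {t : ℝ} (ht : 0 < X t) :
    |V t| = √(2 * E t) := by
  rw [A.energy_eq ht, mul_div_cancel₀ _ two_ne_zero, Real.sqrt_sq_eq_abs]

lemma hasDerivAt_limit (A : IsPenaltyLimit U x v q n X V E) {t₀ : ℝ} (h₀ : 0 < X t₀) :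
    HasDerivAt X (V t₀) t₀ := by
  obtain ⟨δ, hδ, hδ1, hpos⟩ := A.eventually_pos h₀
  obtain ⟨K, hK, hb⟩ := A.bounded_near t₀
  refine hasDerivAt_of_abs_sub_le_mul_sq (C := K) hδ fun t ht => ?_
  refine le_of_tendsto (((A.tendsto_pos t).sub (A.tendsto_pos t₀)).sub
    ((A.tendsto_vel t₀).mul_const (t - t₀))).abs ?_
  filter_upwards [hpos] with j hj
  have h_acc : ∀ r ∈ Icc (t₀ - δ) (t₀ + δ), |-q j r + n j ^ 2 * max (-x j r) 0| ≤ K := by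
    intro r hr
    rw [max_eq_right (by linarith [hj r hr]), mul_zero, add_zero, abs_neg]
    exact (hb j r ⟨by linarith [hr.1], by linarith [hr.2]⟩).abs_force_le
  have ht₀ : t₀ ∈ Icc (t₀ - δ) (t₀ + δ) := ⟨by linarith, by linarith⟩
  have h_lower := taylor_ge_of_le_right_deriv (A.hasDerivAt_pos j) (A.continuous_vel j)
    (A.hasDerivWithinAt_vel j) (fun r hr => (abs_le.1 (h_acc r hr)).1) ht₀ ht
  have h_upper := taylor_le_of_right_deriv_le (A.hasDerivAt_pos j) (A.continuous_vel j)
    (A.hasDerivWithinAt_vel j) (fun r hr => (abs_le.1 (h_acc r hr)).2) ht₀ ht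
  exact abs_le.2 ⟨by linarith [mul_nonneg hK.le (sq_nonneg (t - t₀))],
    by linarith [mul_nonneg hK.le (sq_nonneg (t - t₀))]⟩

section Contact

lemma virial_growth (A : IsPenaltyLimit U x v q n X V E) {a d K : ℝ} {j : ι} (hd : 0 ≤ d)
    (hb : ∀ t ∈ Icc a (a + d), IsPenaltyBound K (n j) (x j t) (v j t) (q j t)) :
    (2 * (wallEnergy (n j) (x j a) (v j a) - K ^ 2 * d) - K * (|x j a| + K * d) -
        2 * K ^ 2 / n j) * d ≤
      (x j (a + d) * v j (a + d) + 2 * (K / n j) * v j (a + d)) -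
        (x j a * v j a + 2 * (K / n j) * v j a) := by
  have h_cont : Continuous fun t => x j t * v j t + 2 * (K / n j) * v j t := by
    have hx := A.continuous_pos j
    have hv := A.continuous_vel j
    fun_prop
  have h_deriv := fun t => ((A.hasDerivAt_pos j t).hasDerivWithinAt.mul
    (A.hasDerivWithinAt_vel j t)).add ((A.hasDerivWithinAt_vel j t).const_mul (2 * (K / n j)))
  have ha : a ∈ Icc a (a + d) := left_mem_Icc.2 (by linarith)
  have hK : 0 ≤ K := (abs_nonneg _).trans (hb a ha).abs_pos_le
  suffices h_rate : ∀ t ∈ Ico a (a + d),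
      2 * (wallEnergy (n j) (x j a) (v j a) - K ^ 2 * d) - K * (|x j a| + K * d) -
          2 * K ^ 2 / n j ≤
        v j t * v j t + x j t * (-q j t + n j ^ 2 * max (-x j t) 0) +
          2 * (K / n j) * (-q j t + n j ^ 2 * max (-x j t) 0) by
    simpa using le_sub_of_le_right_deriv h_cont h_deriv (by linarith) h_rate
  intro t ht
  have htI : t ∈ Icc a (a + d) := Ico_subset_Icc_self ht
  have h_time : |t - a| ≤ d := abs_le.2 ⟨by linarith [ht.1], by linarith [ht.2]⟩
  have h_energy : wallEnergy (n j) (x j a) (v j a) - K ^ 2 * d ≤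
      wallEnergy (n j) (x j t) (v j t) := by
    have h_lip := (abs_le.1 (A.abs_wallEnergy_sub_le hb a ha t htI)).1
    nlinarith [sq_nonneg K]
  have h_pos : |x j t| ≤ |x j a| + K * d := by
    have h_lip := (abs_sub_abs_le_abs_sub _ _).trans (A.abs_sub_le hb a ha t htI)
    nlinarith
  have h_virial := (hb t htI).two_mul_wallEnergy_sub_le (A.stiffness_pos j)
  have h_mul := mul_le_mul_of_nonneg_left h_pos hK
  linarith

lemma energy_eq_zero_of_sticking (A : IsPenaltyLimit U x v q n X V E) {a b : ℝ} (hab : a < b)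
    (h₀ : ∀ t ∈ Icc a b, X t = 0) : E a = 0 := by
  by_contra hne
  have hE : 0 < E a := (A.energy_nonneg a).lt_of_ne' hne
  obtain ⟨K, hK, hb⟩ := A.bounded_near a
  let d := min (min 1 (b - a)) (E a / (2 * K ^ 2))
  have hd : 0 < d := lt_min (lt_min one_pos (sub_pos.2 hab)) (by positivity)
  have hd_one : d ≤ 1 := (min_le_left _ _).trans (min_le_left _ _)
  have hd_length : d ≤ b - a := (min_le_left _ _).trans (min_le_right _ _)
  have hd_energy : d * (2 * K ^ 2) ≤ E a := (le_div_iff₀ (by positivity)).1 (min_le_right _ _)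
  have h_inv (c : ℝ) : Tendsto (fun j => c / n j) U (nhds 0) :=
    A.tendsto_stiffness.const_div_atTop c
  have h_virial_tendsto (t : ℝ) (ht : X t = 0) :
      Tendsto (fun j => x j t * v j t + 2 * (K / n j) * v j t) U (nhds 0) := by
    simpa [ht] using ((A.tendsto_pos t).mul (A.tendsto_vel t)).add
      (((h_inv K).const_mul 2).mul (A.tendsto_vel t))
  have h_left := (((((A.tendsto_energy a).sub_const (K ^ 2 * d)).const_mul 2).sub
    (((A.tendsto_pos a).abs.add_const (K * d)).const_mul K)).sub (h_inv (2 * K ^ 2))).mul_const d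
  have h_right := (h_virial_tendsto (a + d) (h₀ _ ⟨by linarith, by linarith⟩)).sub
    (h_virial_tendsto a (h₀ a (left_mem_Icc.2 hab.le)))
  have h_le := le_of_tendsto_of_tendsto' h_left h_right fun j => A.virial_growth hd.le
    fun t ht => hb j t ⟨by linarith [ht.1], by linarith [ht.2]⟩
  rw [h₀ a (left_mem_Icc.2 hab.le), abs_zero, sub_zero, sub_zero] at h_le
  have h_nonpos := nonpos_of_mul_nonpos_left h_le hd
  linarith

lemma exists_energy_eq_zero (A : IsPenaltyLimit U x v q n X V E) {a b : ℝ} (hab : a < b)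
    (ha : X a = 0) (hb : X b = 0) : ∃ m ∈ Icc a b, E m = 0 := by
  by_cases h_stick : ∀ t ∈ Icc a b, X t = 0
  · exact ⟨a, left_mem_Icc.2 hab.le, A.energy_eq_zero_of_sticking hab h_stick⟩
  push Not at h_stick
  obtain ⟨s, hs, hXs⟩ := h_stick
  obtain ⟨m, hm, hmax⟩ := isCompact_Icc.exists_isMaxOn (nonempty_Icc.2 hab.le)
    A.continuous_limit.continuousOn
  have hXm : 0 < X m := ((A.nonneg s).lt_of_ne' hXs).trans_le (hmax hs)
  have hma : a < m := hm.1.lt_of_ne (by rintro rfl; linarith)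
  have hmb : m < b := hm.2.lt_of_ne (by rintro rfl; linarith)
  have hV : V m = 0 := (hmax.isLocalMax (Icc_mem_nhds hma hmb)).hasDerivAt_eq_zero
    (A.hasDerivAt_limit hXm)
  exact ⟨m, hm, by simp [A.energy_eq hXm, hV]⟩

variable {t₀ : ℝ}

lemma exists_isolated (A : IsPenaltyLimit U x v q n X V E) (h₀ : X t₀ = 0) (hE : 0 < E t₀) :
    ∃ δ > 0, ∀ t ∈ Icc (t₀ - δ) (t₀ + δ), 0 < E t ∧ (t ≠ t₀ → 0 < X t) := by
  obtain ⟨δ, hδ, hE_pos⟩ := Metric.nhds_basis_closedBall.eventually_iff.1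
    (A.continuous_energy.continuousAt.eventually (lt_mem_nhds hE))
  simp only [Real.closedBall_eq_Icc] at hE_pos
  refine ⟨δ, hδ, fun t ht => ⟨hE_pos ht, fun hne => (A.nonneg t).lt_of_ne' fun hXt => ?_⟩⟩
  rcases hne.lt_or_gt with hlt | hlt
  · obtain ⟨m, hm, hm_zero⟩ := A.exists_energy_eq_zero hlt hXt h₀
    exact (hE_pos ⟨ht.1.trans hm.1, by linarith [hm.2]⟩).ne' hm_zero
  · obtain ⟨m, hm, hm_zero⟩ := A.exists_energy_eq_zero hlt h₀ hXt
    exact (hE_pos ⟨by linarith [hm.1], hm.2.trans ht.2⟩).ne' hm_zero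

lemma eventually_pos_of_energy_pos (A : IsPenaltyLimit U x v q n X V E) (h₀ : X t₀ = 0)
    (hE : 0 < E t₀) : ∀ᶠ s in nhdsWithin t₀ {t₀}ᶜ, 0 < X s := by
  obtain ⟨δ, hδ, h⟩ := A.exists_isolated h₀ hE
  rw [eventually_nhdsWithin_iff]
  filter_upwards [Icc_mem_nhds (show t₀ - δ < t₀ by linarith) (show t₀ < t₀ + δ by linarith)]
    with t ht hne
  exact (h t ht).2 hne

lemma abs_sub_le_sqrt_energy (A : IsPenaltyLimit U x v q n X V E) {K t : ℝ}
    (hb : ∀ j, ∀ t ∈ Icc (t₀ - 1) (t₀ + 1), IsPenaltyBound K (n j) (x j t) (v j t) (q j t))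
    (ht : t ∈ Icc (t₀ - 1) (t₀ + 1)) :
    |X t - X t₀| ≤ √(2 * E t₀ + 2 * K ^ 2 * |t - t₀|) * |t - t₀| := by
  have ht₀ : t₀ ∈ Icc (t₀ - 1) (t₀ + 1) := ⟨by linarith, by linarith⟩
  refine le_of_tendsto_of_tendsto' ((A.tendsto_pos t).sub (A.tendsto_pos t₀)).abs
    ((((A.tendsto_energy t₀).const_mul 2).add_const (2 * K ^ 2 * |t - t₀|)).sqrt.mul_const
      |t - t₀|) fun j => ?_
  have h_vel : ∀ r ∈ uIcc t₀ t,
      |v j r| ≤ √(2 * wallEnergy (n j) (x j t₀) (v j t₀) + 2 * K ^ 2 * |t - t₀|) := by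
    intro r hr
    have h_energy := (abs_le.1 (A.abs_wallEnergy_sub_le (hb j) t₀ ht₀ r
      (uIcc_subset_Icc ht₀ ht hr))).2
    have h_time : K ^ 2 * |r - t₀| ≤ K ^ 2 * |t - t₀| :=
      mul_le_mul_of_nonneg_left (abs_sub_left_of_mem_uIcc hr) (sq_nonneg K)
    exact Real.abs_le_sqrt (by linarith [sq_le_two_mul_wallEnergy (n j) (x j r) (v j r)])
  simpa only [Real.norm_eq_abs] using
    (convex_uIcc t₀ t).norm_image_sub_le_of_norm_hasDerivWithin_le
      (fun r _ => (A.hasDerivAt_pos j r).hasDerivWithinAt) h_vel left_mem_uIcc right_mem_uIcc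

lemma hasDerivAt_zero_of_energy_eq_zero (A : IsPenaltyLimit U x v q n X V E) (hE : E t₀ = 0) :
    HasDerivAt X 0 t₀ := by
  obtain ⟨K, -, hb⟩ := A.bounded_near t₀
  rw [hasDerivAt_iff_isLittleO, Asymptotics.isLittleO_iff]
  intro c hc
  have h_small : Tendsto (fun t => √(2 * E t₀ + 2 * K ^ 2 * |t - t₀|)) (nhds t₀) (nhds 0) := by
    have h_cont : ContinuousAt (fun t => √(2 * E t₀ + 2 * K ^ 2 * |t - t₀|)) t₀ := by fun_prop
    simpa [ContinuousAt, hE] using h_cont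
  filter_upwards [h_small.eventually (gt_mem_nhds hc),
    Icc_mem_nhds (show t₀ - 1 < t₀ by linarith) (show t₀ < t₀ + 1 by linarith)] with t hct ht
  simp only [smul_zero, sub_zero, Real.norm_eq_abs]
  exact (A.abs_sub_le_sqrt_energy hb ht).trans
    (mul_le_mul_of_nonneg_right hct.le (abs_nonneg _))

lemma hasDerivWithinAt_right (A : IsPenaltyLimit U x v q n X V E) (h₀ : X t₀ = 0)
    (hE : 0 < E t₀) : HasDerivWithinAt X (√(2 * E t₀)) (Ici t₀) t₀ := by
  obtain ⟨δ, hδ, h⟩ := A.exists_isolated h₀ hE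
  have h_pos : ∀ t ∈ Ioc t₀ (t₀ + δ), 0 < E t ∧ 0 < X t := fun t ht =>
    have ht' := h t ⟨by linarith [ht.1], ht.2⟩
    ⟨ht'.1, ht'.2 ht.1.ne'⟩
  have hd : ∀ t ∈ Ioo t₀ (t₀ + δ), HasDerivAt X (V t) t := fun t ht =>
    A.hasDerivAt_limit (h_pos t (Ioo_subset_Ioc_self ht)).2
  have hV : ∀ t ∈ Ioo t₀ (t₀ + δ), |V t| = √(2 * E t) := fun t ht =>
    A.abs_vel_eq (h_pos t (Ioo_subset_Ioc_self ht)).2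
  have hV_pos : ∀ t ∈ Ioo t₀ (t₀ + δ), 0 < V t :=
    deriv_pos_of_lt_of_ne_zero (by linarith) A.continuous_limit hd
      (fun t ht => abs_pos.1 ((hV t ht).symm ▸ Real.sqrt_pos.2
        (mul_pos two_pos (h_pos t (Ioo_subset_Ioc_self ht)).1)))
      (h₀ ▸ (h_pos (t₀ + δ) ⟨by linarith, le_rfl⟩).2)
  refine hasDerivWithinAt_Ici_of_tendsto_deriv
    (fun t ht => (hd t ht).differentiableAt.differentiableWithinAt)
    A.continuous_limit.continuousWithinAt (Ioo_mem_nhdsGT (by linarith)) ?_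
  have h_lim : Tendsto (fun t => √(2 * E t)) (nhdsWithin t₀ (Ioi t₀)) (nhds √(2 * E t₀)) :=
    ((A.continuous_energy.const_mul 2).sqrt.tendsto t₀).mono_left nhdsWithin_le_nhds
  refine h_lim.congr' ?_
  filter_upwards [Ioo_mem_nhdsGT (show t₀ < t₀ + δ by linarith)] with t ht
  rw [(hd t ht).deriv, ← hV t ht, abs_of_pos (hV_pos t ht)]

lemma hasDerivWithinAt_left (A : IsPenaltyLimit U x v q n X V E) (h₀ : X t₀ = 0)
    (hE : 0 < E t₀) : HasDerivWithinAt X (-√(2 * E t₀)) (Iic t₀) t₀ := by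
  obtain ⟨δ, hδ, h⟩ := A.exists_isolated h₀ hE
  have h_pos : ∀ t ∈ Ico (t₀ - δ) t₀, 0 < E t ∧ 0 < X t := fun t ht =>
    have ht' := h t ⟨ht.1, by linarith [ht.2]⟩
    ⟨ht'.1, ht'.2 ht.2.ne⟩
  have hd : ∀ t ∈ Ioo (t₀ - δ) t₀, HasDerivAt X (V t) t := fun t ht =>
    A.hasDerivAt_limit (h_pos t (Ioo_subset_Ico_self ht)).2
  have hV : ∀ t ∈ Ioo (t₀ - δ) t₀, |V t| = √(2 * E t) := fun t ht =>
    A.abs_vel_eq (h_pos t (Ioo_subset_Ico_self ht)).2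
  have hV_neg : ∀ t ∈ Ioo (t₀ - δ) t₀, 0 < -V t :=
    deriv_pos_of_lt_of_ne_zero (f := fun t => -X t) (by linarith) A.continuous_limit.neg
      (fun t ht => (hd t ht).neg)
      (fun t ht => neg_ne_zero.2 (abs_pos.1 ((hV t ht).symm ▸ Real.sqrt_pos.2
        (mul_pos two_pos (h_pos t (Ioo_subset_Ico_self ht)).1))))
      (neg_lt_neg (h₀ ▸ (h_pos (t₀ - δ) ⟨le_rfl, by linarith⟩).2))
  refine hasDerivWithinAt_Iic_of_tendsto_deriv
    (fun t ht => (hd t ht).differentiableAt.differentiableWithinAt)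
    A.continuous_limit.continuousWithinAt (Ioo_mem_nhdsLT (by linarith)) ?_
  have h_lim : Tendsto (fun t => -√(2 * E t)) (nhdsWithin t₀ (Iio t₀)) (nhds (-√(2 * E t₀))) :=
    ((A.continuous_energy.const_mul 2).sqrt.neg.tendsto t₀).mono_left nhdsWithin_le_nhds
  refine h_lim.congr' ?_
  filter_upwards [Ioo_mem_nhdsLT (show t₀ - δ < t₀ by linarith)] with t ht
  rw [(hd t ht).deriv, ← hV t ht, abs_of_neg (neg_pos.1 (hV_neg t ht)), neg_neg]

end Contact

section LimitForce

variable {t₀ P : ℝ}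

lemma hasDerivAt_vel (A : IsPenaltyLimit U x v q n X V E) (h₀ : 0 < X t₀)
    (hq : Tendsto (fun p : ι × ℝ => q p.1 p.2) (U ×ˢ nhds t₀) (nhds P)) :
    HasDerivAt V (-P) t₀ := by
  rw [hasDerivAt_iff_isLittleO, Asymptotics.isLittleO_iff]
  intro c hc
  obtain ⟨δ, hδ, -, h_near⟩ := exists_Icc_of_eventually_prod_nhds
    (r := fun j t => 0 < x j t ∧ |q j t - P| < c)
    (((A.tendsto_pos_prod t₀).eventually (lt_mem_nhds h₀)).and
      (hq.eventually (Metric.ball_mem_nhds P hc)))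
  filter_upwards [Icc_mem_nhds (show t₀ - δ < t₀ by linarith) (show t₀ < t₀ + δ by linarith)]
    with t ht
  refine le_of_tendsto (((A.tendsto_vel t).sub (A.tendsto_vel t₀)).sub_const
    ((t - t₀) * -P)).norm ?_
  filter_upwards [h_near] with j hj
  have h_deriv : ∀ r, HasDerivWithinAt (fun t => v j t + t * P)
      (-q j r + n j ^ 2 * max (-x j r) 0 + 1 * P) (Ici r) r := fun r =>
    (A.hasDerivWithinAt_vel j r).add ((hasDerivAt_id r).mul_const P).hasDerivWithinAt
  have h_cont : Continuous fun t => v j t + t * P := by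
    have hv := A.continuous_vel j
    fun_prop
  have h_bound : ∀ r ∈ Icc (t₀ - δ) (t₀ + δ),
      |-q j r + n j ^ 2 * max (-x j r) 0 + 1 * P| ≤ c := by
    intro r hr
    rw [max_eq_right (by linarith [(hj r hr).1]), mul_zero, add_zero, one_mul, neg_add_eq_sub,
      abs_sub_comm]
    exact (hj r hr).2.le
  have h_lip := abs_sub_le_of_ordered (f := fun t => v j t + t * P) (C := c)
    (a := t₀ - δ) (b := t₀ + δ) (fun s hs r hr hsr => ?_) t₀ ⟨by linarith, by linarith⟩ t ht
  · simp only [Real.norm_eq_abs]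
    convert! h_lip using 2
    ring
  have h_sub : ∀ u ∈ Ico s r, u ∈ Icc (t₀ - δ) (t₀ + δ) := fun u hu =>
    ⟨hs.1.trans hu.1, hu.2.le.trans hr.2⟩
  have h_lower := le_sub_of_le_right_deriv (c := -c) h_cont h_deriv hsr
    fun u hu => (abs_le.1 (h_bound u (h_sub u hu))).1
  exact abs_le.2 ⟨by linarith, sub_le_of_right_deriv_le h_cont h_deriv hsr
    fun u hu => (abs_le.1 (h_bound u (h_sub u hu))).2⟩

lemma force_nonneg_of_sticking (A : IsPenaltyLimit U x v q n X V E) {a b : ℝ}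
    (ht₀ : t₀ ∈ Ioo a b) (h₀ : ∀ t ∈ Ioo a b, X t = 0)
    (hq : Tendsto (fun p : ι × ℝ => q p.1 p.2) (U ×ˢ nhds t₀) (nhds P)) : 0 ≤ P := by
  by_contra! hP
  obtain ⟨δ, hδ, -, h_near⟩ := exists_Icc_of_eventually_prod_nhds
    (r := fun j t => q j t < P / 2 ∧ t ∈ Ioo a b)
    ((hq.eventually (gt_mem_nhds (by linarith))).and
      (tendsto_snd.eventually (Ioo_mem_nhds ht₀.1 ht₀.2)))
  obtain ⟨j₀, hj₀⟩ := h_near.exists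
  have h_left : t₀ - δ ∈ Icc (t₀ - δ) (t₀ + δ) := ⟨le_rfl, by linarith⟩
  have h_mid : t₀ ∈ Icc (t₀ - δ) (t₀ + δ) := ⟨by linarith, by linarith⟩
  have h_right : t₀ + δ ∈ Icc (t₀ - δ) (t₀ + δ) := ⟨by linarith, le_rfl⟩
  have h_lim := ((A.tendsto_pos (t₀ + δ)).add (A.tendsto_pos (t₀ - δ))).sub
    ((A.tendsto_pos t₀).const_mul 2)
  rw [h₀ _ ht₀, h₀ _ (hj₀ _ h_right).2, h₀ _ (hj₀ _ h_left).2] at h_lim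
  have h_convex : ∀ᶠ j in (U : Filter ι),
      -P / 2 * δ ^ 2 ≤ x j (t₀ + δ) + x j (t₀ - δ) - 2 * x j t₀ := by
    filter_upwards [h_near] with j hj
    have h_acc : ∀ r ∈ Icc (t₀ - δ) (t₀ + δ), -P / 2 ≤ -q j r + n j ^ 2 * max (-x j r) 0 := by
      intro r hr
      have h_spring : 0 ≤ n j ^ 2 * max (-x j r) 0 := by positivity
      linarith [(hj r hr).1]
    have h_taylor := fun t => taylor_ge_of_le_right_deriv (A.hasDerivAt_pos j)
      (A.continuous_vel j) (A.hasDerivWithinAt_vel j) h_acc h_mid (t := t)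
    have h_taylor_left := h_taylor _ h_left
    have h_taylor_right := h_taylor _ h_right
    rw [sub_sub_cancel_left, neg_sq] at h_taylor_left
    rw [add_sub_cancel_left] at h_taylor_right
    linarith
  have h_le := ge_of_tendsto h_lim h_convex
  nlinarith [pow_pos hδ 2]

end LimitForce

end IsPenaltyLimit

end PenaltyLimit

section SturmComparison

variable {ι : Type*} {U : Ultrafilter ι} {x v q : ι → ℝ → ℝ} {n : ι → ℝ} {X V E : ℝ → ℝ}

/-- The forces `q` dominate the linear force `μ * x⁺` up to an error that vanishes along `U`,
uniformly on compact time intervals. -/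
def ForceAsymptoticallyGE (U : Ultrafilter ι) (x q : ι → ℝ → ℝ) (μ : ℝ) : Prop :=
  ∀ B : ℝ, ∀ ε > 0, ∀ᶠ j in (U : Filter ι), ∀ t ∈ Icc (-B) B, μ * max (x j t) 0 - ε ≤ q j t

/-- The forces `q` are dominated by the linear force `μ * x⁺` up to an error that vanishes along
`U`, uniformly on compact time intervals. -/
def ForceAsymptoticallyLE (U : Ultrafilter ι) (x q : ι → ℝ → ℝ) (μ : ℝ) : Prop :=
  ∀ B : ℝ, ∀ ε > 0, ∀ᶠ j in (U : Filter ι), ∀ t ∈ Icc (-B) B, q j t ≤ μ * max (x j t) 0 + ε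

/-- Wronskian of `x`, with velocity `v`, and the solution `sin (ω * (t - s))` of
`y'' + ω ^ 2 * y = 0`. -/
noncomputable def sineWronskian (ω s : ℝ) (x v : ℝ → ℝ) (t : ℝ) : ℝ :=
  v t * sin (ω * (t - s)) - x t * (ω * cos (ω * (t - s)))

lemma Icc_subset_Icc_abs_add_abs (a b : ℝ) : Icc a b ⊆ Icc (-(|a| + |b|)) (|a| + |b|) :=
  Icc_subset_Icc (by linarith [neg_abs_le a, abs_nonneg b])
    (by linarith [le_abs_self b, abs_nonneg a])

lemma le_of_eventually_right_deriv_le {F F' : ι → ℝ → ℝ} {a b ya yb : ℝ}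
    (hF : ∀ j, Continuous (F j)) (hd : ∀ j t, HasDerivWithinAt (F j) (F' j t) (Ici t) t)
    (ha : Tendsto (fun j => F j a) U (nhds ya)) (hb : Tendsto (fun j => F j b) U (nhds yb))
    (hab : a ≤ b) (hle : ∀ ε > 0, ∀ᶠ j in (U : Filter ι), ∀ t ∈ Icc a b, F' j t ≤ ε) :
    yb ≤ ya := by
  have h_slope : ∀ ε > 0, yb - ya ≤ ε * (b - a) := fun ε hε =>
    le_of_tendsto (hb.sub ha) ((hle ε hε).mono fun j hj =>
      sub_le_of_right_deriv_le (hF j) (hd j) hab fun t ht => hj t (Ico_subset_Icc_self ht))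
  have h_lim : Tendsto (fun ε => ε * (b - a)) (nhdsWithin 0 (Ioi 0)) (nhds (0 * (b - a))) :=
    (tendsto_id.mono_left nhdsWithin_le_nhds).mul_const _
  rw [zero_mul] at h_lim
  exact sub_nonpos.1 (ge_of_tendsto h_lim (eventually_mem_nhdsWithin.mono h_slope))

lemma hasDerivAt_mul_sub (ω s t : ℝ) : HasDerivAt (fun t => ω * (t - s)) ω t := by
  simpa using ((hasDerivAt_id t).sub_const s).const_mul ω

lemma neg_energy_rate_le {K n x v q μ₁ μ₂ ε : ℝ} (hμ₁ : 0 ≤ μ₁) (hμ₂ : 0 ≤ μ₂) (hε : 0 ≤ ε)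
    (hb : IsPenaltyBound K n x v q) (hq₁ : μ₁ * max x 0 - ε ≤ q) (hq₂ : q ≤ μ₂ * max x 0 + ε) :
    -(-(v * q) + max x 0 * v + (wallEnergy n x v + max x 0 ^ 2 / 2) * (μ₂ + 1)) ≤ ε * K := by
  have hx : 0 ≤ max x 0 := le_max_right _ _
  have h_force : |q| ≤ μ₂ * max x 0 + ε :=
    abs_le.2 ⟨by linarith [mul_nonneg hμ₁ hx, mul_nonneg hμ₂ hx], hq₂⟩
  have h_power : v * q ≤ |v| * (μ₂ * max x 0 + ε) :=
    ((le_abs_self _).trans_eq (abs_mul v q)).trans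
      (mul_le_mul_of_nonneg_left h_force (abs_nonneg v))
  have h_soft : -(max x 0 * v) ≤ |v| * max x 0 := by nlinarith [neg_abs_le v]
  have h_young : |v| * max x 0 ≤ wallEnergy n x v + max x 0 ^ 2 / 2 := by
    linarith [two_mul_le_add_sq |v| (max x 0), sq_abs v, sq_le_two_mul_wallEnergy n x v]
  have h_error : |v| * ε ≤ K * ε := mul_le_mul_of_nonneg_right hb.abs_vel_le hε
  have h_young_mul := mul_le_mul_of_nonneg_right h_young (show 0 ≤ μ₂ + 1 by linarith)
  linarith

namespace IsPenaltyLimit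

lemma tendsto_energy_add_sq (A : IsPenaltyLimit U x v q n X V E) (t : ℝ) :
    Tendsto (fun j => wallEnergy (n j) (x j t) (v j t) + max (x j t) 0 ^ 2 / 2) U
      (nhds (E t + X t ^ 2 / 2)) := by
  have h_max := (A.tendsto_pos t).max (tendsto_const_nhds (x := (0 : ℝ)))
  rw [max_eq_left (A.nonneg t)] at h_max
  exact (A.tendsto_energy t).add ((h_max.pow 2).div_const 2)

lemma energy_add_sq_le (A : IsPenaltyLimit U x v q n X V E) {μ₁ μ₂ : ℝ} (hμ₁ : 0 ≤ μ₁)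
    (hμ₂ : 0 ≤ μ₂) (hq₁ : ForceAsymptoticallyGE U x q μ₁) (hq₂ : ForceAsymptoticallyLE U x q μ₂)
    {T : ℝ} (hT : 0 ≤ T) :
    E 0 + X 0 ^ 2 / 2 ≤ (E T + X T ^ 2 / 2) * exp ((μ₂ + 1) * T) := by
  let G : ι → ℝ → ℝ := fun j t => wallEnergy (n j) (x j t) (v j t) + max (x j t) 0 ^ 2 / 2
  let G' : ι → ℝ → ℝ := fun j t => -(v j t * q j t) + max (x j t) 0 * v j t
  have hG_cont : ∀ j, Continuous (G j) := fun j => by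
    have hx := A.continuous_pos j
    have hv := A.continuous_vel j
    unfold G wallEnergy
    fun_prop
  have hG_deriv : ∀ j t, HasDerivWithinAt (G j) (G' j t) (Ici t) t := fun j t => by
    convert! (A.hasDerivWithinAt_wallEnergy j t).add (((hasDerivAt_max_zero_sq (x j t)).comp t
      (A.hasDerivAt_pos j t)).div_const 2).hasDerivWithinAt using 1
    ring
  have h_exp : ∀ t, HasDerivWithinAt (fun t => exp ((μ₂ + 1) * t))
      (exp ((μ₂ + 1) * t) * (μ₂ + 1)) (Ici t) t := fun t => by
    simpa using (((hasDerivAt_id t).const_mul (μ₂ + 1)).exp).hasDerivWithinAt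
  suffices h_le : -((E T + X T ^ 2 / 2) * exp ((μ₂ + 1) * T)) ≤
      -((E 0 + X 0 ^ 2 / 2) * exp ((μ₂ + 1) * 0)) by
    simpa using h_le
  refine le_of_eventually_right_deriv_le (F := fun j t => -(G j t * exp ((μ₂ + 1) * t)))
    (fun j => ((hG_cont j).mul (by fun_prop)).neg)
    (fun j t => ((hG_deriv j t).mul (h_exp t)).neg)
    ((A.tendsto_energy_add_sq 0).mul_const _).neg
    ((A.tendsto_energy_add_sq T).mul_const _).neg hT fun ε hε => ?_
  obtain ⟨K, hK, hb⟩ := A.bounded T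
  let ε' := ε / (K * exp ((μ₂ + 1) * T))
  have hε' : 0 < ε' := by positivity
  filter_upwards [hq₁ T ε' hε', hq₂ T ε' hε'] with j hj₁ hj₂ t ht
  have htT : t ∈ Icc (-T) T := ⟨by linarith [ht.1], ht.2⟩
  have h_rate : -(G' j t + G j t * (μ₂ + 1)) ≤ ε' * K :=
    neg_energy_rate_le hμ₁ hμ₂ hε'.le (hb j t htT) (hj₁ t htT) (hj₂ t htT)
  calc -(G' j t * exp ((μ₂ + 1) * t) + G j t * (exp ((μ₂ + 1) * t) * (μ₂ + 1)))
      = -(G' j t + G j t * (μ₂ + 1)) * exp ((μ₂ + 1) * t) := by ring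
    _ ≤ ε' * K * exp ((μ₂ + 1) * T) := by gcongr; exact ht.2
    _ = ε := by unfold ε'; field_simp

lemma eventually_pos_on_Icc (A : IsPenaltyLimit U x v q n X V E) {a b : ℝ}
    (hpos : ∀ t ∈ Icc a b, 0 < X t) : ∀ᶠ j in (U : Filter ι), ∀ t ∈ Icc a b, 0 < x j t := by
  have h_nhdsSet : {p : ι × ℝ | 0 < x p.1 p.2} ∈ (U : Filter ι) ×ˢ nhdsSet (Icc a b) :=
    isCompact_Icc.mem_prod_nhdsSet_of_forall fun t ht =>
      (A.tendsto_pos_prod t).eventually (lt_mem_nhds (hpos t ht))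
  obtain ⟨pU, hpU, pt, hpt, himp⟩ := eventually_prod_iff.1 h_nhdsSet
  exact hpU.mono fun j hj t ht => himp hj (hpt.self_of_nhdsSet t ht)

section Wronskian

variable {ω s a b : ℝ}

lemma hasDerivWithinAt_sineWronskian (A : IsPenaltyLimit U x v q n X V E) (ω s : ℝ) (j : ι)
    (t : ℝ) : HasDerivWithinAt (sineWronskian ω s (x j) (v j))
      ((-q j t + n j ^ 2 * max (-x j t) 0 + ω ^ 2 * x j t) * sin (ω * (t - s))) (Ici t) t := by
  have h_phase := hasDerivAt_mul_sub ω s t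
  convert! ((A.hasDerivWithinAt_vel j t).mul h_phase.sin.hasDerivWithinAt).sub
    ((A.hasDerivAt_pos j t).mul (h_phase.cos.const_mul ω)).hasDerivWithinAt using 1
  ring

lemma continuous_sineWronskian (A : IsPenaltyLimit U x v q n X V E) (ω s : ℝ) (j : ι) :
    Continuous (sineWronskian ω s (x j) (v j)) := by
  have hx := A.continuous_pos j
  have hv := A.continuous_vel j
  unfold sineWronskian
  fun_prop

lemma tendsto_sineWronskian (A : IsPenaltyLimit U x v q n X V E) (ω s t : ℝ) :
    Tendsto (fun j => sineWronskian ω s (x j) (v j) t) U (nhds (sineWronskian ω s X V t)) :=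
  ((A.tendsto_vel t).mul_const _).sub ((A.tendsto_pos t).mul_const _)

lemma sineWronskian_anti (A : IsPenaltyLimit U x v q n X V E)
    (hq : ForceAsymptoticallyGE U x q (ω ^ 2)) (hab : a ≤ b) (hpos : ∀ t ∈ Icc a b, 0 < X t)
    (hsin : ∀ t ∈ Icc a b, 0 ≤ sin (ω * (t - s))) :
    sineWronskian ω s X V b ≤ sineWronskian ω s X V a := by
  refine le_of_eventually_right_deriv_le (A.continuous_sineWronskian ω s)
    (A.hasDerivWithinAt_sineWronskian ω s) (A.tendsto_sineWronskian ω s a)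
    (A.tendsto_sineWronskian ω s b) hab fun ε hε => ?_
  filter_upwards [A.eventually_pos_on_Icc hpos, hq (|a| + |b|) ε hε] with j hx hj t ht
  have hqt := hj t (Icc_subset_Icc_abs_add_abs a b ht)
  rw [max_eq_left (hx t ht).le] at hqt
  rw [max_eq_right (neg_nonpos.2 (hx t ht).le), mul_zero, add_zero]
  exact (mul_le_mul (by linarith) (sin_le_one _) (hsin t ht) hε.le).trans_eq (mul_one ε)

lemma sineWronskian_mono (A : IsPenaltyLimit U x v q n X V E)
    (hq : ForceAsymptoticallyLE U x q (ω ^ 2)) (hab : a ≤ b) (hpos : ∀ t ∈ Icc a b, 0 < X t)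
    (hsin : ∀ t ∈ Icc a b, 0 ≤ sin (ω * (t - s))) :
    sineWronskian ω s X V a ≤ sineWronskian ω s X V b := by
  refine neg_le_neg_iff.1 (le_of_eventually_right_deriv_le
    (fun j => (A.continuous_sineWronskian ω s j).neg)
    (fun j t => (A.hasDerivWithinAt_sineWronskian ω s j t).neg)
    (A.tendsto_sineWronskian ω s a).neg (A.tendsto_sineWronskian ω s b).neg hab fun ε hε => ?_)
  filter_upwards [A.eventually_pos_on_Icc hpos, hq (|a| + |b|) ε hε] with j hx hj t ht
  have hqt := hj t (Icc_subset_Icc_abs_add_abs a b ht)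
  rw [max_eq_left (hx t ht).le] at hqt
  rw [max_eq_right (neg_nonpos.2 (hx t ht).le), mul_zero, add_zero, ← neg_mul]
  exact (mul_le_mul (by linarith) (sin_le_one _) (hsin t ht) hε.le).trans_eq (mul_one ε)

lemma exists_zero_mem_Icc (A : IsPenaltyLimit U x v q n X V E) (hω : 0 < ω)
    (hq : ForceAsymptoticallyGE U x q (ω ^ 2)) (s : ℝ) : ∃ t ∈ Icc s (s + π / ω), X t = 0 := by
  by_contra! hne
  have hpos : ∀ t ∈ Icc s (s + π / ω), 0 < X t := fun t ht => (A.nonneg t).lt_of_ne' (hne t ht)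
  have hs : s ≤ s + π / ω := le_add_of_nonneg_right (by positivity)
  have h_anti := A.sineWronskian_anti (s := s) hq hs hpos fun t ht =>
    sin_nonneg_of_nonneg_of_le_pi (mul_nonneg hω.le (sub_nonneg.2 ht.1))
      ((le_div_iff₀' hω).1 (by linarith [ht.2]))
  simp only [sineWronskian, add_sub_cancel_left, mul_div_cancel₀ _ hω.ne', sin_pi, cos_pi,
    sub_self, mul_zero, sin_zero, cos_zero] at h_anti
  nlinarith [hpos s (left_mem_Icc.2 hs), hpos _ (right_mem_Icc.2 hs)]

lemma add_pi_div_le_of_zeros (A : IsPenaltyLimit U x v q n X V E) (hω : 0 < ω)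
    (hq : ForceAsymptoticallyLE U x q (ω ^ 2)) (hab : a < b) (ha : X a = 0) (hb : X b = 0)
    (hpos : ∀ t ∈ Ioo a b, 0 < X t) : a + π / ω ≤ b := by
  by_contra! hlt
  -- The half-period `[s, s + π / ω]` of the sine is centred at the midpoint of `[a, b]`.
  obtain ⟨s, hs⟩ : ∃ s, s = (a + b - π / ω) / 2 := ⟨_, rfl⟩
  have hsin : ∀ t ∈ Icc a b, 0 < sin (ω * (t - s)) := fun t ht =>
    sin_pos_of_pos_of_lt_pi (mul_pos hω (by linarith [ht.1]))
      ((lt_div_iff₀' hω).1 (by linarith [ht.2]))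
  let Q : ℝ → ℝ := fun t => X t / sin (ω * (t - s))
  have hQ_deriv : ∀ t ∈ Ioo a b,
      HasDerivAt Q (sineWronskian ω s X V t / sin (ω * (t - s)) ^ 2) t := by
    intro t ht
    convert! (A.hasDerivAt_limit (hpos t ht)).div (hasDerivAt_mul_sub ω s t).sin
      (hsin t (Ioo_subset_Icc_self ht)).ne' using 1
    rw [mul_comm (cos _) ω, sineWronskian]
  have hQ_cont : ContinuousOn Q (Icc a b) :=
    A.continuous_limit.continuousOn.div (by fun_prop) fun t ht => (hsin t ht).ne'
  obtain ⟨c, hc, hQ'c⟩ := exists_hasDerivAt_eq_zero hab hQ_cont (by simp [Q, ha, hb]) hQ_deriv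
  have hW : sineWronskian ω s X V c = 0 :=
    (div_eq_zero_iff.1 hQ'c).resolve_right
      (pow_ne_zero 2 (hsin c (Ioo_subset_Icc_self hc)).ne')
  have hQ_mono : MonotoneOn Q (Icc c b) := by
    refine monotoneOn_of_hasDerivWithinAt_nonneg (convex_Icc c b)
      (f' := fun t => sineWronskian ω s X V t / sin (ω * (t - s)) ^ 2)
      (hQ_cont.mono (Icc_subset_Icc_left hc.1.le)) ?_ ?_ <;> rw [interior_Icc] <;> intro t ht
    · exact (hQ_deriv t ⟨hc.1.trans ht.1, ht.2⟩).hasDerivWithinAt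
    · have h_mono := A.sineWronskian_mono (s := s) hq ht.1.le
        (fun r hr => hpos r ⟨hc.1.trans_le hr.1, hr.2.trans_lt ht.2⟩)
        (fun r hr => (hsin r ⟨hc.1.le.trans hr.1, hr.2.trans ht.2.le⟩).le)
      exact div_nonneg (hW ▸ h_mono) (sq_nonneg _)
  have hQ_le : Q c ≤ Q b := hQ_mono (left_mem_Icc.2 hc.2.le) (right_mem_Icc.2 hc.2.le) hc.2.le
  have hQc : 0 < Q c := div_pos (hpos c hc) (hsin c (Ioo_subset_Icc_self hc))
  simp only [Q, hb, zero_div] at hQ_le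
  exact hQ_le.not_gt hQc

end Wronskian

section Nonresonance

variable {ω₁ ω₂ : ℝ}

lemma exists_next_zero (A : IsPenaltyLimit U x v q n X V E) (hω₁ : 0 < ω₁) (hω₂ : 0 < ω₂)
    (hq₁ : ForceAsymptoticallyGE U x q (ω₁ ^ 2)) (hq₂ : ForceAsymptoticallyLE U x q (ω₂ ^ 2))
    {a : ℝ} (ha : X a = 0) (hE : 0 < E a) :
    ∃ b, a + π / ω₂ ≤ b ∧ b ≤ a + π / ω₁ ∧ X b = 0 ∧ ∀ t ∈ Ioo a b, 0 < X t := by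
  obtain ⟨δ, hδ, h_isolated⟩ := A.exists_isolated ha hE
  let S := {t | a + δ ≤ t ∧ X t = 0}
  have hS_closed : IsClosed S := (isClosed_le continuous_const continuous_id).inter
    (isClosed_eq A.continuous_limit continuous_const)
  have hS_bdd : BddBelow S := ⟨a + δ, fun t ht => ht.1⟩
  have hS_mem : ∀ t, a < t → X t = 0 → t ∈ S := fun t ht hXt =>
    ⟨not_lt.1 fun hlt => ((h_isolated t ⟨by linarith, hlt.le⟩).2 ht.ne').ne' hXt, hXt⟩
  have hS_le : ∀ ε > 0, ∃ t ∈ S, t ≤ a + π / ω₁ + ε := fun ε hε => by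
    obtain ⟨t, ht, hXt⟩ := A.exists_zero_mem_Icc hω₁ hq₁ (a + ε)
    exact ⟨t, hS_mem t (by linarith [ht.1]) hXt, by linarith [ht.2]⟩
  obtain ⟨t₁, ht₁, -⟩ := hS_le 1 one_pos
  have h_inf : sInf S ∈ S := hS_closed.csInf_mem ⟨t₁, ht₁⟩ hS_bdd
  have hpos : ∀ t ∈ Ioo a (sInf S), 0 < X t := fun t ht =>
    (A.nonneg t).lt_of_ne' fun hXt => (csInf_le hS_bdd (hS_mem t ht.1 hXt)).not_gt ht.2
  refine ⟨sInf S, A.add_pi_div_le_of_zeros hω₂ hq₂ (by linarith [h_inf.1]) ha h_inf.2 hpos,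
    le_of_forall_pos_le_add fun ε hε => ?_, h_inf.2, hpos⟩
  obtain ⟨t, htS, ht⟩ := hS_le ε hε
  exact (csInf_le hS_bdd htS).trans ht

/-- Starting from a zero of `X`, the `N`-th next zero comes before time `T` and the following one
after it. -/
lemma not_zero_set_periodic (A : IsPenaltyLimit U x v q n X V E) (hω₁ : 0 < ω₁) (hω₂ : 0 < ω₂)
    (hq₁ : ForceAsymptoticallyGE U x q (ω₁ ^ 2)) (hq₂ : ForceAsymptoticallyLE U x q (ω₂ ^ 2))
    {T : ℝ} {N : ℕ} (hN₁ : N * (π / ω₁) < T) (hN₂ : T < (N + 1) * (π / ω₂))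
    (h₀ : 0 < E 0 + X 0 ^ 2 / 2) : ¬∀ t, X t = 0 → X (t + T) = 0 := by
  intro hper
  have hE : ∀ t, 0 ≤ t → X t = 0 → 0 < E t := fun t ht hXt => by
    have h_le := A.energy_add_sq_le (sq_nonneg ω₁) (sq_nonneg ω₂) hq₁ hq₂ ht
    simp only [hXt, ne_eq, OfNat.ofNat_ne_zero, not_false_eq_true, zero_pow, zero_div,
      add_zero] at h_le
    exact pos_of_mul_pos_left (h₀.trans_le h_le) (exp_pos _).le
  obtain ⟨a₀, ha₀, hXa₀⟩ := A.exists_zero_mem_Icc hω₁ hq₁ 0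
  have h_step : ∀ i : ℕ, ∃ a, a₀ + i * (π / ω₂) ≤ a ∧ a ≤ a₀ + i * (π / ω₁) ∧ X a = 0 := by
    intro i
    induction i with
    | zero => exact ⟨a₀, by simp, by simp, hXa₀⟩
    | succ i ih =>
      obtain ⟨a, ha_ge, ha_le, hXa⟩ := ih
      have ha : 0 ≤ a := ha₀.1.trans ((le_add_of_nonneg_right (by positivity)).trans ha_ge)
      obtain ⟨b, hb_ge, hb_le, hXb, -⟩ := A.exists_next_zero hω₁ hω₂ hq₁ hq₂ hXa (hE a ha hXa)
      exact ⟨b, by push_cast; linarith, by push_cast; linarith, hXb⟩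
  obtain ⟨a, ha_ge, ha_le, hXa⟩ := h_step N
  have ha : 0 ≤ a := ha₀.1.trans ((le_add_of_nonneg_right (by positivity)).trans ha_ge)
  obtain ⟨b, hb_ge, -, -, hpos⟩ := A.exists_next_zero hω₁ hω₂ hq₁ hq₂ hXa (hE a ha hXa)
  exact (hpos (a₀ + T) ⟨by linarith, by linarith⟩).ne' (hper a₀ hXa₀)

end Nonresonance

end IsPenaltyLimit

end SturmComparison

section DelayedOrbits

variable {T C N M a : ℝ} {p : ℝ → ℝ → ℝ} {x v w : ℝ → ℝ} {t : ℝ}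

/-- A `T`-periodic force growing at most linearly above the wall and bounded below it. -/
structure IsSublinearForce (T C : ℝ) (p : ℝ → ℝ → ℝ) : Prop where
  periodic : ∀ t y, p (t + T) y = p t y
  abs_le : ∀ t y, |p t y| ≤ C * (1 + max y 0)

/-- A `T`-periodic force lying, up to a constant, between two linear forces above the wall. -/
structure IsForceBetween (T ω₁ ω₂ C : ℝ) (p : ℝ → ℝ → ℝ) : Prop where
  periodic : ∀ t y, p (t + T) y = p t y
  le_force : ∀ t y, ω₁ ^ 2 * max y 0 - C ≤ p t y
  force_le : ∀ t y, p t y ≤ ω₂ ^ 2 * max y 0 + C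

/-- `x`, with velocity `v` and acceleration `w`, solves the penalised equation
`x'' + p (t, x) - N ^ 2 * max (-x) 0 = 0` on `[0, T]`, with delay `T / N ^ 3` in `x`. The delay is
so small that even the stiff spring feels it only up to an error of order `1 / N`. -/
structure IsDelayedOrbit (p : ℝ → ℝ → ℝ) (T N : ℝ) (x v w : ℝ → ℝ) : Prop where
  hasDerivAt_pos : ∀ t, HasDerivAt x (v t) t
  hasDerivAt_vel : ∀ t, HasDerivAt v (w t) t
  accel_eq : ∀ t ∈ Icc 0 T, w t = -(p t (x (max (t - T / N ^ 3) 0)) -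
    N ^ 2 * max (-x (max (t - T / N ^ 3) 0)) 0)

/-- The force, other than that of the spring of stiffness `N`, under which a motion `x` without
delay has acceleration `w`. -/
def effectiveForce (N : ℝ) (x w : ℝ → ℝ) (t : ℝ) : ℝ :=
  N ^ 2 * max (-x t) 0 - w t

/-- A bound on `[0, T]` for orbits whose initial energy is at most `M ^ 2`. -/
noncomputable def orbitRadius (T C M : ℝ) : ℝ :=
  √((M ^ 2 + 1) * exp ((4 * C + 3 + 2 * T) * T))

lemma orbitRadius_nonneg (T C M : ℝ) : 0 ≤ orbitRadius T C M := sqrt_nonneg _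

lemma IsSublinearForce.nonneg (hp : IsSublinearForce T C p) : 0 ≤ C := by
  simpa using (abs_nonneg _).trans (hp.abs_le 0 0)

namespace IsForceBetween

variable {ω₁ ω₂ : ℝ}

lemma nonneg (hp : IsForceBetween T ω₁ ω₂ C p) : 0 ≤ C := by
  have h_lower := hp.le_force 0 0
  have h_upper := hp.force_le 0 0
  simp only [max_self, mul_zero] at h_lower h_upper
  linarith

lemma isSublinearForce (hp : IsForceBetween T ω₁ ω₂ C p) {C' : ℝ} (hC' : C ≤ C') :
    IsSublinearForce T (C' + ω₂ ^ 2) p := by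
  refine ⟨hp.periodic, fun t y => abs_le.2 ?_⟩
  have hy : 0 ≤ max y 0 := le_max_right _ _
  have h₁ := mul_nonneg (sq_nonneg ω₁) hy
  have h₂ := mul_nonneg (sq_nonneg ω₂) hy
  have hC'y := mul_nonneg (hp.nonneg.trans hC') hy
  constructor
  · linarith [hp.le_force t y, sq_nonneg ω₂]
  · linarith [hp.force_le t y, sq_nonneg ω₂]

lemma rescale (hp : IsForceBetween T ω₁ ω₂ C p) (ha : 0 < a) :
    IsForceBetween T ω₁ ω₂ (a * C) fun t y => a * p t (a⁻¹ * y) := by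
  have h_max : ∀ y, a * max (a⁻¹ * y) 0 = max y 0 := fun y => by
    rw [mul_max_of_nonneg _ _ ha.le, mul_inv_cancel_left₀ ha.ne', mul_zero]
  refine ⟨fun t y => congrArg (a * ·) (hp.periodic t _), fun t y => ?_, fun t y => ?_⟩
  · have h_mul := mul_le_mul_of_nonneg_left (hp.le_force t (a⁻¹ * y)) ha.le
    linear_combination h_mul - ω₁ ^ 2 * h_max y
  · have h_mul := mul_le_mul_of_nonneg_left (hp.force_le t (a⁻¹ * y)) ha.le
    linear_combination h_mul + ω₂ ^ 2 * h_max y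

end IsForceBetween

namespace IsDelayedOrbit

lemma rescale (O : IsDelayedOrbit p T N x v w) (ha : 0 < a) :
    IsDelayedOrbit (fun t y => a * p t (a⁻¹ * y)) T N (fun t => a * x t) (fun t => a * v t)
      fun t => a * w t where
  hasDerivAt_pos t := (O.hasDerivAt_pos t).const_mul a
  hasDerivAt_vel t := (O.hasDerivAt_vel t).const_mul a
  accel_eq t ht := by
    have h_max : ∀ y, max (-(a * y)) 0 = a * max (-y) 0 := fun y => by
      rw [mul_max_of_nonneg _ _ ha.le, mul_zero, mul_neg]
    rw [O.accel_eq t ht, h_max, inv_mul_cancel_left₀ ha.ne']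
    ring

lemma energy_le (O : IsDelayedOrbit p T N x v w) (hT : 0 < T) (hp : IsSublinearForce T C p)
    (hN : 1 ≤ N) (ht : t ∈ Icc 0 T) : penaltyEnergy N (x t) (v t) + 1 ≤
      (penaltyEnergy N (x 0) (v 0) + 1) * exp ((4 * C + 3 + 2 * T) * T) := by
  refine penaltyEnergy_add_one_le (h := T / N ^ 3) hp.nonneg hN (by positivity) ?_ hp.abs_le
    O.hasDerivAt_pos O.hasDerivAt_vel O.accel_eq t ht
  calc N ^ 2 * (T / N ^ 3) = T / N := by field_simp
    _ ≤ T := div_le_self hT.le hN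

section Bounded

variable (hT : 0 < T) (hp : IsSublinearForce T C p) (hN : 1 ≤ N)
  (hM : penaltyEnergy N (x 0) (v 0) ≤ M ^ 2) (ht : t ∈ Icc 0 T)
include hT hp hN hM ht

lemma abs_le (O : IsDelayedOrbit p T N x v w) : |v t| ≤ orbitRadius T C M ∧
    |x t| ≤ orbitRadius T C M ∧ N * max (-x t) 0 ≤ orbitRadius T C M := by
  refine abs_le_of_penaltyEnergy_le hN (orbitRadius_nonneg T C M) ?_
  have h_growth := O.energy_le hT hp hN ht
  rw [orbitRadius, sq_sqrt (by positivity)]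
  calc penaltyEnergy N (x t) (v t)
      ≤ (penaltyEnergy N (x 0) (v 0) + 1) * exp ((4 * C + 3 + 2 * T) * T) := by linarith
    _ ≤ (M ^ 2 + 1) * exp ((4 * C + 3 + 2 * T) * T) := by gcongr

lemma exists_force_near (O : IsDelayedOrbit p T N x v w) :
    ∃ y, |y| ≤ orbitRadius T C M ∧ |y - x t| ≤ orbitRadius T C M * (T / N) ∧
      |effectiveForce N x w t - p t y| ≤ orbitRadius T C M * (T / N) := by
  have hN_pos : 0 < N := one_pos.trans_le hN
  have hS := orbitRadius_nonneg T C M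
  obtain ⟨τ, hτ⟩ : ∃ τ, τ = max (t - T / N ^ 3) 0 := ⟨_, rfl⟩
  have hτ_le : τ ≤ t := hτ ▸ max_le (sub_le_self _ (by positivity)) ht.1
  have hτ_mem : τ ∈ Icc 0 T := ⟨hτ ▸ le_max_right _ _, hτ_le.trans ht.2⟩
  have h_delay : t - τ ≤ T / N ^ 3 := by linarith [hτ ▸ le_max_left (t - T / N ^ 3) 0]
  have h_drift : |x t - x τ| ≤ orbitRadius T C M * (T / N ^ 3) :=
    (abs_sub_le_of_hasDerivAt O.hasDerivAt_pos hτ_le fun s hs =>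
      (O.abs_le hT hp hN hM ⟨hτ_mem.1.trans hs.1, hs.2.trans ht.2⟩).1).trans
        (mul_le_mul_of_nonneg_left h_delay hS)
  refine ⟨x τ, (O.abs_le hT hp hN hM hτ_mem).2.1, ?_, ?_⟩
  · rw [abs_sub_comm]
    refine h_drift.trans (mul_le_mul_of_nonneg_left ?_ hS)
    exact div_le_div_of_nonneg_left hT.le hN_pos (le_self_pow₀ hN three_ne_zero)
  · have h_force : effectiveForce N x w t - p t (x τ) =
        N ^ 2 * (max (-x t) 0 - max (-x τ) 0) := by
      rw [effectiveForce, O.accel_eq t ht, ← hτ]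
      ring
    rw [h_force, abs_mul, abs_of_nonneg (sq_nonneg N)]
    calc N ^ 2 * |max (-x t) 0 - max (-x τ) 0|
        ≤ N ^ 2 * (orbitRadius T C M * (T / N ^ 3)) := by
          gcongr
          exact (abs_max_neg_zero_sub_le _ _).trans h_drift
      _ = orbitRadius T C M * (T / N) := by field_simp

lemma isPenaltyBound (O : IsDelayedOrbit p T N x v w) :
    IsPenaltyBound ((orbitRadius T C M + C) * (1 + orbitRadius T C M + T)) N (x t) (v t)
      (effectiveForce N x w t) := by
  obtain ⟨y, hy, -, h_near⟩ := O.exists_force_near hT hp hN hM ht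
  obtain ⟨hv, hx, h_pen⟩ := O.abs_le hT hp hN hM ht
  have hS := orbitRadius_nonneg T C M
  have hC := hp.nonneg
  set S := orbitRadius T C M
  have hS_le : S ≤ (S + C) * (1 + S + T) := by nlinarith [mul_nonneg hC hS, mul_nonneg hC hT.le]
  refine ⟨hx.trans hS_le, hv.trans hS_le, h_pen.trans hS_le, ?_⟩
  have h_force : |p t y| ≤ C * (1 + S) :=
    (hp.abs_le t y).trans (by gcongr; exact max_le ((le_abs_self y).trans hy) hS)
  have h_delay : S * (T / N) ≤ S * T := mul_le_mul_of_nonneg_left (div_le_self hT.le hN) hS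
  have h_tri := abs_sub_abs_le_abs_sub (effectiveForce N x w t) (p t y)
  nlinarith [mul_nonneg hC hT.le]

end Bounded

end IsDelayedOrbit

end DelayedOrbits

section Extension

variable {T c t : ℝ}

lemma quasiperiodicExt_zero (T c : ℝ) (x : ℝ → ℝ) : quasiperiodicExt T c x 0 = x 0 := by
  simp [quasiperiodicExt]

lemma effectiveForce_quasiperiodicExt (hc : 0 ≤ c) (N : ℝ) (x w : ℝ → ℝ) (t : ℝ) :
    effectiveForce N (quasiperiodicExt T c x) (quasiperiodicExt T c w) t =
      quasiperiodicExt T c (effectiveForce N x w) t := by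
  have h_max : ∀ y, max (-(c ^ ⌊t / T⌋ * y)) 0 = c ^ ⌊t / T⌋ * max (-y) 0 := fun y => by
    rw [mul_max_of_nonneg _ _ (zpow_nonneg hc _), mul_zero, mul_neg]
  simp only [effectiveForce, quasiperiodicExt, h_max]
  ring

lemma IsPenaltyBound.mul_left {K n x v q : ℝ} (h : IsPenaltyBound K n x v q) (hc : 0 ≤ c) :
    IsPenaltyBound (c * K) n (c * x) (c * v) (c * q) where
  abs_pos_le := by rw [abs_mul, abs_of_nonneg hc]; gcongr; exact h.abs_pos_le
  abs_vel_le := by rw [abs_mul, abs_of_nonneg hc]; gcongr; exact h.abs_vel_le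
  penetration_le := by
    rw [← mul_neg, ← mul_zero c, ← mul_max_of_nonneg _ _ hc, mul_left_comm]
    exact mul_le_mul_of_nonneg_left h.penetration_le hc
  abs_force_le := by rw [abs_mul, abs_of_nonneg hc]; gcongr; exact h.abs_force_le

lemma IsPenaltyBound.mono {K K' n x v q : ℝ} (h : IsPenaltyBound K n x v q) (hK : K ≤ K') :
    IsPenaltyBound K' n x v q :=
  ⟨h.abs_pos_le.trans hK, h.abs_vel_le.trans hK, h.penetration_le.trans hK,
    h.abs_force_le.trans hK⟩

lemma zpow_floor_div_le {Λ B : ℝ} (hT : 0 < T) (hc : c ∈ Icc 1 Λ) (ht : t ≤ B) :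
    c ^ ⌊t / T⌋ ≤ Λ ^ ⌈B / T⌉₊ := by
  have h_floor : ⌊t / T⌋ ≤ (⌈B / T⌉₊ : ℤ) := Int.floor_le_iff.2 <| by
    push_cast
    linarith [Nat.le_ceil (B / T), div_le_div_of_nonneg_right ht hT.le]
  calc c ^ ⌊t / T⌋ ≤ c ^ (⌈B / T⌉₊ : ℤ) := zpow_le_zpow_right₀ hc.1 h_floor
    _ = c ^ ⌈B / T⌉₊ := zpow_natCast _ _
    _ ≤ Λ ^ ⌈B / T⌉₊ := pow_le_pow_left₀ (zero_le_one.trans hc.1) hc.2 _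

variable {ι : Type*} {U : Ultrafilter ι} {c : ι → ℝ} {Λ : ℝ} {x v w q : ι → ℝ → ℝ}

section Asymptotics

variable {μ : ℝ} {η : ι → ℝ}

lemma eventually_quasiperiodicExt_le (hT : 0 < T) (hc : ∀ j, c j ∈ Icc 1 Λ) {g : ι → ℝ → ℝ}
    (hη₀ : ∀ j, 0 ≤ η j) (hη : Tendsto η U (nhds 0)) (hg : ∀ j, ∀ s ∈ Icc 0 T, g j s ≤ η j)
    (B : ℝ) {ε : ℝ} (hε : 0 < ε) : ∀ᶠ j in (U : Filter ι), ∀ t ∈ Icc (-B) B,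
      quasiperiodicExt T (c j) (g j) t ≤ ε := by
  have h_lim : Tendsto (fun j => Λ ^ ⌈B / T⌉₊ * η j) U (nhds 0) := by
    simpa using hη.const_mul (Λ ^ ⌈B / T⌉₊)
  filter_upwards [h_lim.eventually_le_const hε] with j hj t ht
  have hc_nonneg : 0 ≤ c j ^ ⌊t / T⌋ := zpow_nonneg (zero_le_one.trans (hc j).1) _
  calc c j ^ ⌊t / T⌋ * g j (t - ⌊t / T⌋ * T) ≤ c j ^ ⌊t / T⌋ * η j :=
        mul_le_mul_of_nonneg_left (hg j _ (Ico_subset_Icc_self (sub_floor_div_mul_mem_Ico hT t)))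
          hc_nonneg
    _ ≤ Λ ^ ⌈B / T⌉₊ * η j :=
        mul_le_mul_of_nonneg_right (zpow_floor_div_le hT (hc j) ht.2) (hη₀ j)
    _ ≤ ε := hj

lemma forceAsymptoticallyGE_quasiperiodicExt (hT : 0 < T) (hc : ∀ j, c j ∈ Icc 1 Λ)
    (hη₀ : ∀ j, 0 ≤ η j) (hη : Tendsto η U (nhds 0))
    (hq : ∀ j, ∀ s ∈ Icc 0 T, μ * max (x j s) 0 - q j s ≤ η j) :
    ForceAsymptoticallyGE U (fun j => quasiperiodicExt T (c j) (x j))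
      (fun j => quasiperiodicExt T (c j) (q j)) μ := by
  intro B ε hε
  filter_upwards [eventually_quasiperiodicExt_le hT hc hη₀ hη hq B hε] with j hj t ht
  have h_max := mul_max_of_nonneg (x j (t - ⌊t / T⌋ * T)) 0
    (zpow_nonneg (zero_le_one.trans (hc j).1) ⌊t / T⌋)
  rw [mul_zero] at h_max
  have h_le := hj t ht
  simp only [quasiperiodicExt, ← h_max] at h_le ⊢
  linarith

lemma forceAsymptoticallyLE_quasiperiodicExt (hT : 0 < T) (hc : ∀ j, c j ∈ Icc 1 Λ)
    (hη₀ : ∀ j, 0 ≤ η j) (hη : Tendsto η U (nhds 0))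
    (hq : ∀ j, ∀ s ∈ Icc 0 T, q j s - μ * max (x j s) 0 ≤ η j) :
    ForceAsymptoticallyLE U (fun j => quasiperiodicExt T (c j) (x j))
      (fun j => quasiperiodicExt T (c j) (q j)) μ := by
  intro B ε hε
  filter_upwards [eventually_quasiperiodicExt_le hT hc hη₀ hη hq B hε] with j hj t ht
  have h_max := mul_max_of_nonneg (x j (t - ⌊t / T⌋ * T)) 0
    (zpow_nonneg (zero_le_one.trans (hc j).1) ⌊t / T⌋)
  rw [mul_zero] at h_max
  have h_le := hj t ht
  simp only [quasiperiodicExt, ← h_max] at h_le ⊢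
  linarith

end Asymptotics

end Extension

section Nonresonance

variable {ι : Type*} {U : Ultrafilter ι} {T : ℝ} {p : ι → ℝ → ℝ → ℝ} {x v w : ι → ℝ → ℝ}
  {N c : ι → ℝ} {Λ : ℝ}

lemma IsDelayedOrbit.exists_isPenaltyLimit {C M : ℝ} (hT : 0 < T)
    (hp : ∀ j, IsSublinearForce T C (p j)) (O : ∀ j, IsDelayedOrbit (p j) T (N j) (x j) (v j) (w j))
    (hN : ∀ j, 1 ≤ N j) (hN_lim : Tendsto N U atTop) (hc : ∀ j, c j ∈ Icc 1 Λ)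
    (hM : ∀ j, penaltyEnergy (N j) (x j 0) (v j 0) ≤ M ^ 2)
    (hx : ∀ j, x j T = c j * x j 0) (hv : ∀ j, v j T = c j * v j 0) :
    ∃ X V E, IsPenaltyLimit U (fun j => quasiperiodicExt T (c j) (x j))
      (fun j => quasiperiodicExt T (c j) (v j))
      (fun j => quasiperiodicExt T (c j) (effectiveForce (N j) (x j) (w j))) N X V E := by
  have hc_pos : ∀ j, 0 < c j := fun j => one_pos.trans_le (hc j).1
  refine IsPenaltyLimit.exists_of_bounded
    (fun j => hasDerivAt_quasiperiodicExt hT (hc_pos j).ne' (O j).hasDerivAt_pos (hx j) (hv j))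
    (fun j => continuous_quasiperiodicExt hT (hc_pos j).ne' (O j).hasDerivAt_vel (hv j))
    (fun j t => ?_) (fun j => one_pos.trans_le (hN j)) hN_lim fun B => ?_
  · convert! hasDerivWithinAt_quasiperiodicExt_right hT (hc_pos j).ne' (O j).hasDerivAt_vel
      (hv j) t using 1
    rw [← effectiveForce_quasiperiodicExt (hc_pos j).le, effectiveForce]
    ring
  · let K := Λ ^ ⌈B / T⌉₊ * ((orbitRadius T C M + C) * (1 + orbitRadius T C M + T))
    refine ⟨max K 1, lt_max_of_lt_right one_pos, fun j t ht => ?_⟩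
    have h_bound := (O j).isPenaltyBound hT (hp j) (hN j) (hM j)
      (Ico_subset_Icc_self (sub_floor_div_mul_mem_Ico hT t))
    refine (h_bound.mul_left (zpow_nonneg (hc_pos j).le ⌊t / T⌋)).mono (le_max_of_le_left ?_)
    exact mul_le_mul_of_nonneg_right (zpow_floor_div_le hT (hc j) ht.2)
      ((abs_nonneg _).trans h_bound.abs_pos_le)

variable {ω₁ ω₂ C₀ : ℝ} {C : ι → ℝ}

lemma IsDelayedOrbit.forceAsymptotically (hT : 0 < T)
    (hp : ∀ j, IsForceBetween T ω₁ ω₂ (C j) (p j)) (hC₀ : ∀ j, C j ≤ C₀)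
    (hC : Tendsto C U (nhds 0)) (O : ∀ j, IsDelayedOrbit (p j) T (N j) (x j) (v j) (w j))
    (hN : ∀ j, 1 ≤ N j) (hN_lim : Tendsto N U atTop) (hc : ∀ j, c j ∈ Icc 1 Λ) {M : ℝ}
    (hM : ∀ j, penaltyEnergy (N j) (x j 0) (v j 0) ≤ M ^ 2) :
    ForceAsymptoticallyGE U (fun j => quasiperiodicExt T (c j) (x j))
        (fun j => quasiperiodicExt T (c j) (effectiveForce (N j) (x j) (w j))) (ω₁ ^ 2) ∧
      ForceAsymptoticallyLE U (fun j => quasiperiodicExt T (c j) (x j))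
        (fun j => quasiperiodicExt T (c j) (effectiveForce (N j) (x j) (w j))) (ω₂ ^ 2) := by
  obtain ⟨S, hS⟩ : ∃ S, S = orbitRadius T (C₀ + ω₂ ^ 2) M := ⟨_, rfl⟩
  have hS_nonneg : 0 ≤ S := hS ▸ orbitRadius_nonneg _ _ _
  let η : ι → ℝ → ℝ := fun j ω => C j + (ω ^ 2 + 1) * (S * (T / N j))
  have hη_nonneg : ∀ ω j, 0 ≤ η j ω := fun ω j => by
    have hCj := (hp j).nonneg
    have hNj := one_pos.trans_le (hN j)
    positivity
  have hη_lim : ∀ ω, Tendsto (η · ω) U (nhds 0) := fun ω => by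
    simpa using hC.add (((hN_lim.const_div_atTop T).const_mul S).const_mul (ω ^ 2 + 1))
  have h_near : ∀ j, ∀ s ∈ Icc 0 T, ∃ y, |max y 0 - max (x j s) 0| ≤ S * (T / N j) ∧
      |effectiveForce (N j) (x j) (w j) s - p j s y| ≤ S * (T / N j) := fun j s hs => by
    obtain ⟨y, -, hy, hqy⟩ := (O j).exists_force_near hT ((hp j).isSublinearForce (hC₀ j)) (hN j)
      (hM j) hs
    rw [← hS] at hy hqy
    exact ⟨y, (abs_max_sub_max_le_abs y (x j s) 0).trans hy, hqy⟩
  refine ⟨forceAsymptoticallyGE_quasiperiodicExt hT hc (hη_nonneg ω₁) (hη_lim ω₁) fun j s hs => ?_,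
    forceAsymptoticallyLE_quasiperiodicExt hT hc (hη_nonneg ω₂) (hη_lim ω₂) fun j s hs => ?_⟩
  all_goals obtain ⟨y, hy, hqy⟩ := h_near j s hs
  · have h_lin := mul_le_mul_of_nonneg_left (neg_le_of_abs_le hy) (sq_nonneg ω₁)
    simp only [η]
    linarith [(hp j).le_force s y, neg_le_of_abs_le hqy]
  · have h_lin := mul_le_mul_of_nonneg_left (le_of_abs_le hy) (sq_nonneg ω₂)
    simp only [η]
    linarith [(hp j).force_le s y, le_of_abs_le hqy]

lemma IsDelayedOrbit.not_resonant_sequence (hT : 0 < T) (hω₁ : 0 < ω₁) (hω₂ : 0 < ω₂) {m : ℕ}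
    (hm₁ : m * (π / ω₁) < T) (hm₂ : T < (m + 1) * (π / ω₂))
    (hp : ∀ j, IsForceBetween T ω₁ ω₂ (C j) (p j)) (hC₀ : ∀ j, C j ≤ C₀)
    (hC : Tendsto C U (nhds 0)) (O : ∀ j, IsDelayedOrbit (p j) T (N j) (x j) (v j) (w j))
    (hN : ∀ j, 1 ≤ N j) (hN_lim : Tendsto N U atTop) (hc : ∀ j, c j ∈ Icc 1 Λ)
    (h_energy : ∀ j, penaltyEnergy (N j) (x j 0) (v j 0) = 1)
    (hx : ∀ j, x j T = c j * x j 0) (hv : ∀ j, v j T = c j * v j 0) : False := by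
  have hM : ∀ j, penaltyEnergy (N j) (x j 0) (v j 0) ≤ 1 ^ 2 := fun j => by simp [h_energy j]
  obtain ⟨X, V, E, A⟩ := exists_isPenaltyLimit hT (fun j => (hp j).isSublinearForce (hC₀ j)) O hN
    hN_lim hc hM hx hv
  obtain ⟨hGE, hLE⟩ := forceAsymptotically hT hp hC₀ hC O hN hN_lim hc hM
  refine A.not_zero_set_periodic hω₁ hω₂ hGE hLE hm₁ hm₂ ?_ fun t hXt => ?_
  · have h_init : ∀ j, wallEnergy (N j) (quasiperiodicExt T (c j) (x j) 0)
        (quasiperiodicExt T (c j) (v j) 0) + max (quasiperiodicExt T (c j) (x j) 0) 0 ^ 2 / 2 =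
          1 / 2 := fun j => by
      rw [quasiperiodicExt_zero, quasiperiodicExt_zero, ← h_energy j, wallEnergy, penaltyEnergy]
      ring
    have h_lim := A.tendsto_energy_add_sq 0
    simp only [h_init] at h_lim
    rw [← tendsto_nhds_unique tendsto_const_nhds h_lim]
    norm_num
  · refine tendsto_nhds_unique (A.tendsto_pos (t + T)) ?_
    have h_abs := ((A.tendsto_pos t).abs).const_mul Λ
    rw [hXt, abs_zero, mul_zero] at h_abs
    refine squeeze_zero_norm (fun j => ?_) h_abs
    have hcj : 0 < c j := one_pos.trans_le (hc j).1
    rw [quasiperiodicExt_add hT hcj.ne', norm_mul, norm_eq_abs, norm_eq_abs, abs_of_pos hcj]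
    exact mul_le_mul_of_nonneg_right (hc j).2 (abs_nonneg _)

lemma IsDelayedOrbit.multiplier_le {p : ℝ → ℝ → ℝ} {x v w : ℝ → ℝ} {N c C : ℝ}
    (O : IsDelayedOrbit p T N x v w) (hT : 0 < T) (hp : IsSublinearForce T C p) (hN : 1 ≤ N)
    (h_energy : 1 ≤ penaltyEnergy N (x 0) (v 0)) (hc : 1 ≤ c) (hx : x T = c * x 0)
    (hv : v T = c * v 0) : c ≤ 2 * exp ((4 * C + 3 + 2 * T) * T) := by
  have h_growth := O.energy_le hT hp hN (right_mem_Icc.2 hT.le)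
  rw [hx, hv, penaltyEnergy_mul _ _ _ (zero_le_one.trans hc)] at h_growth
  set e := penaltyEnergy N (x 0) (v 0)
  set G := exp ((4 * C + 3 + 2 * T) * T)
  have hG : 0 < G := exp_pos _
  have h_sq : c ^ 2 ≤ 2 * G := le_of_mul_le_mul_right (by nlinarith) (one_pos.trans_le h_energy)
  nlinarith

/-- Rescaling a sequence of resonant orbits of growing energy to energy `1` makes the bounds on
the force homogeneous in the limit. -/
lemma IsDelayedOrbit.exists_radius_nonresonant {C : ℝ} (hT : 0 < T) (hω₁ : 0 < ω₁) (hω₂ : 0 < ω₂)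
    {m : ℕ} (hm₁ : m * (π / ω₁) < T) (hm₂ : T < (m + 1) * (π / ω₂)) :
    ∃ R, 1 ≤ R ∧ ∀ N p x v w c, R ≤ N → IsForceBetween T ω₁ ω₂ C p →
      IsDelayedOrbit p T N x v w → penaltyEnergy N (x 0) (v 0) = R ^ 2 → 1 ≤ c →
      x T = c * x 0 → v T ≠ c * v 0 := by
  by_contra! h_resonant
  have hR : ∀ j : ℕ, (1 : ℝ) ≤ j + 1 := fun j => le_add_of_nonneg_left j.cast_nonneg
  have hR_pos : ∀ j : ℕ, (0 : ℝ) < ((j : ℝ) + 1)⁻¹ := fun j => inv_pos.2 (one_pos.trans_le (hR j))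
  choose N p x v w c hN hp O h_energy hc hx hv using fun j : ℕ => h_resonant (j + 1) (hR j)
  have hN₁ : ∀ j, 1 ≤ N j := fun j => (hR j).trans (hN j)
  have hU : (hyperfilter ℕ : Filter ℕ) ≤ atTop := Nat.hyperfilter_le_atTop
  refine not_resonant_sequence (U := hyperfilter ℕ) (N := N) (c := c) (C₀ := C)
    (Λ := 2 * exp ((4 * (C + ω₂ ^ 2) + 3 + 2 * T) * T)) hT hω₁ hω₂ hm₁ hm₂
    (fun j => (hp j).rescale (hR_pos j)) (fun j => ?_) ?_ (fun j => (O j).rescale (hR_pos j)) hN₁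
    ?_ (fun j => ⟨hc j, ?_⟩) (fun j => ?_) (fun j => ?_) (fun j => ?_)
  · exact mul_le_of_le_one_left (hp j).nonneg (inv_le_one_of_one_le₀ (hR j))
  · have h_inv := tendsto_one_div_add_atTop_nhds_zero_nat (𝕜 := ℝ)
    simpa using (h_inv.mono_left hU).mul_const C
  · exact (tendsto_atTop_mono hN (tendsto_atTop_add_const_right _ _
      tendsto_natCast_atTop_atTop)).mono_left hU
  · exact (O j).multiplier_le hT ((hp j).isSublinearForce le_rfl) (hN₁ j)
      (by rw [h_energy j]; exact one_le_pow₀ (hR j)) (hc j) (hx j) (hv j)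
  · rw [penaltyEnergy_mul _ _ _ (hR_pos j).le, h_energy j, ← mul_pow,
      inv_mul_cancel₀ (one_pos.trans_le (hR j)).ne', one_pow]
  · rw [hx j, mul_left_comm]
  · rw [hv j, mul_left_comm]

end Nonresonance

section Continuation

/-- The radial retraction of a normed space onto its closed ball of radius `R`. -/
noncomputable def radialRetraction {E : Type*} [NormedAddCommGroup E] [NormedSpace ℝ E] (R : ℝ)
    (z : E) : E :=
  (R / max R ‖z‖) • z

section RadialRetraction

variable {E : Type*} [NormedAddCommGroup E] [NormedSpace ℝ E] {R : ℝ} {z : E}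

lemma continuous_radialRetraction (hR : 0 < R) : Continuous (radialRetraction R : E → E) :=
  (continuous_const.div (by fun_prop) fun _ => (lt_max_of_lt_left hR).ne').smul continuous_id

lemma norm_radialRetraction_le (hR : 0 < R) (z : E) : ‖radialRetraction R z‖ ≤ R := by
  have h_max : 0 < max R ‖z‖ := lt_max_of_lt_left hR
  rw [radialRetraction, norm_smul, Real.norm_of_nonneg (by positivity), div_mul_eq_mul_div,
    div_le_iff₀ h_max]
  exact mul_le_mul_of_nonneg_left (le_max_right _ _) hR.le

lemma radialRetraction_of_norm_le (hR : 0 < R) (hz : ‖z‖ ≤ R) : radialRetraction R z = z := by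
  rw [radialRetraction, max_eq_left hz, div_self hR.ne', one_smul]

lemma exists_eq_smul_radialRetraction (hR : 0 < R) (hz : R ≤ ‖z‖) :
    ‖radialRetraction R z‖ = R ∧ ∃ c : ℝ, 1 ≤ c ∧ z = c • radialRetraction R z := by
  have hz_pos : 0 < ‖z‖ := hR.trans_le hz
  refine ⟨?_, ‖z‖ / R, (one_le_div hR).2 hz, ?_⟩
  · rw [radialRetraction, max_eq_right hz, norm_smul, Real.norm_of_nonneg (by positivity),
      div_mul_cancel₀ _ hz_pos.ne']
  · rw [radialRetraction, max_eq_right hz, smul_smul, div_mul_div_cancel₀ hR.ne',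
      div_self hz_pos.ne', one_smul]

end RadialRetraction

lemma eq_of_projIcc_sub_eq {l d : ℝ} (h_eq : (projIcc 0 1 zero_le_one (l - d) : ℝ) = l)
    (h_zero : l = 0 → d ≤ 0) (h_one : l = 1 → 0 ≤ d) : d = 0 := by
  rw [coe_projIcc] at h_eq
  grind

/-- The fixed point problem `F (z, l) = z` is closed up to a self-map of `E × ℝ` by the equation
`l - (Θ (z, l) - θ) = l`, which determines the parameter. -/
theorem exists_fixedPt_and_eq_of_continuation {E : Type*} [NormedAddCommGroup E]
    [NormedSpace ℝ E] [FiniteDimensional ℝ E] {F : E × ℝ → E} {Θ : E × ℝ → ℝ} {R θ : ℝ}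
    (hF : Continuous F) (hΘ : Continuous Θ) (hR : 0 < R)
    (h_sphere : ∀ z, ∀ l ∈ Icc (0 : ℝ) 1, ‖z‖ = R → ∀ c : ℝ, 1 ≤ c → F (z, l) ≠ c • z)
    (h_zero : ∀ z, ‖z‖ ≤ R → Θ (z, 0) ≤ θ) (h_one : ∀ z, ‖z‖ ≤ R → θ ≤ Θ (z, 1)) :
    ∃ z, ∃ l ∈ Icc (0 : ℝ) 1, ‖z‖ ≤ R ∧ F (z, l) = z ∧ Θ (z, l) = θ := by
  let r : E → E := radialRetraction R
  let clamp : ℝ → ℝ := fun l => projIcc 0 1 zero_le_one l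
  have hr : Continuous r := continuous_radialRetraction hR
  have h_clamp : Continuous clamp := continuous_subtype_val.comp continuous_projIcc
  let proj : E × ℝ → E × ℝ := fun q => (r q.1, clamp q.2)
  have h_proj : Continuous proj := by fun_prop
  have h_clamp_mem : ∀ l, clamp l ∈ Icc (0 : ℝ) 1 := fun l => (projIcc 0 1 zero_le_one l).2
  obtain ⟨⟨z, l⟩, h_fix⟩ := exists_isFixedPt_of_isBounded_range
    (F := fun q : E × ℝ => (r (F (proj q)), clamp (clamp q.2 - (Θ (proj q) - θ))))
    (by fun_prop) <| by
      refine (Metric.isBounded_closedBall (x := (0 : E)) (r := R)).prod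
        (Metric.isBounded_Icc 0 1) |>.subset (range_subset_iff.2 fun q => ⟨?_, h_clamp_mem _⟩)
      exact mem_closedBall_zero_iff.2 (norm_radialRetraction_le hR _)
  obtain ⟨hz_fix, hl_fix⟩ := Prod.mk.inj h_fix
  have hl : l ∈ Icc (0 : ℝ) 1 := hl_fix ▸ h_clamp_mem _
  have hz : ‖z‖ ≤ R := hz_fix ▸ norm_radialRetraction_le hR _
  have h_clamp_l : clamp l = l := congrArg Subtype.val (projIcc_of_mem zero_le_one hl)
  have h_proj_zl : proj (z, l) = (z, l) :=
    Prod.ext (radialRetraction_of_norm_le hR hz) h_clamp_l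
  rw [h_proj_zl] at hz_fix hl_fix
  refine ⟨z, l, hl, hz, ?_, ?_⟩
  · rcases le_total R ‖F (z, l)‖ with h_out | h_in
    · obtain ⟨h_norm, c, hc, h_eq⟩ := exists_eq_smul_radialRetraction hR h_out
      rw [show radialRetraction R (F (z, l)) = z from hz_fix] at h_norm h_eq
      exact absurd h_eq (h_sphere z l hl h_norm c hc)
    · rwa [← radialRetraction_of_norm_le hR h_in]
  · refine sub_eq_zero.1 (eq_of_projIcc_sub_eq (l := l) ?_ ?_ ?_)
    · rwa [h_clamp_l] at hl_fix
    · rintro rfl; exact sub_nonpos.2 (h_zero z hz)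
    · rintro rfl; exact sub_nonneg.2 (h_one z hz)

end Continuation

section PenaltyCoordinates

variable {N R θ : ℝ}

/-- The positively homogeneous change of the position coordinate that turns the energy
`penaltyEnergy N` into the square of the Euclidean norm. -/
def penaltyCoord (N x : ℝ) : ℝ := max x 0 - N * max (-x) 0

/-- The inverse of `penaltyCoord N`. -/
noncomputable def penaltyCoordInv (N a : ℝ) : ℝ := max a 0 - max (-a) 0 / N

lemma continuous_penaltyCoord (N : ℝ) : Continuous (penaltyCoord N) := by
  unfold penaltyCoord; fun_prop

lemma continuous_penaltyCoordInv (N : ℝ) : Continuous (penaltyCoordInv N) := by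
  unfold penaltyCoordInv; fun_prop

lemma penaltyCoordInv_penaltyCoord (hN : 0 < N) (x : ℝ) :
    penaltyCoordInv N (penaltyCoord N x) = x := by
  unfold penaltyCoordInv penaltyCoord
  rcases le_total x 0 with hx | hx
  · have hNx : N * x ≤ 0 := mul_nonpos_of_nonneg_of_nonpos hN.le hx
    have h_eq : max x 0 - N * max (-x) 0 = N * x := by
      rw [max_eq_right hx, max_eq_left (neg_nonneg.2 hx)]; ring
    rw [h_eq, max_eq_right hNx, max_eq_left (neg_nonneg.2 hNx)]
    field_simp
    ring
  · have h_eq : max x 0 - N * max (-x) 0 = x := by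
      rw [max_eq_left hx, max_eq_right (neg_nonpos.2 hx)]; ring
    rw [h_eq, max_eq_left hx, max_eq_right (neg_nonpos.2 hx), zero_div, sub_zero]

lemma penaltyCoord_penaltyCoordInv (hN : 0 < N) (a : ℝ) :
    penaltyCoord N (penaltyCoordInv N a) = a := by
  unfold penaltyCoordInv penaltyCoord
  rcases le_total a 0 with ha | ha
  · have haN : a / N ≤ 0 := div_nonpos_of_nonpos_of_nonneg ha hN.le
    have h_eq : max a 0 - max (-a) 0 / N = a / N := by
      rw [max_eq_right ha, max_eq_left (neg_nonneg.2 ha)]; ring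
    rw [h_eq, max_eq_right haN, max_eq_left (neg_nonneg.2 haN)]
    field_simp
    ring
  · have h_eq : max a 0 - max (-a) 0 / N = a := by
      rw [max_eq_left ha, max_eq_right (neg_nonpos.2 ha), zero_div, sub_zero]
    rw [h_eq, max_eq_left ha, max_eq_right (neg_nonpos.2 ha), mul_zero, sub_zero]

lemma penaltyCoordInv_mul (N a : ℝ) {c : ℝ} (hc : 0 ≤ c) :
    penaltyCoordInv N (c * a) = c * penaltyCoordInv N a := by
  have h_pos : max (c * a) 0 = c * max a 0 := by rw [mul_max_of_nonneg _ _ hc, mul_zero]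
  have h_neg : max (-(c * a)) 0 = c * max (-a) 0 := by
    rw [mul_max_of_nonneg _ _ hc, mul_zero, mul_neg]
  rw [penaltyCoordInv, h_pos, h_neg, penaltyCoordInv]
  ring

lemma penaltyEnergy_eq (N x v : ℝ) : penaltyEnergy N x v = v ^ 2 + penaltyCoord N x ^ 2 := by
  unfold penaltyEnergy penaltyCoord
  rcases le_total x 0 with hx | hx
  · rw [max_eq_right hx]; ring
  · rw [max_eq_right (neg_nonpos.2 hx)]; ring

lemma penaltyEnergy_penaltyCoordInv (hN : 0 < N) (z : ℂ) :
    penaltyEnergy N (penaltyCoordInv N z.re) z.im = ‖z‖ ^ 2 := by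
  rw [penaltyEnergy_eq, penaltyCoord_penaltyCoordInv hN, Complex.sq_norm, Complex.normSq_apply]
  ring

theorem exists_periodic_point_of_nonresonant {xT vT Θ : ℝ × ℝ × ℝ → ℝ} (hN : 0 < N) (hR : 0 < R)
    (hx : Continuous xT) (hv : Continuous vT) (hΘ : Continuous Θ)
    (h_nonres : ∀ x v, ∀ l ∈ Icc (0 : ℝ) 1, penaltyEnergy N x v = R ^ 2 → ∀ c, 1 ≤ c →
      xT (x, v, l) = c * x → vT (x, v, l) ≠ c * v)
    (h_zero : ∀ x v, penaltyEnergy N x v ≤ R ^ 2 → Θ (x, v, 0) ≤ θ)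
    (h_one : ∀ x v, penaltyEnergy N x v ≤ R ^ 2 → θ ≤ Θ (x, v, 1)) :
    ∃ x v, ∃ l ∈ Icc (0 : ℝ) 1, penaltyEnergy N x v ≤ R ^ 2 ∧
      xT (x, v, l) = x ∧ vT (x, v, l) = v ∧ Θ (x, v, l) = θ := by
  let e : ℂ × ℝ → ℝ × ℝ × ℝ := fun q => (penaltyCoordInv N q.1.re, q.1.im, q.2)
  have he : Continuous e := by have := continuous_penaltyCoordInv N; fun_prop
  have h_coord := continuous_penaltyCoord N
  have h_energy : ∀ z : ℂ, ‖z‖ ≤ R → penaltyEnergy N (penaltyCoordInv N z.re) z.im ≤ R ^ 2 :=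
    fun z hz => by rw [penaltyEnergy_penaltyCoordInv hN]; gcongr
  let F : ℂ × ℝ → ℂ := fun q =>
    Complex.equivRealProdCLM.symm (penaltyCoord N (xT (e q)), vT (e q))
  have h_sphere : ∀ z, ∀ l ∈ Icc (0 : ℝ) 1, ‖z‖ = R → ∀ c : ℝ, 1 ≤ c → F (z, l) ≠ c • z := by
    intro z l hl hz c hc h_eq
    have h_re : penaltyCoord N (xT (e (z, l))) = c * z.re := by
      simpa [F] using congrArg Complex.re h_eq
    have h_im : vT (e (z, l)) = c * z.im := by simpa [F] using congrArg Complex.im h_eq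
    refine h_nonres _ _ l hl ?_ c hc ?_ h_im
    · rw [penaltyEnergy_penaltyCoordInv hN, hz]
    · rw [← penaltyCoordInv_mul N _ (zero_le_one.trans hc), ← h_re,
        penaltyCoordInv_penaltyCoord hN]
  obtain ⟨z, l, hl, hz, h_fix, h_angle⟩ := exists_fixedPt_and_eq_of_continuation
    (F := F) (Θ := fun q => Θ (e q)) (θ := θ) (by fun_prop) (by fun_prop) hR h_sphere
    (fun z hz => h_zero _ _ (h_energy z hz)) (fun z hz => h_one _ _ (h_energy z hz))
  refine ⟨_, _, l, hl, h_energy z hz, ?_, congrArg Complex.im h_fix, h_angle⟩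
  have h_re : penaltyCoord N (xT (e (z, l))) = z.re := congrArg Complex.re h_fix
  exact (penaltyCoordInv_penaltyCoord hN _).symm.trans (congrArg _ h_re)

end PenaltyCoordinates

section Limits

variable {ι : Type*} {U : Ultrafilter ι} {x v q : ι → ℝ → ℝ} {n : ι → ℝ} {X V E : ℝ → ℝ}

lemma IsPenaltyLimit.isBouncingSolution (A : IsPenaltyLimit U x v q n X V E) {p : ℝ → ℝ → ℝ}
    (hq : ∀ t₀, Tendsto (fun s : ι × ℝ => q s.1 s.2) (U ×ˢ nhds t₀) (nhds (p t₀ (X t₀)))) :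
    IsBouncingSolution 0 p X := by
  refine ⟨A.continuous_limit, A.nonneg, fun t₀ h₀ => ⟨V, ?_, A.hasDerivAt_vel h₀ (hq t₀)⟩,
    fun t₀ h₀ _ => ?_, fun t₀ u h₀ hu hd => ?_, fun a b _ h₀ t ht => ?_⟩
  · filter_upwards [A.continuous_limit.continuousAt.eventually_const_lt h₀] with s hs
      using A.hasDerivAt_limit hs
  · rcases (A.energy_nonneg t₀).eq_or_lt' with hE | hE
    · have h_deriv := A.hasDerivAt_zero_of_energy_eq_zero hE
      exact ⟨0, h_deriv.hasDerivWithinAt, by simpa using h_deriv.hasDerivWithinAt⟩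
    · exact ⟨-√(2 * E t₀), A.hasDerivWithinAt_left h₀ hE, by
        simpa using A.hasDerivWithinAt_right h₀ hE⟩
  · refine A.eventually_pos_of_energy_pos h₀ ((A.energy_nonneg t₀).lt_of_ne' fun hE => hu ?_)
    have h_deriv := A.hasDerivAt_zero_of_energy_eq_zero hE
    rcases hd with h_left | h_right
    · exact (uniqueDiffWithinAt_Iic t₀).eq_deriv _ h_left h_deriv.hasDerivWithinAt
    · exact (uniqueDiffWithinAt_Ici t₀).eq_deriv _ h_right h_deriv.hasDerivWithinAt
  · have h_force := A.force_nonneg_of_sticking ht h₀ (hq t)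
    rwa [h₀ t ht] at h_force

lemma IsPenaltyLimit.tendsto_force (A : IsPenaltyLimit U x v q n X V E) {P : ℝ → ℝ → ℝ → ℝ}
    (hP : Continuous fun s : ℝ × ℝ × ℝ => P s.1 s.2.1 s.2.2) {L e : ι → ℝ} {L₀ : ℝ}
    (hL : Tendsto L U (nhds L₀)) (he : Tendsto e U (nhds 0))
    (h_near : ∀ j t, ∃ y, |y - x j t| ≤ e j ∧ |q j t - P (L j) t y| ≤ e j) (t₀ : ℝ) :
    Tendsto (fun s : ι × ℝ => q s.1 s.2) (U ×ˢ nhds t₀) (nhds (P L₀ t₀ (X t₀))) := by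
  choose y h_pos h_force using h_near
  have he' : Tendsto (fun s : ι × ℝ => e s.1) (U ×ˢ nhds t₀) (nhds 0) := he.comp tendsto_fst
  have hy : Tendsto (fun s : ι × ℝ => y s.1 s.2) (U ×ˢ nhds t₀) (nhds (X t₀)) :=
    (A.tendsto_pos_prod t₀).congr_dist <| squeeze_zero (fun _ => dist_nonneg)
      (fun s => by rw [dist_comm]; exact h_pos s.1 s.2) he'
  have hPy : Tendsto (fun s : ι × ℝ => P (L s.1) s.2 (y s.1 s.2)) (U ×ˢ nhds t₀)
      (nhds (P L₀ t₀ (X t₀))) :=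
    (hP.tendsto (L₀, t₀, X t₀)).comp
      ((hL.comp tendsto_fst).prodMk_nhds (tendsto_snd.prodMk_nhds hy))
  exact hPy.congr_dist <| squeeze_zero (fun _ => dist_nonneg)
    (fun s => by rw [dist_comm]; exact h_force s.1 s.2) he'

lemma tendsto_intervalIntegral_of_tendsto_prod {l : Filter ι} {g : ι → ℝ → ℝ} {G : ℝ → ℝ}
    (hg : ∀ j, Continuous (g j)) (hG : Continuous G)
    (h : ∀ t, Tendsto (fun s : ι × ℝ => g s.1 s.2) (l ×ˢ nhds t) (nhds (G t))) (a b : ℝ) :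
    Tendsto (fun j => ∫ t in a..b, g j t) l (nhds (∫ t in a..b, G t)) := by
  have h_loc : TendstoLocallyUniformly g G l := by
    refine tendstoLocallyUniformly_iff_forall_tendsto.2 fun t => ?_
    exact (((hG.tendsto t).comp tendsto_snd).prodMk_nhds (h t)).mono_right
      (nhds_le_uniformity (G t))
  have h_unif : TendstoUniformlyOn g G l (uIcc a b) :=
    (tendstoLocallyUniformlyOn_iff_tendstoUniformlyOn_of_compact isCompact_uIcc).1
      h_loc.tendstoLocallyUniformlyOn
  refine Metric.tendsto_nhds.2 fun ε hε => ?_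
  let δ := ε / (|b - a| + 1)
  have hδ : 0 < δ := by positivity
  filter_upwards [Metric.tendstoUniformlyOn_iff.1 h_unif δ hδ] with j hj
  rw [dist_comm, dist_eq_norm, ← intervalIntegral.integral_sub (hG.intervalIntegrable a b)
    ((hg j).intervalIntegrable a b)]
  calc ‖∫ t in a..b, G t - g j t‖ ≤ δ * |b - a| :=
        intervalIntegral.norm_integral_le_of_norm_le_const fun t ht =>
          (hj t (uIoc_subset_uIcc ht)).le
    _ < δ * (|b - a| + 1) := by gcongr; exact lt_add_one _
    _ = ε := div_mul_cancel₀ _ (by positivity)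

end Limits

lemma IsBouncingSolution.const_add {w : ℝ} {p q : ℝ → ℝ → ℝ} {x : ℝ → ℝ}
    (hx : IsBouncingSolution w p x) (a : ℝ) (hpq : ∀ t, ∀ y ≥ w, p t y = q t (a + y)) :
    IsBouncingSolution (a + w) q fun t => a + x t := by
  obtain ⟨h_cont, h_ge, h_eqn, h_reflect, h_isolated, h_stick⟩ := hx
  simp only [IsBouncingSolution, add_le_add_iff_left, add_lt_add_iff_left, add_right_inj,
    hasDerivWithinAt_const_add_iff, hasDerivAt_const_add_iff, ← hpq _ _ (h_ge _), ← hpq _ w le_rfl]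
  exact ⟨continuous_const.add h_cont, h_ge, h_eqn, h_reflect, h_isolated, h_stick⟩

lemma exists_primitive_of_periodic {g : ℝ → ℝ} {T : ℝ} (hg : Continuous g)
    (h_per : Function.Periodic g T) : ∃ G : ℝ → ℝ, (∀ t, HasDerivAt G (g t) t) ∧
      ∀ (k : ℕ) t, G (t + k * T) = G t + k * ∫ s in (0 : ℝ)..T, g s := by
  refine ⟨fun t => ∫ s in (0 : ℝ)..t, g s, fun t => (hg.integral_hasStrictDerivAt 0 t).hasDerivAt,
    fun k t => ?_⟩
  have h_shift := h_per.intervalIntegral_add_zsmul_eq (k : ℤ) t fun a b => hg.intervalIntegrable a b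
  rw [h_per.intervalIntegral_add_eq t 0, zero_add, zsmul_eq_mul, zsmul_eq_mul,
    Int.cast_natCast] at h_shift
  simp only [← h_shift, intervalIntegral.integral_add_adjacent_intervals
    (hg.intervalIntegrable 0 t) (hg.intervalIntegrable t (t + k * T))]

section PeriodicBouncing

variable {T ω₁ ω₂ C R N σ : ℝ} {P : ℝ → ℝ → ℝ → ℝ} {Ω : ℝ → ℝ → ℝ}

lemma IsDelayedOrbit.exists_force_near_quasiperiodicExt {M : ℝ} {p : ℝ → ℝ → ℝ} {x v w : ℝ → ℝ}
    (O : IsDelayedOrbit p T N x v w) (hT : 0 < T) (hp : IsSublinearForce T C p) (hN : 1 ≤ N)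
    (hM : penaltyEnergy N (x 0) (v 0) ≤ M ^ 2) (t : ℝ) :
    ∃ y, |y - quasiperiodicExt T 1 x t| ≤ orbitRadius T C M * (T / N) ∧
      |quasiperiodicExt T 1 (effectiveForce N x w) t - p t y| ≤ orbitRadius T C M * (T / N) := by
  obtain ⟨y, -, h_pos, h_force⟩ := O.exists_force_near hT hp hN hM
    (Ico_subset_Icc_self (sub_floor_div_mul_mem_Ico hT t))
  have h_per : Function.Periodic (fun s => p s y) T := fun s => hp.periodic s y
  rw [h_per.sub_int_mul_eq] at h_force
  simpa only [quasiperiodicExt, one_zpow, one_mul] using ⟨y, h_pos, h_force⟩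

lemma exists_delayed_flow (hP : Continuous fun s : ℝ × ℝ × ℝ => P s.1 s.2.1 s.2.2) (hT : 0 < T)
    (hN : 0 < N) : ∃ x v w : ℝ × ℝ × ℝ → ℝ → ℝ,
      Continuous (fun s : (ℝ × ℝ × ℝ) × ℝ => x s.1 s.2) ∧
      Continuous (fun s : (ℝ × ℝ × ℝ) × ℝ => v s.1 s.2) ∧
      (∀ z, x z 0 = z.1 ∧ v z 0 = z.2.1) ∧
      ∀ z, IsDelayedOrbit (P z.2.2) T N (x z) (v z) (w z) := by
  have h_force : Continuous fun s : ℝ × ℝ × ℝ =>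
      P s.1 s.2.1 s.2.2 - N ^ 2 * max (-s.2.2) 0 := by fun_prop
  obtain ⟨x, v, w, hx, hv, hx₀, hv₀, hxv, hvw, h_eqn⟩ := exists_continuous_delayed_solution
    (g := fun l t y => P l t y - N ^ 2 * max (-y) 0) h_force
    (show 0 < T / N ^ 3 by positivity) T
  exact ⟨x, v, w, hx, hv, fun z => ⟨hx₀ z, hv₀ z⟩, fun z => ⟨hxv z, hvw z, h_eqn z⟩⟩

lemma IsDelayedOrbit.exists_periodic_of_nonresonant
    (hP : Continuous fun s : ℝ × ℝ × ℝ => P s.1 s.2.1 s.2.2)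
    (hPC : ∀ l ∈ Icc (0 : ℝ) 1, IsSublinearForce T C (P l))
    (hΩ : Continuous fun s : ℝ × ℝ => Ω s.1 s.2)
    (hΩ₀ : ∀ y, |y| ≤ orbitRadius T C R → Ω 0 y ≤ σ)
    (hΩ₁ : ∀ y, |y| ≤ orbitRadius T C R → σ ≤ Ω 1 y) (hT : 0 < T) (hR : 0 < R) (hN : 1 ≤ N)
    (h_nonres : ∀ l ∈ Icc (0 : ℝ) 1, ∀ x v w c, IsDelayedOrbit (P l) T N x v w →
      penaltyEnergy N (x 0) (v 0) = R ^ 2 → 1 ≤ c → x T = c * x 0 → v T ≠ c * v 0) :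
    ∃ l ∈ Icc (0 : ℝ) 1, ∃ x v w, IsDelayedOrbit (P l) T N x v w ∧
      penaltyEnergy N (x 0) (v 0) ≤ R ^ 2 ∧ x T = x 0 ∧ v T = v 0 ∧
      ∫ t in (0 : ℝ)..T, Ω l (x t) = T * σ := by
  obtain ⟨x, v, w, hx, hv, h_init, O⟩ := exists_delayed_flow hP hT (one_pos.trans_le hN)
  have hΩx : Continuous fun s : (ℝ × ℝ × ℝ) × ℝ => Ω s.1.2.2 (x s.1 s.2) := by fun_prop
  have hΩx_int : ∀ z, IntervalIntegrable (fun t => Ω z.2.2 (x z t)) MeasureTheory.volume 0 T :=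
    fun z => (hΩx.comp (Continuous.prodMk_right z)).intervalIntegrable 0 T
  have h_mean : ∫ _ in (0 : ℝ)..T, σ = T * σ := by simp
  have h_bound : ∀ z, z.2.2 ∈ Icc (0 : ℝ) 1 → penaltyEnergy N z.1 z.2.1 ≤ R ^ 2 →
      ∀ t ∈ Icc 0 T, |x z t| ≤ orbitRadius T C R := fun z hz hE t ht =>
    ((O z).abs_le hT (hPC _ hz) hN (by rwa [(h_init z).1, (h_init z).2]) ht).2.1
  have h_multiplier : ∀ x₀ v₀, ∀ l ∈ Icc (0 : ℝ) 1, penaltyEnergy N x₀ v₀ = R ^ 2 → ∀ c, 1 ≤ c →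
      x (x₀, v₀, l) T = c * x₀ → v (x₀, v₀, l) T ≠ c * v₀ := fun x₀ v₀ l hl hE c hc => by
    obtain ⟨hx₀, hv₀⟩ := h_init (x₀, v₀, l)
    simpa only [hx₀, hv₀] using h_nonres l hl _ _ _ c (O (x₀, v₀, l)) (by rwa [hx₀, hv₀]) hc
  obtain ⟨x₀, v₀, l, hl, hE, hxT, hvT, h_int⟩ := exists_periodic_point_of_nonresonant
    (xT := fun z => x z T) (vT := fun z => v z T) (Θ := fun z => ∫ t in 0..T, Ω z.2.2 (x z t))
    (one_pos.trans_le hN) hR (by fun_prop) (by fun_prop)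
    (intervalIntegral.continuous_parametric_intervalIntegral_of_continuous' hΩx 0 T) h_multiplier
    (fun x₀ v₀ hE => (intervalIntegral.integral_mono_on hT.le (hΩx_int _) (by simp) fun t ht =>
      hΩ₀ _ (h_bound (x₀, v₀, 0) (by simp) hE t ht)).trans_eq h_mean)
    (fun x₀ v₀ hE => h_mean.symm.trans_le <| intervalIntegral.integral_mono_on hT.le (by simp)
      (hΩx_int _) fun t ht => hΩ₁ _ (h_bound (x₀, v₀, 1) (by simp) hE t ht))
  obtain ⟨hx₀, hv₀⟩ := h_init (x₀, v₀, l)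
  exact ⟨l, hl, _, _, _, O (x₀, v₀, l), by rwa [hx₀, hv₀], by rw [hx₀, hxT], by rw [hv₀, hvT],
    h_int⟩

lemma IsPenaltyLimit.periodic {ι : Type*} {U : Ultrafilter ι} {x v q : ι → ℝ → ℝ} {n : ι → ℝ}
    {X V E : ℝ → ℝ} (A : IsPenaltyLimit U x v q n X V E)
    (hx : ∀ j, Function.Periodic (x j) T) : Function.Periodic X T := fun t =>
  tendsto_nhds_unique (A.tendsto_pos (t + T)) ((A.tendsto_pos t).congr fun j => (hx j t).symm)

lemma IsDelayedOrbit.exists_isBouncingSolution_of_tendsto {U : Ultrafilter ℕ} {n l : ℕ → ℝ}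
    {x v w : ℕ → ℝ → ℝ} {L : ℝ} (hP : Continuous fun s : ℝ × ℝ × ℝ => P s.1 s.2.1 s.2.2)
    (hΩ : Continuous fun s : ℝ × ℝ => Ω s.1 s.2) (hT : 0 < T)
    (hPC : ∀ j, IsSublinearForce T C (P (l j)))
    (O : ∀ j, IsDelayedOrbit (P (l j)) T (n j) (x j) (v j) (w j)) (hn : ∀ j, 1 ≤ n j)
    (hE : ∀ j, penaltyEnergy (n j) (x j 0) (v j 0) ≤ R ^ 2) (hxT : ∀ j, x j T = x j 0)
    (hvT : ∀ j, v j T = v j 0) (h_int : ∀ j, ∫ t in (0 : ℝ)..T, Ω (l j) (x j t) = σ)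
    (hn_lim : Tendsto n U atTop) (hl : Tendsto l U (nhds L)) :
    ∃ X, IsBouncingSolution 0 (P L) X ∧ Function.Periodic X T ∧
      ∫ t in (0 : ℝ)..T, Ω L (X t) = σ := by
  obtain ⟨X, V, E, A⟩ := exists_isPenaltyLimit (c := fun _ => 1) (Λ := 1) hT hPC O hn hn_lim
    (by simp) hE (by simpa using hxT) (by simpa using hvT)
  have h_error : Tendsto (fun j => orbitRadius T C R * (T / n j)) U (nhds 0) := by
    simpa using (hn_lim.const_div_atTop T).const_mul (orbitRadius T C R)
  refine ⟨X, A.isBouncingSolution (A.tendsto_force hP hl h_error fun j =>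
    (O j).exists_force_near_quasiperiodicExt hT (hPC j) (hn j) (hE j)),
    A.periodic fun j t => by rw [quasiperiodicExt_add hT one_ne_zero, one_mul], ?_⟩
  have hΩx_lim := tendsto_intervalIntegral_of_tendsto_prod
    (g := fun j t => Ω (l j) (quasiperiodicExt T 1 (x j) t)) (G := fun t => Ω L (X t))
    (fun j => hΩ.comp (continuous_const.prodMk (A.continuous_pos j)))
    (hΩ.comp (continuous_const.prodMk A.continuous_limit))
    (fun t => (hΩ.tendsto (L, X t)).comp
      ((hl.comp tendsto_fst).prodMk_nhds (A.tendsto_pos_prod t))) 0 T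
  refine tendsto_nhds_unique hΩx_lim (tendsto_const_nhds.congr fun j => ?_)
  rw [← h_int j]
  refine intervalIntegral.integral_congr fun t ht => ?_
  rw [uIcc_of_le hT.le] at ht
  have h_ext := quasiperiodicExt_of_mem_Icc (x := x j) hT one_ne_zero (by simpa using hxT j) 0
    (t := t) (by simpa using ht)
  simp [h_ext]

lemma exists_periodic_isBouncingSolution (hT : 0 < T) (hω₁ : 0 < ω₁) (hω₂ : 0 < ω₂) {m : ℕ}
    (hm₁ : m * (π / ω₁) < T) (hm₂ : T < (m + 1) * (π / ω₂)) :
    ∃ S : ℝ, 0 ≤ S ∧ ∀ (P : ℝ → ℝ → ℝ → ℝ) (Ω : ℝ → ℝ → ℝ) (σ : ℝ),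
      Continuous (fun s : ℝ × ℝ × ℝ => P s.1 s.2.1 s.2.2) →
      Continuous (fun s : ℝ × ℝ => Ω s.1 s.2) →
      (∀ l ∈ Icc (0 : ℝ) 1, IsForceBetween T ω₁ ω₂ C (P l)) →
      (∀ y, |y| ≤ S → Ω 0 y ≤ σ) → (∀ y, |y| ≤ S → σ ≤ Ω 1 y) →
      ∃ L ∈ Icc (0 : ℝ) 1, ∃ X, IsBouncingSolution 0 (P L) X ∧ Function.Periodic X T ∧
        ∫ t in (0 : ℝ)..T, Ω L (X t) = T * σ := by
  obtain ⟨R, hR, h_nonres⟩ := IsDelayedOrbit.exists_radius_nonresonant (C := C) hT hω₁ hω₂ hm₁ hm₂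
  refine ⟨orbitRadius T (C + ω₂ ^ 2) R, orbitRadius_nonneg _ _ _,
    fun P Ω σ hP hΩ hPC hΩ₀ hΩ₁ => ?_⟩
  have hPC' := fun l hl => (hPC l hl).isSublinearForce le_rfl
  have hn : ∀ j : ℕ, R ≤ R + j := fun j => le_add_of_nonneg_right j.cast_nonneg
  choose l hl x v w O hE hxT hvT h_int using fun j : ℕ =>
    IsDelayedOrbit.exists_periodic_of_nonresonant hP hPC' hΩ hΩ₀ hΩ₁ hT (one_pos.trans_le hR)
      (hR.trans (hn j)) fun l hl x v w c O hE hc => h_nonres _ _ _ _ _ _ (hn j) (hPC l hl) O hE hc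
  have hn_lim : Tendsto (fun j : ℕ => R + j) (hyperfilter ℕ) atTop :=
    (tendsto_atTop_add_const_left _ R tendsto_natCast_atTop_atTop).mono_left
      Nat.hyperfilter_le_atTop
  obtain ⟨L, hL⟩ := exists_tendsto_of_abs_le (U := hyperfilter ℕ) (u := l) (K := 1) fun j =>
    abs_le.2 ⟨by linarith [(hl j).1], (hl j).2⟩
  exact ⟨L, isClosed_Icc.mem_of_tendsto hL (.of_forall hl),
    IsDelayedOrbit.exists_isBouncingSolution_of_tendsto hP hΩ hT (fun j => hPC' _ (hl j)) O
      (fun j => hR.trans (hn j)) hE hxT hvT h_int hn_lim hL⟩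

end PeriodicBouncing

section CentralForce

variable {R0 T C μ₁ μ₂ M ω₁ ω₂ : ℝ} {f : ℝ → ℝ → ℝ}

lemma exists_forall_abs_le_of_periodic
    (hf : ContinuousOn (fun q : ℝ × ℝ => f q.1 q.2) (univ ×ˢ Ici R0)) (hT : 0 < T)
    (hf_per : ∀ t r, f (t + T) r = f t r) (M : ℝ) : ∃ B, ∀ t, ∀ r ∈ Icc R0 M, |f t r| ≤ B := by
  obtain ⟨B, hB⟩ := ((isCompact_Icc (a := 0) (b := T)).prod
    (isCompact_Icc (a := R0) (b := M))).exists_bound_of_continuousOn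
      (hf.mono (prod_mono (subset_univ _) Icc_subset_Ici_self))
  refine ⟨B, fun t r hr => ?_⟩
  have h_per : Function.Periodic (f · r) T := fun t => hf_per t r
  obtain ⟨s, hs, h_eq : f t r = f s r⟩ := h_per.exists_mem_Ico₀ hT t
  exact h_eq ▸ hB (s, r) ⟨Ico_subset_Icc_self hs, hr⟩

lemma exists_linear_bounds_of_periodic
    (hf : ContinuousOn (fun q : ℝ × ℝ => f q.1 q.2) (univ ×ˢ Ici R0)) (hR0 : 0 ≤ R0) (hT : 0 < T)
    (hf_per : ∀ t r, f (t + T) r = f t r) (hM : R0 ≤ M) (hμ₁ : 0 ≤ μ₁) (hμ₂ : 0 ≤ μ₂)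
    (h_ge : ∀ t, ∀ r ≥ M, μ₁ * r ≤ f t r) (h_le : ∀ t, ∀ r ≥ M, f t r ≤ μ₂ * r) :
    ∃ C, ∀ t, ∀ y ≥ 0, μ₁ * y - C ≤ f t (R0 + y) ∧ f t (R0 + y) ≤ μ₂ * y + C := by
  obtain ⟨B, hB⟩ := exists_forall_abs_le_of_periodic hf hT hf_per M
  have hB₀ : 0 ≤ B := (abs_nonneg _).trans (hB 0 R0 ⟨le_rfl, hM⟩)
  have h₁ : 0 ≤ μ₁ * R0 := by positivity
  have h₂ : 0 ≤ μ₂ * R0 := by positivity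
  have h₁M : 0 ≤ μ₁ * M := mul_nonneg hμ₁ (hR0.trans hM)
  refine ⟨B + μ₁ * M + μ₂ * R0, fun t y hy => ?_⟩
  rcases le_total (R0 + y) M with h_near | h_far
  · obtain ⟨h_lower, h_upper⟩ := abs_le.1 (hB t (R0 + y) ⟨by linarith, h_near⟩)
    have hy₁ : μ₁ * y ≤ μ₁ * M := mul_le_mul_of_nonneg_left (by linarith) hμ₁
    have hy₂ : 0 ≤ μ₂ * y := mul_nonneg hμ₂ hy
    constructor <;> linarith
  · constructor <;> linarith [h_ge t _ h_far, h_le t _ h_far]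

lemma exists_frequencies_of_asymptotic_slopes {N : ℕ} {μlo μhi : ℝ} (hR0 : 0 < R0) (hT : 0 < T)
    (hf : ContinuousOn (fun q : ℝ × ℝ => f q.1 q.2) (univ ×ˢ Ici R0))
    (hf_per : ∀ t r, f (t + T) r = f t r) (hμ : μlo ≤ μhi) (h1 : (N * π / T) ^ 2 < μlo)
    (h2 : μhi < ((N + 1) * π / T) ^ 2)
    (hlo : ∀ ε > (0 : ℝ), ∃ M : ℝ, R0 ≤ M ∧ ∀ t r : ℝ, M ≤ r → μlo - ε < f t r / r)
    (hhi : ∀ ε > (0 : ℝ), ∃ M : ℝ, R0 ≤ M ∧ ∀ t r : ℝ, M ≤ r → f t r / r < μhi + ε) :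
    ∃ C ω₁ ω₂, 0 < ω₁ ∧ 0 < ω₂ ∧ N * (π / ω₁) < T ∧ T < (N + 1) * (π / ω₂) ∧
      ∀ t, ∀ y ≥ 0, ω₁ ^ 2 * y - C ≤ f t (R0 + y) ∧ f t (R0 + y) ≤ ω₂ ^ 2 * y + C := by
  obtain ⟨μ₁, h_gt₁, h_lt₁⟩ := exists_between h1
  obtain ⟨μ₂, h_gt₂, h_lt₂⟩ := exists_between h2
  have hμ₁ : 0 < μ₁ := (sq_nonneg _).trans_lt h_gt₁
  have hμ₂ : 0 < μ₂ := by linarith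
  obtain ⟨M₁, hM₁, h_lower⟩ := hlo (μlo - μ₁) (by linarith)
  obtain ⟨M₂, -, h_upper⟩ := hhi (μ₂ - μhi) (by linarith)
  obtain ⟨C, hC⟩ := exists_linear_bounds_of_periodic hf hR0.le hT hf_per
    (hM₁.trans (le_max_left M₁ M₂)) hμ₁.le hμ₂.le
    (fun t r hr => by
      have h_slope := h_lower t r ((le_max_left _ _).trans hr)
      rw [sub_sub_cancel, lt_div_iff₀ (by linarith [le_max_left M₁ M₂])] at h_slope
      exact h_slope.le)
    (fun t r hr => by
      have h_slope := h_upper t r ((le_max_right _ _).trans hr)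
      rw [add_sub_cancel, div_lt_iff₀ (by linarith [le_max_left M₁ M₂])] at h_slope
      exact h_slope.le)
  have hω₁ : N * π / T < √μ₁ := (lt_sqrt (by positivity)).2 h_gt₁
  have hω₂ : √μ₂ < (N + 1) * π / T := (sqrt_lt' (by positivity)).2 h_lt₂
  refine ⟨C, √μ₁, √μ₂, sqrt_pos.2 hμ₁, sqrt_pos.2 hμ₂, ?_, ?_, ?_⟩
  · rwa [← mul_div_assoc, div_lt_comm₀ (sqrt_pos.2 hμ₁) hT]
  · rwa [← mul_div_assoc, lt_div_comm₀ hT (sqrt_pos.2 hμ₂)]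
  · simpa only [sq_sqrt hμ₁.le, sq_sqrt hμ₂.le] using hC

/-- The radial force `-L ^ 2 / r ^ 3 + f (t, r)` at `r = R0 + y`, as a function of the distance `y`
to the wall. It is frozen at its value on the wall for `y ≤ 0`, so as to be defined everywhere. -/
noncomputable def wallForce (R0 : ℝ) (f : ℝ → ℝ → ℝ) (L t y : ℝ) : ℝ :=
  -(L ^ 2) / (R0 + max y 0) ^ 3 + f t (R0 + max y 0)

/-- The angular speed `L / r ^ 2` at `r = R0 + y`, where `y` is the distance to the wall, extended
to `y ≤ 0` by its value on the wall. -/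
noncomputable def angularSpeed (R0 L y : ℝ) : ℝ := L / (R0 + max y 0) ^ 2

lemma continuous_wallForce (hR0 : 0 < R0)
    (hf : ContinuousOn (fun q : ℝ × ℝ => f q.1 q.2) (univ ×ˢ Ici R0)) :
    Continuous fun s : ℝ × ℝ × ℝ => wallForce R0 f s.1 s.2.1 s.2.2 :=
  (Continuous.div (by fun_prop) (by fun_prop) fun _ => by positivity).add <|
    hf.comp_continuous (f := fun s : ℝ × ℝ × ℝ => (s.2.1, R0 + max s.2.2 0)) (by fun_prop)
      fun _ => ⟨mem_univ _, mem_Ici.2 (le_add_of_nonneg_right (le_max_right _ _))⟩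

lemma continuous_angularSpeed (hR0 : 0 < R0) :
    Continuous fun s : ℝ × ℝ => angularSpeed R0 s.1 s.2 :=
  continuous_fst.div (by fun_prop) fun _ => by positivity

lemma isForceBetween_wallForce {L : ℝ} (hR0 : 0 < R0) (hL : L ∈ Icc (0 : ℝ) 1)
    (hf_per : ∀ t r, f (t + T) r = f t r)
    (hC : ∀ t, ∀ y ≥ 0, ω₁ ^ 2 * y - C ≤ f t (R0 + y) ∧ f t (R0 + y) ≤ ω₂ ^ 2 * y + C) :
    IsForceBetween T ω₁ ω₂ (C + 1 / R0 ^ 3) (wallForce R0 f L) := by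
  have h_pos : 0 ≤ 1 / R0 ^ 3 := by positivity
  have h_nonneg : ∀ y, 0 ≤ L ^ 2 / (R0 + max y 0) ^ 3 := fun y => by positivity
  have h_le : ∀ y, L ^ 2 / (R0 + max y 0) ^ 3 ≤ 1 / R0 ^ 3 := fun y =>
    div_le_div₀ zero_le_one (pow_le_one₀ hL.1 hL.2) (by positivity)
      (pow_le_pow_left₀ hR0.le (le_add_of_nonneg_right (le_max_right _ _)) 3)
  refine ⟨fun t y => by simp only [wallForce, hf_per], fun t y => ?_, fun t y => ?_⟩ <;>
  · obtain ⟨h_lower, h_upper⟩ := hC t (max y 0) (le_max_right _ _)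
    rw [wallForce, neg_div]
    linarith [h_nonneg y, h_le y]

lemma le_angularSpeed_one {S y : ℝ} (hR0 : 0 < R0) (hS : 0 ≤ S) (hy : |y| ≤ S) :
    1 / (R0 + S) ^ 2 ≤ angularSpeed R0 1 y :=
  one_div_le_one_div_of_le (by positivity) <|
    pow_le_pow_left₀ (by positivity) (by gcongr; exact max_le ((le_abs_self y).trans hy) hS) 2

lemma exists_isBouncingSolution_of_small_angle {N : ℕ} (hR0 : 0 < R0) (hT : 0 < T)
    (hf : ContinuousOn (fun q : ℝ × ℝ => f q.1 q.2) (univ ×ˢ Ici R0))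
    (hf_per : ∀ t r, f (t + T) r = f t r) (hω₁ : 0 < ω₁) (hω₂ : 0 < ω₂) (hN₁ : N * (π / ω₁) < T)
    (hN₂ : T < (N + 1) * (π / ω₂))
    (hC : ∀ t, ∀ y ≥ 0, ω₁ ^ 2 * y - C ≤ f t (R0 + y) ∧ f t (R0 + y) ≤ ω₂ ^ 2 * y + C) :
    ∃ θ₀ > 0, ∀ θ ∈ Ioc 0 θ₀, ∃ L > 0, ∃ ρ,
      IsBouncingSolution R0 (fun t r => -(L ^ 2) / r ^ 3 + f t r) ρ ∧ Function.Periodic ρ T ∧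
        ∫ t in (0 : ℝ)..T, L / ρ t ^ 2 = θ := by
  obtain ⟨S, hS, h_exists⟩ :=
    exists_periodic_isBouncingSolution (C := C + 1 / R0 ^ 3) hT hω₁ hω₂ hN₁ hN₂
  refine ⟨T / (R0 + S) ^ 2, by positivity, fun θ ⟨hθ, hθ₀⟩ => ?_⟩
  have h_mean_le : θ / T ≤ 1 / (R0 + S) ^ 2 := by
    rwa [div_le_iff₀' hT, mul_one_div]
  obtain ⟨L, hL, X, hX, hX_per, h_int⟩ := h_exists (wallForce R0 f) (angularSpeed R0) (θ / T)
    (continuous_wallForce hR0 hf) (continuous_angularSpeed hR0)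
    (fun l hl => isForceBetween_wallForce hR0 hl hf_per hC)
    (fun y _ => by rw [angularSpeed, zero_div]; positivity)
    (fun y hy => h_mean_le.trans (le_angularSpeed_one hR0 hS hy))
  rw [mul_div_cancel₀ _ hT.ne'] at h_int
  have hL_ne : L ≠ 0 := fun h => by simp [angularSpeed, h, hθ.ne] at h_int
  refine ⟨L, hL.1.lt_of_ne' hL_ne, fun t => R0 + X t, ?_, fun t => by simp only [hX_per t], ?_⟩
  · simpa only [add_zero] using hX.const_add R0 fun t y hy => by
      rw [wallForce, max_eq_left hy]
  · simpa only [angularSpeed, max_eq_left (hX.2.1 _)] using h_int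

end CentralForce

lemma IsBouncingSolution.exists_angle {R0 T L θ : ℝ} {p : ℝ → ℝ → ℝ} {ρ : ℝ → ℝ} (hR0 : 0 < R0)
    (hρ : IsBouncingSolution R0 p ρ) (h_per : Function.Periodic ρ T)
    (h_int : ∫ t in (0 : ℝ)..T, L / ρ t ^ 2 = θ) :
    ∃ ϑ : ℝ → ℝ, (∀ t, HasDerivAt ϑ (L / ρ t ^ 2) t) ∧
      ∀ (k : ℕ) t, ϑ (t + k * T) = ϑ t + k * θ := by
  have hρ_ne : ∀ t, ρ t ^ 2 ≠ 0 := fun t => (pow_pos (hR0.trans_le (hρ.2.1 t)) 2).ne'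
  obtain ⟨ϑ, h_deriv, h_shift⟩ := exists_primitive_of_periodic (g := fun t => L / ρ t ^ 2)
    (continuous_const.div (hρ.1.pow 2) hρ_ne) (h_per.comp fun r => L / r ^ 2)
  exact ⟨ϑ, h_deriv, h_int ▸ h_shift⟩

theorem statement0
    (R0 T : ℝ) (hR0 : 0 < R0) (hT : 0 < T)
    (f : ℝ → ℝ → ℝ)
    (hf_cont : ContinuousOn (fun q : ℝ × ℝ => f q.1 q.2) (univ ×ˢ Ici R0))
    (hf_per : ∀ t ρ, f (t + T) ρ = f t ρ)
    (μlo μhi : ℝ) (N : ℕ) (hμ : μlo ≤ μhi)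
    (h1 : ((N : ℝ) * π / T) ^ 2 < μlo)
    (h2 : μhi < (((N : ℝ) + 1) * π / T) ^ 2)
    (hlo : ∀ ε > (0 : ℝ), ∃ M : ℝ, R0 ≤ M ∧ ∀ t ρ : ℝ, M ≤ ρ → μlo - ε < f t ρ / ρ)
    (hhi : ∀ ε > (0 : ℝ), ∃ M : ℝ, R0 ≤ M ∧ ∀ t ρ : ℝ, M ≤ ρ → f t ρ / ρ < μhi + ε) :
    ∀ ν : ℕ, 0 < ν → ∃ kν : ℕ, 0 < kν ∧ ∀ k : ℕ, kν ≤ k →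
      ∃ L : ℝ, 0 < L ∧ ∃ ρ ϑ : ℝ → ℝ,
        IsBouncingSolution R0 (fun t r => -(L ^ 2) / r ^ 3 + f t r) ρ ∧
        (∀ t, HasDerivAt ϑ (L / (ρ t) ^ 2) t) ∧
        (∀ t, ρ (t + T) = ρ t) ∧
        (∀ t, ϑ (t + (k : ℝ) * T) = ϑ t + 2 * π * (ν : ℝ)) := by
  intro ν hν
  obtain ⟨C, ω₁, ω₂, hω₁, hω₂, hN₁, hN₂, hC⟩ :=
    exists_frequencies_of_asymptotic_slopes hR0 hT hf_cont hf_per hμ h1 h2 hlo hhi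
  obtain ⟨θ₀, hθ₀, h_bouncing⟩ := exists_isBouncingSolution_of_small_angle hR0 hT hf_cont hf_per
    hω₁ hω₂ hN₁ hN₂ hC
  obtain ⟨kν, hkν⟩ := exists_nat_gt (2 * π * ν / θ₀)
  have hkν_pos : 0 < kν := by
    have h_pos : (0 : ℝ) < kν := (by positivity : 0 ≤ 2 * π * ν / θ₀).trans_lt hkν
    exact_mod_cast h_pos
  refine ⟨kν, hkν_pos, fun k hk => ?_⟩
  have hk_pos : (0 : ℝ) < k := by exact_mod_cast hkν_pos.trans_le hk
  have h_angle_le : 2 * π * ν / k ≤ θ₀ :=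
    (div_le_comm₀ hk_pos hθ₀).2 (hkν.le.trans (by exact_mod_cast hk))
  obtain ⟨L, hL, ρ, hρ, hρ_per, h_int⟩ :=
    h_bouncing (2 * π * ν / k) ⟨by positivity, h_angle_le⟩
  obtain ⟨ϑ, h_deriv, h_shift⟩ := hρ.exists_angle hR0 hρ_per h_int
  refine ⟨L, hL, ρ, ϑ, hρ, h_deriv, hρ_per, fun t => ?_⟩
  rw [h_shift, mul_div_cancel₀ _ hk_pos.ne']
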